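/- arXiv:1406.7229 — 4 statements merged into one kernel-verified Lean document; each statement's English description precedes it below -/
import Mathlib

section
/- For every real p > 1 and every integer n ≥ 1 there exists a constant C = C(p,n), with no dependence on N_1, …, N_n, such that for every f : A → ℂ the spherical maximal function M^A f(x) = max over integers r ≥ 1 with {x ∈ A : |x| = r} nonempty of |(σ_r^A * f)(x)| satisfies ‖M^A f‖_{L^p(A)} ≤ C · ‖f‖_{L^p(A)}. -/
open Finset

noncomputable section

/-- The direct sum `A = ⊕_{m=1}^n (ℤ/(m+1)ℤ)^{N_m}`: the index `i : Fin n` corresponds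
to `m = i + 1`, so the `i`-th component is `(ℤ/(i+2)ℤ)^{N_{i+1}}`. -/
abbrev DSum (n : ℕ) (Nf : Fin n → ℕ) := ∀ i : Fin n, Fin (Nf i) → ZMod (i.val + 2)

/-- The weight `|y| = #{(m,j) : y_m^j ≠ 0}` on `A`. -/
def weightA {n : ℕ} {Nf : Fin n → ℕ} (y : DSum n Nf) : ℕ :=
  ∑ i, (Finset.univ.filter fun j => y i j ≠ 0).card

/-- `L¹`-normalized indicator of the sphere `{x ∈ A : |x| = r}` (zero if the sphere
is empty). -/
def sigmaA (n : ℕ) (Nf : Fin n → ℕ) (r : ℕ) : DSum n Nf → ℂ := fun x =>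
  if weightA x = r then
    ((Finset.univ.filter fun y : DSum n Nf => weightA y = r).card : ℂ)⁻¹
  else 0

/-- Convolution on `A`. -/
def convA {n : ℕ} {Nf : Fin n → ℕ} (g f : DSum n Nf → ℂ) : DSum n Nf → ℂ :=
  fun x => ∑ y, g y * f (x - y)

/-- The spherical maximal function on `A`: the max of `|(σ_r^A * f)(x)|` over integers
`r ≥ 1` such that the sphere `{x ∈ A : |x| = r}` is nonempty (all such `r` satisfy
`r ≤ Σ_m N_m`); the max of the empty collection is interpreted as `0`. -/
def maxA {n : ℕ} {Nf : Fin n → ℕ} (f : DSum n Nf → ℂ) (x : DSum n Nf) : ℝ :=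
  (((Finset.range ((∑ i, Nf i) + 1)).filter fun r =>
        1 ≤ r ∧ ∃ z : DSum n Nf, weightA z = r).sup fun r =>
      ‖convA (sigmaA n Nf r) f x‖₊ : NNReal)


theorem aux_int_low (p c : ℝ) (hp : 1 < p) (hc : 0 ≤ c) :
    MeasureTheory.Integrable ((Set.Ioc 0 c).indicator fun l : ℝ => l ^ (p - 2)) ∧
    ∫ l, (Set.Ioc 0 c).indicator (fun l : ℝ => l ^ (p - 2)) l = c ^ (p - 1) / (p - 1) := by
  constructor
  · rw [MeasureTheory.integrable_indicator_iff measurableSet_Ioc]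
    have := intervalIntegral.intervalIntegrable_rpow' (a := 0) (b := c) (r := p - 2) (by linarith)
    rwa [intervalIntegrable_iff_integrableOn_Ioc_of_le hc] at this
  · rw [MeasureTheory.integral_indicator measurableSet_Ioc,
      ← intervalIntegral.integral_of_le hc, integral_rpow (Or.inl (by linarith))]
    rw [show p - 2 + 1 = p - 1 by ring, Real.zero_rpow (by linarith)]
    simp

theorem aux_int_high (p c : ℝ) (hp : p < 2) (hc : 0 < c) :
    MeasureTheory.Integrable ((Set.Ioi c).indicator fun l : ℝ => l ^ (p - 3)) ∧
    ∫ l, (Set.Ioi c).indicator (fun l : ℝ => l ^ (p - 3)) l = c ^ (p - 2) / (2 - p) := by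
  constructor
  · rw [MeasureTheory.integrable_indicator_iff measurableSet_Ioi]
    exact integrableOn_Ioi_rpow_of_lt (by linarith) hc
  · rw [MeasureTheory.integral_indicator measurableSet_Ioi,
      integral_Ioi_rpow_of_lt (by linarith) hc]
    rw [show p - 3 + 1 = p - 2 by ring, show (2 - p) = -(p - 2) by ring]
    rw [div_neg, neg_div]

theorem interp_aux {X : Type*} [Fintype X] (p A B a : ℝ) (hp : 1 < p) (hp2 : p < 2)
    (hA : 0 ≤ A) (hB : 0 ≤ B) (ha : 0 < a)
    (T : (X → ℝ) → (X → ℝ)) (hadd : ∀ f g x, |T (f + g) x| ≤ |T f x| + |T g x|)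
    (h1 : ∀ f, ∑ x, |T f x| ≤ A * ∑ x, |f x|)
    (h2 : ∀ f, ∑ x, |T f x| ^ 2 ≤ B * ∑ x, |f x| ^ 2) (f : X → ℝ) :
    ∑ x, |T f x| ^ p ≤
      (2 * A * a ^ (1 - p) + 4 * (p - 1) / (2 - p) * B * a ^ (2 - p)) * ∑ x, |f x| ^ p := by
  set c : X → ℝ := fun y => |f y| / a with hc
  have hc0 : ∀ y, 0 ≤ c y := fun y => by positivity
  set L : ℝ → ℝ := fun l => ∑ x, |T f x| * (Set.Ioc 0 |T f x|).indicator (fun l : ℝ => l ^ (p - 2)) l with hL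
  set R : ℝ → ℝ := fun l => ∑ y, (2 * A * |f y| * (Set.Ioc 0 (c y)).indicator (fun l : ℝ => l ^ (p - 2)) l
    + 4 * B * |f y| ^ 2 * (Set.Ioi (c y)).indicator (fun l : ℝ => l ^ (p - 3)) l) with hR
  have hLint : MeasureTheory.Integrable L := by
    apply MeasureTheory.integrable_finsetSum
    intro x _
    exact (aux_int_low p _ hp (abs_nonneg _)).1.const_mul _
  have hT1 : ∀ y, MeasureTheory.Integrable (fun l => 2 * A * |f y| * (Set.Ioc 0 (c y)).indicator (fun l : ℝ => l ^ (p - 2)) l) :=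
    fun y => (aux_int_low p _ hp (hc0 y)).1.const_mul _
  have hT2 : ∀ y, MeasureTheory.Integrable (fun l => 4 * B * |f y| ^ 2 * (Set.Ioi (c y)).indicator (fun l : ℝ => l ^ (p - 3)) l) := by
    intro y
    by_cases hy : f y = 0
    · simp [hy]
    · have : 0 < c y := by simp only [hc]; positivity
      exact (aux_int_high p _ hp2 this).1.const_mul _
  have hRint : MeasureTheory.Integrable R := by
    apply MeasureTheory.integrable_finsetSum
    intro y _
    exact (hT1 y).add (hT2 y)
  have hLR : ∀ l, L l ≤ R l := by
    intro l
    by_cases hl : 0 < l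
    · set fh : X → ℝ := fun y => if l ≤ c y then f y else 0 with hfh
      set fl : X → ℝ := fun y => if l ≤ c y then 0 else f y with hfl
      have hf : f = fh + fl := by
        funext y; simp only [hfh, hfl, Pi.add_apply]; split_ifs <;> simp
      have hpt : ∀ x, |T f x| * (Set.Ioc 0 |T f x|).indicator (fun l : ℝ => l ^ (p - 2)) l ≤
          (2 * |T fh x| + 4 * |T fl x| ^ 2 / l) * l ^ (p - 2) := by
        intro x
        have hx : |T f x| ≤ |T fh x| + |T fl x| := by
          conv_lhs => rw [hf]
          exact hadd _ _ _
        have hlp : 0 < l ^ (p - 2) := Real.rpow_pos_of_pos hl _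
        by_cases h : l ≤ |T f x|
        · rw [Set.indicator_of_mem (show l ∈ Set.Ioc 0 |T f x| from ⟨hl, h⟩)]
          apply mul_le_mul_of_nonneg_right _ hlp.le
          rcases le_total |T fl x| |T fh x| with h' | h'
          · have : 0 ≤ 4 * |T fl x| ^ 2 / l := by positivity
            linarith
          · have h3 : |T f x| ≤ 4 * |T fl x| ^ 2 / l := by
              rw [le_div_iff₀ hl]
              nlinarith [abs_nonneg (T f x), abs_nonneg (T fl x), abs_nonneg (T fh x)]
            have := abs_nonneg (T fh x)
            linarith
        · rw [Set.indicator_of_notMem (fun h' => h h'.2), mul_zero]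
          positivity
      have e1 : ∑ x, |fh x| * l ^ (p-2) = ∑ y, |f y| * (Set.Ioc 0 (c y)).indicator (fun l : ℝ => l ^ (p - 2)) l := by
        apply Finset.sum_congr rfl
        intro y _
        by_cases h : l ≤ c y
        · rw [Set.indicator_of_mem (show l ∈ Set.Ioc 0 (c y) from ⟨hl, h⟩)]; simp [hfh, h]
        · rw [Set.indicator_of_notMem (fun h' => h h'.2)]; simp [hfh, h]
      have e2 : ∑ x, |fl x| ^ 2 * (l ^ (p-2) / l) = ∑ y, |f y| ^ 2 * (Set.Ioi (c y)).indicator (fun l : ℝ => l ^ (p - 3)) l := by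
        apply Finset.sum_congr rfl
        intro y _
        have e3 : l ^ (p - 2) / l = l ^ (p - 3) := by
          rw [show p - 3 = (p - 2) - 1 by ring, Real.rpow_sub_one hl.ne']
        rw [e3]
        by_cases h : l ≤ c y
        · rw [Set.indicator_of_notMem (fun h' : l ∈ Set.Ioi (c y) => absurd h (not_le.2 h'))]; simp [hfl, h]
        · rw [Set.indicator_of_mem (show l ∈ Set.Ioi (c y) from not_le.1 h)]; simp [hfl, h]
      have hlp : 0 < l ^ (p - 2) := Real.rpow_pos_of_pos hl _
      calc L l ≤ ∑ x, (2 * |T fh x| + 4 * |T fl x| ^ 2 / l) * l ^ (p - 2) := Finset.sum_le_sum fun x _ => hpt x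
        _ = 2 * l ^ (p-2) * (∑ x, |T fh x|) + 4 * (l ^ (p-2) / l) * ∑ x, |T fl x| ^ 2 := by
            rw [Finset.mul_sum, Finset.mul_sum, ← Finset.sum_add_distrib]
            exact Finset.sum_congr rfl fun x _ => by ring
        _ ≤ 2 * l ^ (p-2) * (A * ∑ x, |fh x|) + 4 * (l ^ (p-2) / l) * (B * ∑ x, |fl x| ^ 2) := by
            gcongr
            · exact h1 _
            · exact h2 _
        _ = 2 * A * (∑ x, |fh x| * l ^ (p-2)) + 4 * B * ∑ x, |fl x| ^ 2 * (l ^ (p-2) / l) := by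
            rw [← Finset.sum_mul, ← Finset.sum_mul]; ring
        _ = R l := by
            rw [e1, e2, Finset.mul_sum, Finset.mul_sum, ← Finset.sum_add_distrib]
            exact Finset.sum_congr rfl fun x _ => by ring
    · have z : L l = 0 := by
        apply Finset.sum_eq_zero
        intro x _
        rw [Set.indicator_of_notMem (fun h' => hl h'.1), mul_zero]
      rw [z]
      apply Finset.sum_nonneg
      intro y _
      rw [Set.indicator_of_notMem (fun h' => hl h'.1), Set.indicator_of_notMem (fun h' : l ∈ Set.Ioi (c y) => hl (lt_of_le_of_lt (hc0 y) h'))]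
      simp
  have hint := MeasureTheory.integral_mono hLint hRint hLR
  have eL : ∫ l, L l = (∑ x, |T f x| ^ p) / (p - 1) := by
    rw [MeasureTheory.integral_finsetSum _ (fun x _ => (aux_int_low p _ hp (abs_nonneg _)).1.const_mul _), Finset.sum_div]
    apply Finset.sum_congr rfl
    intro x _
    rw [MeasureTheory.integral_const_mul, (aux_int_low p _ hp (abs_nonneg _)).2]
    by_cases h : T f x = 0
    · simp [h, Real.zero_rpow (show p ≠ 0 by linarith)]
    · have : 0 < |T f x| := abs_pos.2 h
      rw [Real.rpow_sub_one this.ne']; field_simp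
  have eR : ∫ l, R l = ∑ y, (2 * A * a ^ (1 - p) / (p - 1) + 4 / (2 - p) * B * a ^ (2 - p)) * |f y| ^ p := by
    have hs := MeasureTheory.integral_finsetSum (μ := MeasureTheory.volume) Finset.univ
      (f := fun y l => 2 * A * |f y| * (Set.Ioc 0 (c y)).indicator (fun l : ℝ => l ^ (p - 2)) l
    + 4 * B * |f y| ^ 2 * (Set.Ioi (c y)).indicator (fun l : ℝ => l ^ (p - 3)) l) (fun x _ => (hT1 x).add (hT2 x))
    refine hs.trans ?_
    apply Finset.sum_congr rfl
    intro y _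
    rw [MeasureTheory.integral_add (hT1 y) (hT2 y), MeasureTheory.integral_const_mul, MeasureTheory.integral_const_mul,
      (aux_int_low p _ hp (hc0 y)).2]
    by_cases h : f y = 0
    · simp [h, Real.zero_rpow (show p ≠ 0 by linarith)]
    · have hf : 0 < |f y| := abs_pos.2 h
      have : 0 < c y := by simp only [hc]; positivity
      rw [(aux_int_high p _ hp2 this).2]
      simp only [hc]
      rw [Real.div_rpow hf.le ha.le, Real.div_rpow hf.le ha.le, Real.rpow_sub hf, Real.rpow_sub hf,
        show 1 - p = -(p - 1) by ring, show a ^ (2 - p) = a ^ (-(p - 2)) by ring_nf, Real.rpow_neg ha.le, Real.rpow_neg ha.le]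
      have h4 : 0 < a ^ (p - 1) := by positivity
      have h5 : 0 < a ^ (p - 2) := by positivity
      have h6 : p - 1 ≠ 0 := by linarith
      have h7 : 2 - p ≠ 0 := by linarith
      simp only [Real.rpow_one, Real.rpow_two]
      field_simp
  rw [eL, eR, ← Finset.mul_sum, div_le_iff₀ (by linarith)] at hint
  refine hint.trans (le_of_eq ?_)
  have h6 : p - 1 ≠ 0 := by linarith
  field_simp

theorem doob_aux (p : ℝ) (hp : 1 < p) {X : Type*} [Fintype X] (n : ℕ) : ∀ (a : ℕ → X → ℝ) (σ : ℕ → X ≃ X)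
    (_ : ∀ s x, 0 ≤ a s x) (_ : ∀ s t, s < t → ∀ x, a t (σ s x) = a t x)
    (_ : ∀ s x, a (s+1) x = (a s x + a s (σ s x)) / 2),
    ∃ z : X → ℝ, (∀ x, 0 ≤ z x) ∧ (∀ s ≤ n, ∀ x, a s x ≤ z x) ∧
      (∀ x y, (∀ s, a s x = a s y) → z x = z y) ∧
      ∑ x, (z x ^ p - p / (p - 1) * (z x ^ (p - 1) * a 0 x)) ≤ 0 := by
  have hp1 : 0 < p - 1 := by linarith
  have key : ∀ u : ℝ, 0 ≤ u → u ^ p = u ^ (p - 1) * u := by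
    intro u hu
    rcases hu.eq_or_lt with rfl | hu
    · simp [Real.zero_rpow (show p ≠ 0 by linarith)]
    · rw [Real.rpow_sub_one hu.ne']; field_simp
  have hq : p / (p - 1) - 1 = 1 / (p - 1) := by field_simp; ring
  induction n with
  | zero =>
    intro a σ ha hinv hstep
    refine ⟨a 0, ha 0, ?_, fun x y h => h 0, ?_⟩
    · intro s hs x
      obtain rfl : s = 0 := by omega
      exact le_rfl
    · apply Finset.sum_nonpos
      intro x _
      rw [← key _ (ha 0 x)]
      have h1 : 0 ≤ a 0 x ^ p := Real.rpow_nonneg (ha 0 x) _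
      have h2 : 0 < 1 / (p - 1) := by positivity
      nlinarith
  | succ n ih =>
    intro a σ ha hinv hstep
    obtain ⟨z, hz0, hz1, hz2, hz3⟩ := ih (fun s => a (s+1)) (fun s => σ (s+1)) (fun s => ha (s+1))
      (fun s t h x => hinv (s+1) (t+1) (by omega) x) (fun s x => hstep (s+1) x)
    refine ⟨fun x => max (z x) (a 0 x), fun x => le_max_of_le_left (hz0 x), ?_, ?_, ?_⟩
    · intro s hs x
      rcases s with _ | s
      · exact le_max_right _ _
      · exact le_max_of_le_left (hz1 s (by omega) x)
    · intro x y h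
      have e1 : z x = z y := hz2 x y fun s => h (s+1)
      have e2 := h 0
      simp only [e1, e2]
    · have hzi : ∀ x, z (σ 0 x) = z x := fun x => hz2 _ _ fun s => hinv 0 (s+1) (by omega) x
      have e : ∑ x, z x ^ (p - 1) * a 0 x = ∑ x, z x ^ (p - 1) * a 1 x := by
        have e1 : ∑ x, z x ^ (p - 1) * a 0 x = ∑ x, z x ^ (p - 1) * a 0 (σ 0 x) := by
          rw [← Equiv.sum_comp (σ 0)]
          exact Finset.sum_congr rfl fun x _ => by rw [hzi]
        have e2 : ∑ x, z x ^ (p - 1) * a 1 x = (∑ x, z x ^ (p - 1) * a 0 x + ∑ x, z x ^ (p - 1) * a 0 (σ 0 x)) / 2 := by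
          rw [← Finset.sum_add_distrib, Finset.sum_div]
          exact Finset.sum_congr rfl fun x _ => by rw [hstep 0 x]; ring
        rw [e2, ← e1]; ring
      refine le_trans ?_ hz3
      calc _ ≤ ∑ x, (z x ^ p - p / (p - 1) * (z x ^ (p - 1) * a 0 x)) := by
            apply Finset.sum_le_sum
            intro x _
            rcases le_total (a 0 x) (z x) with h | h
            · simp [max_eq_left h]
            · simp only [max_eq_right h]
              rw [← key _ (ha 0 x)]
              have hY : p * (z x ^ (p - 1) * a 0 x) ≤ (p - 1) * z x ^ p + a 0 x ^ p := by
                have := Real.young_inequality_of_nonneg (Real.rpow_nonneg (hz0 x) (p - 1)) (ha 0 x)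
                  (Real.HolderConjugate.conjExponent hp).symm
                rw [← Real.rpow_mul (hz0 x)] at this
                simp only [Real.conjExponent] at this
                rw [show (p - 1) * (p / (p - 1)) = p by field_simp] at this
                have h3 := mul_le_mul_of_nonneg_left this (show 0 ≤ p by linarith)
                refine h3.trans (le_of_eq ?_)
                field_simp
              have : z x ^ p - p / (p - 1) * (z x ^ (p - 1) * a 0 x) - (a 0 x ^ p - p / (p - 1) * a 0 x ^ p) =
                ((p - 1) * z x ^ p + a 0 x ^ p - p * (z x ^ (p - 1) * a 0 x)) / (p - 1) := by field_simp; ring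
              have h4 : 0 ≤ ((p - 1) * z x ^ p + a 0 x ^ p - p * (z x ^ (p - 1) * a 0 x)) / (p - 1) := by
                apply div_nonneg _ hp1.le; linarith
              linarith
        _ = _ := by
            simp only [Finset.sum_sub_distrib, ← Finset.mul_sum]
            rw [e]

theorem doob_max (p : ℝ) (hp : 1 < p) : ∃ C : ℝ, 0 ≤ C ∧ ∀ {X : Type} [Fintype X] (n : ℕ) (a : ℕ → X → ℝ) (σ : ℕ → X ≃ X)
    (_ : ∀ s x, 0 ≤ a s x) (_ : ∀ s t, s < t → ∀ x, a t (σ s x) = a t x)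
    (_ : ∀ s x, a (s+1) x = (a s x + a s (σ s x)) / 2),
    ∃ z : X → ℝ, (∀ x, 0 ≤ z x) ∧ (∀ s ≤ n, ∀ x, a s x ≤ z x) ∧
      ∑ x, z x ^ p ≤ C * ∑ x, a 0 x ^ p := by
  have hp1 : 0 < p - 1 := by linarith
  set q := p / (p - 1) with hq
  have hq0 : 0 < q := by positivity
  refine ⟨2 * (q * (2 * q) ^ (p - 1)), by positivity, ?_⟩
  intro X _ n a σ ha hinv hstep
  obtain ⟨z, hz0, hz1, -, hz3⟩ := doob_aux p hp n a σ ha hinv hstep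
  refine ⟨z, hz0, hz1, ?_⟩
  have key : ∀ u : ℝ, 0 ≤ u → u ^ p = u ^ (p - 1) * u := by
    intro u hu
    rcases hu.eq_or_lt with rfl | hu
    · simp [Real.zero_rpow (show p ≠ 0 by linarith)]
    · rw [Real.rpow_sub_one hu.ne']; field_simp
  have pt : ∀ x, q * (z x ^ (p - 1) * a 0 x) ≤ z x ^ p / 2 + q * (2 * q) ^ (p - 1) * a 0 x ^ p := by
    intro x
    have n1 : 0 ≤ z x ^ (p - 1) := Real.rpow_nonneg (hz0 x) _
    have n2 : 0 ≤ a 0 x ^ (p - 1) := Real.rpow_nonneg (ha 0 x) _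
    have n3 := ha 0 x
    rw [key _ (hz0 x), key _ (ha 0 x)]
    rcases le_total (2 * q * a 0 x) (z x) with h | h
    · have : 0 ≤ q * (2 * q) ^ (p - 1) * (a 0 x ^ (p - 1) * a 0 x) := by positivity
      nlinarith
    · have h5 : z x ^ (p - 1) ≤ (2 * q) ^ (p - 1) * a 0 x ^ (p - 1) := by
        rw [← Real.mul_rpow (by positivity) (ha 0 x)]
        exact Real.rpow_le_rpow (hz0 x) h hp1.le
      have h6 : q * a 0 x * z x ^ (p - 1) ≤ q * a 0 x * ((2 * q) ^ (p - 1) * a 0 x ^ (p - 1)) :=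
        mul_le_mul_of_nonneg_left h5 (by positivity)
      have h7 : 0 ≤ z x ^ (p - 1) * z x := mul_nonneg n1 (hz0 x)
      nlinarith
  have s1 := Finset.sum_le_sum fun x (_ : x ∈ Finset.univ) => pt x
  rw [Finset.sum_add_distrib, ← Finset.sum_div, ← Finset.mul_sum, ← Finset.mul_sum] at s1
  rw [Finset.sum_sub_distrib, ← Finset.mul_sum, ← hq] at hz3
  linarith

theorem central_lb (n : ℕ) (hn : 1 ≤ n) : (16:ℝ) ^ n ≤ 4 * n * (n.centralBinom : ℝ) ^ 2 := by
  induction n, hn using Nat.le_induction with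
  | base => norm_num [Nat.centralBinom]
  | succ n hn ih =>
    have h := Nat.succ_mul_centralBinom_succ n
    have h' : ((n:ℝ) + 1) * ((n+1).centralBinom : ℝ) = 2 * (2 * n + 1) * (n.centralBinom : ℝ) := by exact_mod_cast h
    have hn' : (1:ℝ) ≤ n := by exact_mod_cast hn
    set c := (n.centralBinom : ℝ)
    set d := ((n+1).centralBinom : ℝ)
    have hd : d = 2 * (2 * n + 1) * c / (n + 1) := by field_simp; linarith
    rw [pow_succ, hd]
    push_cast
    have : 4 * ((n:ℝ) + 1) * (2 * (2 * n + 1) * c / (n + 1)) ^ 2 = 16 * (2 * n + 1)^2 * c^2 / (n+1) := by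
      field_simp; ring
    rw [this, le_div_iff₀ (by positivity)]
    have h2 : (16:ℝ)^n * 16 * (n+1) ≤ 4 * n * c^2 * 16 * (n+1) := by gcongr
    nlinarith [sq_nonneg c]

theorem binom_ratio (r : ℕ) (hr : 1 ≤ r) (t : ℕ) :
    ((2 * r).choose r : ℝ) * (1 - (t:ℝ)^2 / r) ≤ ((2*r).choose (r + t) : ℝ) := by
  have hr' : (0:ℝ) < r := by exact_mod_cast hr
  induction t with
  | zero => simp
  | succ t ih =>
    by_cases h1 : (r:ℝ) ≤ (t+1)^2
    · have : 1 - ((t + 1 : ℕ):ℝ)^2 / r ≤ 0 := by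
        push_cast
        rw [sub_nonpos, le_div_iff₀ hr']; linarith
      have h2 : ((2 * r).choose r : ℝ) * (1 - ((t + 1 : ℕ):ℝ)^2 / r) ≤ 0 := mul_nonpos_of_nonneg_of_nonpos (by positivity) this
      exact h2.trans (by positivity)
    · push Not at h1
      have ht : t ≤ r := by
        have : (t:ℝ) < r := by nlinarith [(Nat.cast_nonneg t : (0:ℝ) ≤ t)]
        exact_mod_cast this.le
      have h := Nat.choose_succ_right_eq (2*r) (r+t)
      have h' : ((2*r).choose (r+t+1) : ℝ) * (r + t + 1) = (2*r).choose (r+t) * (r - t) := by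
        have e : 2 * r - (r + t) = r - t := by omega
        rw [e] at h
        have := congrArg (Nat.cast (R := ℝ)) h
        push_cast [Nat.cast_sub ht] at this
        exact this
      have e2 : ((2*r).choose (r+t+1) : ℝ) = (2*r).choose (r+t) * ((r - t) / (r + t + 1)) := by
        field_simp; linarith
      rw [← add_assoc, e2]
      have htr : (t:ℝ) ≤ r := by exact_mod_cast ht
      have ht0 : (0:ℝ) ≤ t := by positivity
      have h3 : 1 - (2 * (t:ℝ) + 1) / r ≤ (r - t) / (r + t + 1) := by
        rw [one_sub_div hr'.ne', div_le_div_iff₀ hr' (by positivity)]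
        nlinarith
      have h5 : 0 ≤ ((r:ℝ) - t) / (r + t + 1) := div_nonneg (by linarith) (by positivity)
      have h6 : 0 ≤ 1 - (t:ℝ)^2 / r := by
        rw [sub_nonneg, div_le_one hr']; nlinarith
      calc ((2 * r).choose r : ℝ) * (1 - ((t + 1 : ℕ):ℝ)^2 / r)
          ≤ ((2 * r).choose r : ℝ) * ((1 - (t:ℝ)^2 / r) * ((r - t) / (r + t + 1))) := by
            apply mul_le_mul_of_nonneg_left _ (by positivity)
            calc 1 - ((t + 1 : ℕ):ℝ)^2 / r ≤ (1 - (t:ℝ)^2 / r) * (1 - (2 * (t:ℝ) + 1) / r) := by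
                  push_cast
                  have : (1 - (t:ℝ)^2 / r) * (1 - (2 * (t:ℝ) + 1) / r) = 1 - ((t:ℝ)+1)^2/r + (t:ℝ)^2 / r * ((2 * (t:ℝ) + 1) / r) := by
                    field_simp; ring
                  rw [this]
                  have : 0 ≤ (t:ℝ)^2 / r * ((2 * (t:ℝ) + 1) / r) := by positivity
                  linarith
              _ ≤ _ := mul_le_mul_of_nonneg_left h3 h6
        _ = ((2 * r).choose r : ℝ) * (1 - (t:ℝ)^2 / r) * ((r - t) / (r + t + 1)) := by ring
        _ ≤ _ := mul_le_mul_of_nonneg_right ih h5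

theorem binom_lb (r t : ℕ) (hr : 1 ≤ r) (ht : 2 * t ^ 2 ≤ r) :
    (4:ℝ) ^ r ≤ 4 * √r * ((2*r).choose (r + t) : ℝ) := by
  have hr' : (0:ℝ) < r := by exact_mod_cast hr
  have h1 := binom_ratio r hr t
  have h2 : (1:ℝ)/2 ≤ 1 - (t:ℝ)^2 / r := by
    have : 2 * (t:ℝ)^2 ≤ r := by exact_mod_cast ht
    rw [le_sub_comm, div_le_iff₀ hr']; linarith
  have h3 : (4:ℝ)^r ≤ 2 * √r * ((2*r).choose r : ℝ) := by
    rw [← pow_le_pow_iff_left₀ (by positivity) (by positivity) two_ne_zero]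
    have := central_lb r hr
    rw [Nat.centralBinom] at this
    calc ((4:ℝ)^r)^2 = 16 ^ r := by rw [← pow_mul, mul_comm, pow_mul]; norm_num
      _ ≤ _ := this
      _ = _ := by rw [mul_pow, mul_pow, Real.sq_sqrt hr'.le]; ring
  have h4 : ((2 * r).choose r : ℝ) / 2 ≤ ((2*r).choose (r + t) : ℝ) := by
    refine le_trans ?_ h1
    have : (0:ℝ) ≤ ((2 * r).choose r : ℝ) := by positivity
    nlinarith
  have : 0 ≤ √(r:ℝ) := Real.sqrt_nonneg _
  nlinarith

open Polynomial in
theorem smooth_coeffs (m w : ℕ) (hm : 1 ≤ m) (hw : 1 ≤ w) :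
    ∃ c q : ℕ → ℝ, (∀ i, |c i| ≤ 2 ^ m / w) ∧ (∀ i, 0 ≤ q i) ∧ (∑ i ∈ range (m * w), q i ≤ w ^ m) ∧
    ∀ g : ℕ → ℝ, g 0 = ∑ i ∈ range (m * w), c i * g i +
      ∑ i ∈ range (m * w), q i * ∑ j ∈ range (m + 1), (-1) ^ j * (m.choose j : ℝ) * g (i + j) := by
  have hw0 : (0:ℝ) < w := by exact_mod_cast hw
  set E : ℝ[X] := C (1 / (w:ℝ)) * ∑ i ∈ range w, X ^ i with hE
  set Q : ℝ[X] := C (1 / (w:ℝ)) * ∑ i ∈ range w, ∑ j ∈ range i, X ^ j with hQ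
  have hEQ : 1 - E = Q * (1 - X) := by
    rw [hE, hQ, mul_assoc, Finset.sum_mul]
    have h1 : ∀ i ∈ range w, (∑ j ∈ range i, (X:ℝ[X]) ^ j) * (1 - X) = 1 - X ^ i := fun i _ => geom_sum_mul_neg X i
    rw [Finset.sum_congr rfl h1, Finset.sum_sub_distrib, mul_sub]
    congr 1
    rw [Finset.sum_const, card_range, nsmul_eq_mul, mul_one, ← Polynomial.C_eq_natCast, ← C_mul]
    rw [one_div_mul_cancel hw0.ne', C_1]
  have nn_mul : ∀ a b : ℝ[X], (∀ i, 0 ≤ a.coeff i) → (∀ i, 0 ≤ b.coeff i) → ∀ i, 0 ≤ (a * b).coeff i := by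
    intro a b ha hb i
    rw [coeff_mul]
    exact Finset.sum_nonneg fun x _ => mul_nonneg (ha _) (hb _)
  have nn_pow : ∀ a : ℝ[X], (∀ i, 0 ≤ a.coeff i) → ∀ k i, 0 ≤ (a ^ k).coeff i := by
    intro a ha k
    induction k with
    | zero => intro i; simp only [pow_zero, coeff_one]; split_ifs <;> norm_num
    | succ k ih => rw [pow_succ]; exact nn_mul _ _ ih ha
  have hEc : ∀ i, E.coeff i = if i < w then 1 / (w:ℝ) else 0 := by
    intro i
    simp [hE, coeff_C_mul, finsetSum_coeff, coeff_X_pow]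
  have hE0 : ∀ i, 0 ≤ E.coeff i := by
    intro i; rw [hEc]; split_ifs <;> positivity
  have hQ0 : ∀ i, 0 ≤ Q.coeff i := by
    intro i
    simp only [hQ, coeff_C_mul, finsetSum_coeff, coeff_X_pow]
    apply mul_nonneg (by positivity)
    apply Finset.sum_nonneg; intro a _
    apply Finset.sum_nonneg; intro a _
    split_ifs <;> norm_num
  have hsum : ∀ a : ℝ[X], ∀ n, (∀ i, 0 ≤ a.coeff i) → ∑ i ∈ range n, a.coeff i ≤ a.eval 1 := by
    intro a n ha
    rw [eval_eq_sum_range' (show a.natDegree < max n (a.natDegree + 1) from lt_max_of_lt_right (Nat.lt_succ_self _))]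
    simp only [one_pow, mul_one]
    exact Finset.sum_le_sum_of_subset_of_nonneg (range_subset_range.2 (le_max_left _ _)) fun i _ _ => ha i
  have hE1 : E.eval 1 = 1 := by
    simp [hE, eval_finsetSum]; field_simp
  have hQ1 : Q.eval 1 ≤ w := by
    simp only [hQ, eval_mul, eval_C, eval_finsetSum, eval_pow, eval_X, one_pow, sum_const, card_range, nsmul_eq_mul, mul_one]
    rw [one_div, inv_mul_le_iff₀ hw0]
    calc ∑ i ∈ range w, (i:ℝ) ≤ ∑ i ∈ range w, (w:ℝ) := Finset.sum_le_sum fun i hi => by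
          exact_mod_cast (mem_range.1 hi).le
      _ = _ := by simp
  have hEk : ∀ k i, (E ^ (k+1)).coeff i ≤ 1 / w := by
    intro k i
    rw [pow_succ, coeff_mul, Finset.Nat.sum_antidiagonal_eq_sum_range_succ_mk]
    calc ∑ k_1 ∈ range i.succ, (E ^ k).coeff k_1 * E.coeff (i - k_1) ≤ ∑ k_1 ∈ range i.succ, (E ^ k).coeff k_1 * (1 / w) := by
          apply Finset.sum_le_sum; intro a _
          apply mul_le_mul_of_nonneg_left _ (nn_pow _ hE0 _ _)
          rw [hEc]; split_ifs
          · exact le_rfl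
          · positivity
      _ = (∑ k_1 ∈ range i.succ, (E ^ k).coeff k_1) * (1 / w) := by rw [Finset.sum_mul]
      _ ≤ 1 * (1 / w) := by
          apply mul_le_mul_of_nonneg_right _ (by positivity)
          refine (hsum _ _ (nn_pow _ hE0 _)).trans ?_
          simp [hE1]
      _ = _ := one_mul _
  set P : ℝ[X] := 1 - (1 - E) ^ m with hP
  have hPexp : P = - ∑ k ∈ range m, (-E) ^ (k+1) * ((m.choose (k+1) : ℕ) : ℝ[X]) := by
    rw [hP, sub_eq_neg_add 1 E, add_pow, Finset.sum_range_succ']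
    simp
  have hPc : ∀ i, |P.coeff i| ≤ 2 ^ m / w := by
    intro i
    rw [hPexp, coeff_neg, abs_neg, finsetSum_coeff]
    refine (Finset.abs_sum_le_sum_abs _ _).trans ?_
    have hterm : ∀ k ∈ range m, |((-E) ^ (k+1) * ((m.choose (k+1) : ℕ) : ℝ[X])).coeff i| ≤ (m.choose (k+1) : ℝ) * (1 / w) := by
      intro k _
      rw [← Polynomial.C_eq_natCast, coeff_mul_C, neg_pow, abs_mul]
      have : (-1 : ℝ[X]) ^ (k+1) = C ((-1) ^ (k+1)) := by simp
      rw [this, coeff_C_mul, abs_mul, abs_pow, abs_neg, abs_one, one_pow, one_mul, abs_of_nonneg (nn_pow _ hE0 _ _), mul_comm,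
        abs_of_nonneg (by positivity)]
      exact mul_le_mul_of_nonneg_left (hEk k i) (by positivity)
    refine (Finset.sum_le_sum hterm).trans ?_
    rw [← Finset.sum_mul, div_eq_mul_one_div (2 ^ m) (w:ℝ)]
    apply mul_le_mul_of_nonneg_right _ (by positivity)
    have := Nat.sum_range_choose m
    rw [Finset.sum_range_succ'] at this
    have h2 : ∑ k ∈ range m, (m.choose (k+1)) ≤ 2 ^ m := by omega
    exact_mod_cast h2
  have hEd : E.natDegree ≤ w - 1 := by
    rw [natDegree_le_iff_coeff_eq_zero]
    intro n hn
    rw [hEc, if_neg (by omega)]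
  have h1Ed : (1 - E).natDegree ≤ w - 1 := (natDegree_sub_le_of_le (m := 0) (by simp) hEd).trans (by simp)
  have hmw : m * (w - 1) < m * w := Nat.mul_lt_mul_of_pos_left (by omega) (by omega)
  have hPd : P.natDegree < m * w := by
    refine lt_of_le_of_lt ?_ hmw
    refine (natDegree_sub_le_of_le (m := 0) (by simp) (natDegree_pow_le_of_le m h1Ed)).trans (by simp)
  have hQd : (Q ^ m).natDegree < m * w := by
    refine lt_of_le_of_lt ?_ hmw
    apply natDegree_pow_le_of_le
    rw [natDegree_le_iff_coeff_eq_zero]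
    intro n hn
    simp only [hQ, coeff_C_mul, finsetSum_coeff, coeff_X_pow]
    rw [Finset.sum_eq_zero, mul_zero]
    intro a ha
    apply Finset.sum_eq_zero
    intro b hb
    rw [mem_range] at ha hb
    rw [if_neg (by omega)]
  refine ⟨P.coeff, (Q ^ m).coeff, hPc, nn_pow _ hQ0 m, ?_, ?_⟩
  · refine (hsum _ _ (nn_pow _ hQ0 m)).trans ?_
    rw [eval_pow]
    apply pow_le_pow_left₀ _ hQ1
    rw [eval_eq_sum_range]
    exact Finset.sum_nonneg fun i _ => by simpa using hQ0 i
  · intro g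
    set φ : ℝ[X] →ₗ[ℝ] ℝ := (Polynomial.basisMonomials ℝ).constr ℝ g with hφ
    have hmon : ∀ i a, φ (monomial i a) = a * g i := by
      intro i a
      have h1 : φ (monomial i 1) = g i := by
        have := (Polynomial.basisMonomials ℝ).constr_basis ℝ g i
        rwa [coe_basisMonomials] at this
      rw [← mul_one a, ← smul_eq_mul, ← smul_monomial, map_smul, h1]; simp
    have h1 : (1:ℝ[X]) = P + Q ^ m * (1 - X) ^ m := by
      rw [← mul_pow, ← hEQ, hP]; ring
    have h2 := congrArg φ h1
    rw [map_add] at h2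
    have e0 : φ 1 = g 0 := by
      have := hmon 0 1
      rwa [one_mul] at this
    have e1 : φ P = ∑ i ∈ range (m * w), P.coeff i * g i := by
      conv_lhs => rw [as_sum_range' P _ hPd]
      rw [map_sum]
      exact Finset.sum_congr rfl fun i _ => hmon _ _
    have e2 : φ (Q ^ m * (1 - X) ^ m) = ∑ i ∈ range (m * w), (Q^m).coeff i * ∑ j ∈ range (m + 1), (-1) ^ j * (m.choose j : ℝ) * g (i + j) := by
      have e3 : ((1:ℝ[X]) - X) ^ m = ∑ j ∈ range (m+1), monomial j ((-1)^j * (m.choose j : ℝ)) := by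
        rw [sub_eq_neg_add, add_pow]
        apply Finset.sum_congr rfl
        intro j _
        rw [neg_pow, ← C_mul_X_pow_eq_monomial]
        simp
        ring
      conv_lhs => rw [as_sum_range' (Q^m) _ hQd, e3, Finset.sum_mul_sum]
      simp only [map_sum, monomial_mul_monomial, hmon]
      apply Finset.sum_congr rfl; intro i _
      rw [Finset.mul_sum]
      apply Finset.sum_congr rfl; intro j _
      ring
    rw [e0, e1, e2] at h2
    exact h2

def sg (a b : ZMod 2) : ℝ := if a = 1 ∧ b = 1 then -1 else 1

theorem sg_add : ∀ a b c : ZMod 2, sg a (b + c) = sg a b * sg a c := by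
  have h2 : (1:ZMod 2) + 1 = 0 := by decide
  have h3 : (0:ZMod 2) ≠ 1 := by decide
  intro a b c
  have hc : ∀ a : ZMod 2, a = 0 ∨ a = 1 := by decide
  rcases hc a with rfl | rfl <;> rcases hc b with rfl | rfl <;> rcases hc c with rfl | rfl <;> simp [sg, h2]

def chi {N : ℕ} (u x : Fin N → ZMod 2) : ℝ := ∏ i, sg (u i) (x i)

theorem chi_add {N : ℕ} (u x y : Fin N → ZMod 2) : chi u (x + y) = chi u x * chi u y := by
  simp only [chi, Pi.add_apply, sg_add, Finset.prod_mul_distrib]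

theorem sum_chi {N : ℕ} (x : Fin N → ZMod 2) : ∑ u, chi u x = if x = 0 then (2:ℝ)^N else 0 := by
  have h3 : (0:ZMod 2) ≠ 1 := by decide
  have h : ∀ b : ZMod 2, ∑ a, sg a b = if b = 0 then 2 else 0 := by
    intro b
    have : (univ : Finset (ZMod 2)) = {0, 1} := by decide
    rw [this, Finset.sum_pair h3]
    have hc : ∀ a : ZMod 2, a = 0 ∨ a = 1 := by decide
    rcases hc b with rfl | rfl <;> simp [sg] <;> norm_num
  have : ∑ u, chi u x = ∏ i, ∑ a, sg a (x i) := by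
    rw [Finset.prod_univ_sum, Fintype.piFinset_univ]; rfl
  rw [this]
  simp only [h]
  split_ifs with hx
  · simp [hx]
  · obtain ⟨i, hi⟩ := Function.ne_iff.1 hx
    exact Finset.prod_eq_zero (mem_univ i) (if_neg hi)

theorem addself {N : ℕ} (x y : Fin N → ZMod 2) : x + y + y = x := by
  rw [add_assoc]
  have : y + y = 0 := by funext i; exact CharTwo.add_self_eq_zero _
  rw [this, add_zero]

theorem parseval {N : ℕ} (f : (Fin N → ZMod 2) → ℝ) :
    ∑ u, (∑ x, f x * chi u x) ^ 2 = 2 ^ N * ∑ x, f x ^ 2 := by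
  have h1 : ∀ u, (∑ x, f x * chi u x) ^ 2 = ∑ x, ∑ y, f x * f y * chi u (x + y) := by
    intro u
    rw [sq, Finset.sum_mul_sum]
    refine Finset.sum_congr rfl fun x _ => Finset.sum_congr rfl fun y _ => ?_
    rw [chi_add]; ring
  simp only [h1]
  rw [Finset.sum_comm, Finset.mul_sum]
  apply Finset.sum_congr rfl; intro x _
  rw [Finset.sum_comm]
  simp only [← Finset.mul_sum, sum_chi]
  rw [Finset.sum_eq_single x]
  · have : x + x = 0 := by funext i; exact CharTwo.add_self_eq_zero _
    rw [this, if_pos rfl]; ring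
  · intro y _ hy
    rw [if_neg, mul_zero]
    intro h
    apply hy
    have := addself y x
    rw [add_comm y x, h, zero_add] at this
    exact this.symm
  · simp

theorem l2_bound {N : ℕ} (K : (Fin N → ZMod 2) → ℝ) (B : ℝ) (hB : ∀ u, |∑ y, K y * chi u y| ≤ B)
    (f : (Fin N → ZMod 2) → ℝ) : ∑ x, |∑ y, K y * f (x + y)| ^ 2 ≤ B ^ 2 * ∑ x, |f x| ^ 2 := by
  simp only [sq_abs]
  have hh : ∀ u, ∑ x, (∑ y, K y * f (x + y)) * chi u x = (∑ y, K y * chi u y) * ∑ x, f x * chi u x := by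
    intro u
    simp only [Finset.sum_mul]
    rw [Finset.sum_comm]
    apply Finset.sum_congr rfl; intro y _
    rw [← Equiv.sum_comp (Equiv.addRight y), Finset.mul_sum]
    apply Finset.sum_congr rfl; intro x _
    simp only [Equiv.coe_addRight, addself]
    rw [chi_add]; ring
  have h1 := parseval (fun x => ∑ y, K y * f (x + y))
  have h2 := parseval f
  simp only [hh] at h1
  have h3 : ∑ u, ((∑ y, K y * chi u y) * ∑ x, f x * chi u x) ^ 2 ≤ B ^ 2 * ∑ u, (∑ x, f x * chi u x) ^ 2 := by
    rw [Finset.mul_sum]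
    apply Finset.sum_le_sum; intro u _
    rw [mul_pow]
    apply mul_le_mul_of_nonneg_right _ (sq_nonneg _)
    exact sq_le_sq' (by linarith [abs_le.1 (hB u)]) (le_of_abs_le (hB u))
  rw [h1, h2] at h3
  have : (0:ℝ) < 2 ^ N := by positivity
  nlinarith

def sph {N : ℕ} (k : ℕ) (F : Finset (Fin N) → ℝ) : ℝ :=
  (∑ T ∈ powersetCard k univ, F T) / (N.choose k : ℝ)

theorem perm_avg {N : ℕ} (F : Finset (Fin N) → ℝ) (T : Finset (Fin N)) :
    ∑ π : Equiv.Perm (Fin N), F (T.map π.toEmbedding) = (N.factorial : ℝ) * sph T.card F := by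
  have h1 : ∀ T' ∈ powersetCard T.card (univ : Finset (Fin N)),
      ∑ π : Equiv.Perm (Fin N), F (T'.map π.toEmbedding) = ∑ π : Equiv.Perm (Fin N), F (T.map π.toEmbedding) := by
    intro T' hT'
    have hc : T.card = T'.card := (mem_powersetCard.1 hT').2.symm
    let e : {x // x ∈ T} ≃ {x // x ∈ T'} := Finset.equivOfCardEq hc
    let ρ : Equiv.Perm (Fin N) := e.extendSubtype
    have hρ : T.map ρ.toEmbedding = T' := by
      apply Finset.eq_of_subset_of_card_le
      · intro x hx
        obtain ⟨y, hy, rfl⟩ := mem_map.1 hx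
        exact e.extendSubtype_mem y hy
      · rw [card_map, hc]
    rw [← Equiv.sum_comp (Equiv.mulRight ρ) (fun π : Equiv.Perm (Fin N) => F (T.map π.toEmbedding))]
    apply Finset.sum_congr rfl
    intro π _
    rw [← hρ, Finset.map_map]
    rfl
  have h2 : ∑ T' ∈ powersetCard T.card (univ : Finset (Fin N)), ∑ π : Equiv.Perm (Fin N), F (T'.map π.toEmbedding)
      = (N.choose T.card : ℝ) * ∑ π : Equiv.Perm (Fin N), F (T.map π.toEmbedding) := by
    rw [Finset.sum_congr rfl h1, Finset.sum_const, card_powersetCard, card_univ, Fintype.card_fin, nsmul_eq_mul]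
  rw [Finset.sum_comm] at h2
  have h3 : ∀ π : Equiv.Perm (Fin N), ∑ T' ∈ powersetCard T.card (univ : Finset (Fin N)), F (T'.map π.toEmbedding)
      = ∑ T' ∈ powersetCard T.card (univ : Finset (Fin N)), F T' := by
    intro π
    refine Finset.sum_nbij' (fun T' => T'.map π.toEmbedding) (fun T' => T'.map π.symm.toEmbedding) ?_ ?_ ?_ ?_ ?_
    · intro a ha; simpa [mem_powersetCard] using ha
    · intro a ha; simpa [mem_powersetCard] using ha
    · intro a _; ext x; simp
    · intro a _; ext x; simp
    · intro a _; rfl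
  simp only [h3, Finset.sum_const, card_univ, Fintype.card_perm, Fintype.card_fin, nsmul_eq_mul] at h2
  have hcard : T.card ≤ N := by simpa using T.card_le_univ
  have hpos : (0:ℝ) < N.choose T.card := by exact_mod_cast Nat.choose_pos hcard
  rw [sph, mul_div_assoc', eq_div_iff hpos.ne', h2]; ring

theorem kraw_diff {N : ℕ} (ε : Fin N → ℝ) (hε : ∀ i, ε i = 1 ∨ ε i = -1) (r r' m : ℕ) (h1 : r' ≤ r)
    (h2 : r + r' + 2 * m ≤ N) :
    |∑ j ∈ range (m+1), (-1) ^ j * (m.choose j : ℝ) * sph (r + 2 * j) (fun T => ∏ t ∈ T, ε t)|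
      ≤ 2 ^ m / ((r' + m).choose m : ℝ) := by
  obtain ⟨q, rfl⟩ := Nat.exists_eq_add_of_le h1
  set R := r' + m with hR
  have hemb : Nonempty ((Fin q ⊕ (Fin R × Bool)) ↪ Fin N) := by
    apply Function.Embedding.nonempty_of_card_le
    simp; omega
  obtain ⟨emb⟩ := hemb
  set κ : ℕ → ℝ := fun k => sph k (fun T : Finset (Fin N) => ∏ t ∈ T, ε t) with hκ
  set δ : Equiv.Perm (Fin N) → (Fin q ⊕ (Fin R × Bool)) → ℝ := fun π e => ε (π (emb e)) with hδ
  have hmono : ∀ T : Finset (Fin q ⊕ (Fin R × Bool)), ∑ π, ∏ e ∈ T, δ π e = (N.factorial : ℝ) * κ T.card := by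
    intro T
    have := perm_avg (fun T : Finset (Fin N) => ∏ t ∈ T, ε t) (T.map emb)
    rw [card_map] at this
    rw [hκ, ← this]
    apply Finset.sum_congr rfl
    intro π _
    rw [prod_map, prod_map]
    rfl
  set W : Finset (Fin R) → ((Fin q ⊕ (Fin R × Bool)) → ℝ) → ℝ := fun J d =>
    (∏ a, d (Sum.inl a)) * (∏ i ∈ Jᶜ, (d (Sum.inr (i, false)) / 2 + d (Sum.inr (i, true)) / 2)) *
      ∏ i ∈ J, (-(d (Sum.inr (i, false)) * d (Sum.inr (i, true))) + 1) with hW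
  set D := ∑ j ∈ range (m+1), (-1) ^ j * (m.choose j : ℝ) * κ (r' + q + 2 * j) with hD
  have claim1 : ∀ J ∈ powersetCard m (univ : Finset (Fin R)), ∑ π, W J (δ π) = (N.factorial : ℝ) * D := by
    intro J hJ
    have hJc : J.card = m := (mem_powersetCard.1 hJ).2
    have hJc' : Jᶜ.card = r' := by rw [card_compl, hJc, Fintype.card_fin, hR]; omega
    let TT : Finset (Fin R) → Finset (Fin R) → Finset (Fin q ⊕ (Fin R × Bool)) := fun U V =>
      (univ : Finset (Fin q)).disjSum ((U ×ˢ {false} ∪ (Jᶜ \ U) ×ˢ {true}) ∪ V ×ˢ univ)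
    have hd1 : ∀ U, Disjoint (U ×ˢ ({false} : Finset Bool)) ((Jᶜ \ U) ×ˢ {true}) := by
      intro U
      rw [Finset.disjoint_left]
      rintro ⟨i, b⟩ h h'
      simp at h h'
      rw [h.2] at h'; simp at h'
    have hd2 : ∀ U ⊆ Jᶜ, ∀ V ⊆ J, Disjoint (U ×ˢ ({false} : Finset Bool) ∪ (Jᶜ \ U) ×ˢ {true}) (V ×ˢ univ) := by
      intro U hU V hV
      rw [Finset.disjoint_left]
      rintro ⟨i, b⟩ h h'
      simp at h h'
      have h3 := hV h'
      rcases h with h | h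
      · exact (mem_compl.1 (hU h.1)) h3
      · exact h.1.1 h3
    have hcard : ∀ U ⊆ Jᶜ, ∀ V ⊆ J, (TT U V).card = r' + q + 2 * V.card := by
      intro U hU V hV
      rw [card_disjSum, card_union_of_disjoint (hd2 U hU V hV), card_union_of_disjoint (hd1 U)]
      simp only [card_product, card_singleton, card_univ, Fintype.card_fin, Fintype.card_bool, mul_one]
      have := card_sdiff_add_card_eq_card hU
      omega
    have hprod : ∀ U ⊆ Jᶜ, ∀ V ⊆ J, ∀ d : (Fin q ⊕ (Fin R × Bool)) → ℝ, ∏ e ∈ TT U V, d e =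
        (∏ a, d (Sum.inl a)) * ((∏ i ∈ U, d (Sum.inr (i, false))) * ∏ i ∈ Jᶜ \ U, d (Sum.inr (i, true))) *
          ∏ i ∈ V, (d (Sum.inr (i, false)) * d (Sum.inr (i, true))) := by
      intro U hU V hV d
      rw [prod_disjSum, prod_union (hd2 U hU V hV), prod_union (hd1 U)]
      simp only [prod_product, prod_singleton, Fintype.prod_bool]
      rw [← mul_assoc]
      congr 1
      apply Finset.prod_congr rfl; intro i _; ring
    have hexp : ∀ d : (Fin q ⊕ (Fin R × Bool)) → ℝ, W J d =
        ∑ U ∈ Jᶜ.powerset, ∑ V ∈ J.powerset, (1/2 : ℝ) ^ r' * (-1) ^ V.card * ∏ e ∈ TT U V, d e := by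
      intro d
      simp only [hW]
      rw [prod_add, prod_add, mul_assoc, Finset.sum_mul_sum, Finset.mul_sum]
      apply Finset.sum_congr rfl; intro U hU
      rw [Finset.mul_sum]
      apply Finset.sum_congr rfl; intro V hV
      rw [mem_powerset] at hU hV
      rw [hprod U hU V hV d]
      have e1 : ∏ i ∈ U, d (Sum.inr (i, false)) / 2 = (1/2:ℝ) ^ U.card * ∏ i ∈ U, d (Sum.inr (i, false)) := by
        rw [← prod_const, ← prod_mul_distrib]; exact Finset.prod_congr rfl fun i _ => by ring
      have e2 : ∏ i ∈ Jᶜ \ U, d (Sum.inr (i, true)) / 2 = (1/2:ℝ) ^ (Jᶜ \ U).card * ∏ i ∈ Jᶜ \ U, d (Sum.inr (i, true)) := by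
        rw [← prod_const, ← prod_mul_distrib]; exact Finset.prod_congr rfl fun i _ => by ring
      have e3 : ∏ i ∈ V, -(d (Sum.inr (i, false)) * d (Sum.inr (i, true))) = (-1:ℝ) ^ V.card * ∏ i ∈ V, (d (Sum.inr (i, false)) * d (Sum.inr (i, true))) := by
        rw [← prod_const, ← prod_mul_distrib]; exact Finset.prod_congr rfl fun i _ => by ring
      have e4 : (1/2:ℝ) ^ r' = (1/2:ℝ) ^ U.card * (1/2:ℝ) ^ (Jᶜ \ U).card := by
        rw [← pow_add, ← hJc', ← card_sdiff_add_card_eq_card hU, add_comm]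
      rw [e1, e2, e3, e4, prod_const_one]
      ring
    simp only [hexp]
    rw [Finset.sum_comm]
    have : ∀ U ∈ Jᶜ.powerset, ∑ π, ∑ V ∈ J.powerset, (1/2 : ℝ) ^ r' * (-1) ^ V.card * ∏ e ∈ TT U V, δ π e
        = (1/2:ℝ)^r' * ((N.factorial : ℝ) * D) := by
      intro U hU
      rw [Finset.sum_comm]
      have h3 : ∀ V ∈ J.powerset, ∑ π, (1/2 : ℝ) ^ r' * (-1) ^ V.card * ∏ e ∈ TT U V, δ π e
          = (1/2:ℝ)^r' * ((N.factorial : ℝ) * ((-1) ^ V.card * κ (r' + q + 2 * V.card))) := by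
        intro V hV
        rw [← Finset.mul_sum, hmono, hcard U (mem_powerset.1 hU) V (mem_powerset.1 hV)]; ring
      rw [Finset.sum_congr rfl h3, ← Finset.mul_sum, ← Finset.mul_sum]
      rw [Finset.sum_powerset_apply_card (fun v => (-1:ℝ) ^ v * κ (r' + q + 2 * v)), hJc]
      congr 2
      apply Finset.sum_congr rfl; intro j _
      rw [nsmul_eq_mul]; ring
    rw [Finset.sum_congr rfl this, Finset.sum_const, card_powerset, hJc', nsmul_eq_mul, ← mul_assoc]
    push_cast
    rw [← mul_pow]; norm_num
  have claim2 : ∀ π, ∑ J ∈ powersetCard m (univ : Finset (Fin R)), |W J (δ π)| ≤ 2 ^ m := by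
    intro π
    have hδ1 : ∀ e, δ π e = 1 ∨ δ π e = -1 := fun e => hε _
    have habs : ∀ e, |δ π e| = 1 := fun e => by rcases hδ1 e with h | h <;> simp [h]
    set Js : Finset (Fin R) := univ.filter fun i => δ π (Sum.inr (i, false)) ≠ δ π (Sum.inr (i, true)) with hJs
    have hb : ∀ J ∈ powersetCard m (univ : Finset (Fin R)), |W J (δ π)| ≤ if J = Js then 2 ^ m else 0 := by
      intro J hJ
      have hJc : J.card = m := (mem_powersetCard.1 hJ).2
      split_ifs with hJJ
      · simp only [hW, abs_mul, abs_prod, habs, prod_const_one, one_mul]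
        have b1 : ∏ i ∈ Jᶜ, |δ π (Sum.inr (i, false)) / 2 + δ π (Sum.inr (i, true)) / 2| ≤ 1 := by
          apply prod_le_one
          · intro i _; positivity
          · intro i _
            rcases hδ1 (Sum.inr (i, false)) with h | h <;> rcases hδ1 (Sum.inr (i, true)) with h' | h' <;>
              rw [h, h'] <;> norm_num
        have b2 : ∏ i ∈ J, |-(δ π (Sum.inr (i, false)) * δ π (Sum.inr (i, true))) + 1| ≤ 2 ^ m := by
          rw [← hJc, ← prod_const]
          apply prod_le_prod
          · intro i _; positivity
          · intro i _
            rcases hδ1 (Sum.inr (i, false)) with h | h <;> rcases hδ1 (Sum.inr (i, true)) with h' | h' <;>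
              rw [h, h'] <;> norm_num
        have b3 : 0 ≤ ∏ i ∈ J, |-(δ π (Sum.inr (i, false)) * δ π (Sum.inr (i, true))) + 1| := prod_nonneg fun i _ => abs_nonneg _
        calc _ ≤ 1 * (2:ℝ) ^ m := mul_le_mul b1 b2 b3 zero_le_one
          _ = _ := one_mul _
      · have : ∃ i, ¬ (i ∈ J ↔ i ∈ Js) := by
          by_contra hcon
          push Not at hcon
          exact hJJ (Finset.ext hcon)
        obtain ⟨i, hi⟩ := this
        have hz : W J (δ π) = 0 := by
          by_cases hiJ : i ∈ J
          · have hh : δ π (Sum.inr (i, false)) = δ π (Sum.inr (i, true)) := by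
              by_contra hne
              exact hi ⟨fun _ => by simp [hJs, hne], fun _ => hiJ⟩
            have : ∏ i ∈ J, (-(δ π (Sum.inr (i, false)) * δ π (Sum.inr (i, true))) + 1) = 0 := by
              apply prod_eq_zero hiJ
              rw [hh]
              rcases hδ1 (Sum.inr (i, true)) with h | h <;> rw [h] <;> norm_num
            simp only [hW, this, mul_zero]
          · have hh : δ π (Sum.inr (i, false)) ≠ δ π (Sum.inr (i, true)) := by
              by_contra hne
              exact hi ⟨fun h => absurd h hiJ, fun h => by simp [hJs, hne] at h⟩
            have : ∏ i ∈ Jᶜ, (δ π (Sum.inr (i, false)) / 2 + δ π (Sum.inr (i, true)) / 2) = 0 := by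
              apply prod_eq_zero (mem_compl.2 hiJ)
              rcases hδ1 (Sum.inr (i, false)) with h | h <;> rcases hδ1 (Sum.inr (i, true)) with h' | h' <;>
                first | exact absurd (h.trans h'.symm) hh | (rw [h, h']; norm_num)
            simp only [hW, this, mul_zero, zero_mul]
        rw [hz, abs_zero]
    refine (Finset.sum_le_sum hb).trans ?_
    rw [Finset.sum_ite_eq']
    split_ifs
    · exact le_rfl
    · positivity
  have hsum : ∑ π, ∑ J ∈ powersetCard m (univ : Finset (Fin R)), W J (δ π) = (R.choose m : ℝ) * ((N.factorial : ℝ) * D) := by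
    rw [Finset.sum_comm, Finset.sum_congr rfl claim1, Finset.sum_const, card_powersetCard, card_univ, Fintype.card_fin, nsmul_eq_mul]
  have hbound : |∑ π, ∑ J ∈ powersetCard m (univ : Finset (Fin R)), W J (δ π)| ≤ (N.factorial : ℝ) * 2 ^ m := by
    refine (Finset.abs_sum_le_sum_abs _ _).trans ?_
    refine (Finset.sum_le_sum fun π _ => (Finset.abs_sum_le_sum_abs _ _).trans (claim2 π)).trans ?_
    rw [Finset.sum_const, card_univ, Fintype.card_perm, Fintype.card_fin, nsmul_eq_mul]
  rw [hsum, abs_mul, abs_mul, Nat.abs_cast, Nat.abs_cast] at hbound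
  have hf : (0:ℝ) < N.factorial := by exact_mod_cast N.factorial_pos
  have hc : (0:ℝ) < R.choose m := by exact_mod_cast Nat.choose_pos (by omega)
  rw [le_div_iff₀ hc]
  have : (N.factorial : ℝ) * (|D| * R.choose m) ≤ N.factorial * 2 ^ m := by linarith
  exact le_of_mul_le_mul_left this hf

def ind {N : ℕ} (T : Finset (Fin N)) : Fin N → ZMod 2 := fun i => if i ∈ T then 1 else 0

def SS {N : ℕ} (k : ℕ) (f : (Fin N → ZMod 2) → ℝ) (x : Fin N → ZMod 2) : ℝ :=
  sph k (fun T => f (x + ind T))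

theorem chi_ind {N : ℕ} (u : Fin N → ZMod 2) (T : Finset (Fin N)) :
    chi u (ind T) = ∏ t ∈ T, sg (u t) 1 := by
  have h3 : (0:ZMod 2) ≠ 1 := by decide
  rw [chi, ← Finset.prod_subset (Finset.subset_univ T)]
  · apply Finset.prod_congr rfl
    intro i hi
    simp [ind, hi]
  · intro i _ hi
    simp [ind, hi, sg]

theorem sph_add {N : ℕ} (k : ℕ) (F G : Finset (Fin N) → ℝ) :
    sph k (fun T => F T + G T) = sph k F + sph k G := by
  simp only [sph, Finset.sum_add_distrib, add_div]

theorem sph_mul {N : ℕ} (k : ℕ) (c : ℝ) (F : Finset (Fin N) → ℝ) :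
    sph k (fun T => c * F T) = c * sph k F := by
  simp only [sph, ← Finset.mul_sum, mul_div_assoc]

theorem sph_sum {N : ℕ} {ι : Type} (s : Finset ι) (k : ℕ) (F : ι → Finset (Fin N) → ℝ) :
    sph k (fun T => ∑ i ∈ s, F i T) = ∑ i ∈ s, sph k (F i) := by
  simp only [sph]
  rw [Finset.sum_comm, Finset.sum_div]

theorem sph_mono {N : ℕ} (k : ℕ) (F G : Finset (Fin N) → ℝ) (h : ∀ T, T.card = k → F T ≤ G T) :
    sph k F ≤ sph k G := by
  apply div_le_div_of_nonneg_right _ (by positivity)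
  exact Finset.sum_le_sum fun T hT => h T (mem_powersetCard.1 hT).2

theorem sph_nonneg {N : ℕ} (k : ℕ) (F : Finset (Fin N) → ℝ) (h : ∀ T, 0 ≤ F T) : 0 ≤ sph k F :=
  div_nonneg (Finset.sum_nonneg fun T _ => h T) (by positivity)

theorem sph_abs {N : ℕ} (k : ℕ) (F : Finset (Fin N) → ℝ) : |sph k F| ≤ sph k (fun T => |F T|) := by
  rw [sph, abs_div, Nat.abs_cast]
  exact div_le_div_of_nonneg_right (Finset.abs_sum_le_sum_abs _ _) (by positivity)

theorem sph_const_le {N : ℕ} (k : ℕ) (c : ℝ) (hc : 0 ≤ c) : sph k (fun _ : Finset (Fin N) => c) ≤ c := by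
  rw [sph, Finset.sum_const, card_powersetCard, card_univ, Fintype.card_fin, nsmul_eq_mul]
  by_cases h : (N.choose k : ℝ) = 0
  · rw [h]; simpa using hc
  · rw [mul_div_cancel_left₀ _ h]

theorem sph_jensen {N : ℕ} (k : ℕ) (p : ℝ) (hp : 1 ≤ p) (F : Finset (Fin N) → ℝ) (hF : ∀ T, 0 ≤ F T) :
    sph k F ^ p ≤ sph k (fun T => F T ^ p) := by
  by_cases h : (N.choose k : ℝ) = 0
  · simp only [sph, h, div_zero]
    rw [Real.zero_rpow (by linarith)]
  · have := Real.rpow_arith_mean_le_arith_mean_rpow (powersetCard k (univ : Finset (Fin N)))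
      (fun _ => (1:ℝ) / (N.choose k : ℝ)) F (fun _ _ => by positivity)
      (by rw [Finset.sum_const, card_powersetCard, card_univ, Fintype.card_fin, nsmul_eq_mul]; field_simp)
      (fun T _ => hF T) hp
    rw [← Finset.mul_sum, ← Finset.mul_sum] at this
    simp only [sph]
    rw [div_eq_inv_mul, div_eq_inv_mul]
    simpa using this

theorem SS_sum_le {N : ℕ} (k : ℕ) (h : (Fin N → ZMod 2) → ℝ) (hh : ∀ x, 0 ≤ h x) :
    ∑ x, SS k h x ≤ ∑ x, h x := by
  simp only [SS]
  rw [← sph_sum]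
  have : ∀ T : Finset (Fin N), ∑ x, h (x + ind T) = ∑ x, h x := fun T =>
    Equiv.sum_comp (Equiv.addRight (ind T)) h
  simp only [this]
  exact sph_const_le _ _ (Finset.sum_nonneg fun x _ => hh x)

theorem SS_abs_sum {N : ℕ} (k : ℕ) (h : (Fin N → ZMod 2) → ℝ) :
    ∑ x, |SS k h x| ≤ ∑ x, |h x| := by
  refine le_trans ?_ (SS_sum_le k (fun x => |h x|) fun x => abs_nonneg _)
  exact Finset.sum_le_sum fun x _ => sph_abs _ _

theorem SS_nonneg {N : ℕ} (k : ℕ) (f : (Fin N → ZMod 2) → ℝ) (hf : ∀ x, 0 ≤ f x) (x) : 0 ≤ SS k f x :=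
  sph_nonneg _ _ fun _ => hf _

theorem SS_jensen {N : ℕ} (k : ℕ) (p : ℝ) (hp : 1 ≤ p) (f : (Fin N → ZMod 2) → ℝ) (hf : ∀ x, 0 ≤ f x) (x) :
    SS k f x ^ p ≤ SS k (fun y => f y ^ p) x := sph_jensen k p hp _ fun _ => hf _

theorem SS_lp {N : ℕ} (k : ℕ) (p : ℝ) (hp : 1 ≤ p) (f : (Fin N → ZMod 2) → ℝ) (hf : ∀ x, 0 ≤ f x) :
    ∑ x, SS k f x ^ p ≤ ∑ x, f x ^ p :=
  (Finset.sum_le_sum fun x _ => SS_jensen k p hp f hf x).trans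
    (SS_sum_le k _ fun x => Real.rpow_nonneg (hf x) _)

theorem SS_add {N : ℕ} (k : ℕ) (f g : (Fin N → ZMod 2) → ℝ) (x) : SS k (f + g) x = SS k f x + SS k g x := by
  simp only [SS, Pi.add_apply, sph_add]

theorem SS_kernel {N : ℕ} (k : ℕ) (f : (Fin N → ZMod 2) → ℝ) (x) :
    SS k f x = ∑ y, (sph k fun T => if ind T = y then (1:ℝ) else 0) * f (x + y) := by
  have : ∀ y, (sph k fun T : Finset (Fin N) => if ind T = y then (1:ℝ) else 0) * f (x + y) =
     sph k fun T => f (x+y) * (if ind T = y then (1:ℝ) else 0) := by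
    intro y; rw [sph_mul, mul_comm]
  simp only [this]
  rw [← sph_sum]
  simp [SS]

theorem SS_compl {N : ℕ} (k : ℕ) (hk : k ≤ N) (f : (Fin N → ZMod 2) → ℝ) (x) :
    SS k f x = SS (N - k) f (x + 1) := by
  have h2 : (1:ZMod 2) + 1 = 0 := by decide
  simp only [SS, sph, Nat.choose_symm hk]
  congr 1
  refine Finset.sum_nbij' (fun T => Tᶜ) (fun T => Tᶜ) ?_ ?_ ?_ ?_ ?_
  · intro T hT
    have := (mem_powersetCard.1 hT).2
    simp [mem_powersetCard, card_compl, this]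
  · intro T hT
    have := (mem_powersetCard.1 hT).2
    simp [mem_powersetCard, card_compl, this]; omega
  · intro T _; simp
  · intro T _; simp
  · intro T _
    congr 1
    funext i
    simp only [Pi.add_apply, ind, Pi.one_apply, mem_compl]
    by_cases h : i ∈ T <;> simp [h, add_assoc, h2]

def BB {N : ℕ} (s : ℕ) (f : (Fin N → ZMod 2) → ℝ) (x : Fin N → ZMod 2) : ℝ :=
  (∑ k ∈ range (s+1), (s.choose k : ℝ) * SS k f x) / 2 ^ s

def vv {N : ℕ} (π : Equiv.Perm (Fin N)) (s : ℕ) : Fin N → ZMod 2 :=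
  if h : s < N then ind {π ⟨s, h⟩} else 0

def aa {N : ℕ} (π : Equiv.Perm (Fin N)) (f : (Fin N → ZMod 2) → ℝ) : ℕ → (Fin N → ZMod 2) → ℝ
  | 0 => f
  | s+1 => fun x => (aa π f s x + aa π f s (x + vv π s)) / 2

theorem ind_insert {N : ℕ} (a : Fin N) (U : Finset (Fin N)) (h : a ∉ U) : ind (insert a U) = ind {a} + ind U := by
  funext i
  simp only [ind, Pi.add_apply, mem_insert, mem_singleton]
  by_cases h1 : i = a
  · subst h1; simp [h]
  · simp [h1]

theorem aa_expand {N : ℕ} (π : Equiv.Perm (Fin N)) (f : (Fin N → ZMod 2) → ℝ) (s : ℕ) (hs : s ≤ N) :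
    ∀ x, aa π f s x = (∑ U ∈ (univ.filter (fun i : Fin N => i.val < s)).powerset, f (x + ind (U.map π.toEmbedding))) / 2 ^ s := by
  induction s with
  | zero =>
    intro x
    have : ind (∅ : Finset (Fin N)) = 0 := by funext i; simp [ind]
    simp [aa, this]
  | succ s ih =>
    intro x
    have hs' : s < N := hs
    have hfil : univ.filter (fun i : Fin N => i.val < s + 1) = insert ⟨s, hs'⟩ (univ.filter (fun i : Fin N => i.val < s)) := by
      ext i
      simp only [mem_filter, mem_univ, true_and, mem_insert, Fin.ext_iff]; omega
    have hnot : (⟨s, hs'⟩ : Fin N) ∉ univ.filter (fun i : Fin N => i.val < s) := by simp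
    rw [hfil, Finset.sum_powerset_insert hnot]
    simp only [aa]
    rw [ih hs'.le, ih hs'.le]
    have : ∑ U ∈ (univ.filter (fun i : Fin N => i.val < s)).powerset, f (x + ind ((insert ⟨s, hs'⟩ U).map π.toEmbedding))
      = ∑ U ∈ (univ.filter (fun i : Fin N => i.val < s)).powerset, f (x + vv π s + ind (U.map π.toEmbedding)) := by
      apply Finset.sum_congr rfl
      intro U hU
      rw [map_insert, ind_insert, vv, dif_pos hs', add_assoc]
      · rfl
      · intro hmem
        rw [mem_map_equiv] at hmem
        simp at hmem
        exact hnot (mem_powerset.1 hU hmem)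
    rw [this, pow_succ]
    field_simp

theorem aa_avg {N : ℕ} (f : (Fin N → ZMod 2) → ℝ) (s : ℕ) (hs : s ≤ N) (x) :
    ∑ π : Equiv.Perm (Fin N), aa π f s x = N.factorial * BB s f x := by
  simp only [aa_expand _ f s hs]
  rw [← Finset.sum_div, Finset.sum_comm]
  simp only [perm_avg (fun T => f (x + ind T))]
  rw [← Finset.mul_sum, Finset.sum_powerset_apply_card (fun k => sph k fun T : Finset (Fin N) => f (x + ind T))]
  have : (univ.filter (fun i : Fin N => i.val < s)).card = s := by
    rw [Fin.card_filter_val_lt]; omega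
  rw [this]
  simp only [nsmul_eq_mul, BB, SS, mul_div_assoc]

theorem ball_max (p : ℝ) (hp : 1 < p) : ∃ C : ℝ, 0 ≤ C ∧ ∀ (N : ℕ) (f : (Fin N → ZMod 2) → ℝ), (∀ x, 0 ≤ f x) →
    ∃ z : (Fin N → ZMod 2) → ℝ, (∀ x, 0 ≤ z x) ∧ (∀ s ≤ N, ∀ x, BB s f x ≤ z x) ∧ ∑ x, z x ^ p ≤ C * ∑ x, f x ^ p := by
  obtain ⟨C, hC, H⟩ := doob_max p hp
  refine ⟨C, hC, ?_⟩
  intro N f hf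
  have hσ : ∀ π : Equiv.Perm (Fin N), ∀ s t, s < t → ∀ x, aa π f t (x + vv π s) = aa π f t x := by
    intro π s t hst
    induction t with
    | zero => omega
    | succ t ih =>
      intro x
      simp only [aa]
      rcases Nat.lt_succ_iff_lt_or_eq.1 hst with h | h
      · rw [add_right_comm, ih h, ih h]
      · subst h
        rw [addself, add_comm]
  have hnn : ∀ π : Equiv.Perm (Fin N), ∀ s x, 0 ≤ aa π f s x := by
    intro π s
    induction s with
    | zero => exact hf
    | succ s ih => intro x; simp only [aa]; linarith [ih x, ih (x + vv π s)]
  have key : ∀ π : Equiv.Perm (Fin N), ∃ z : (Fin N → ZMod 2) → ℝ, (∀ x, 0 ≤ z x) ∧ (∀ s ≤ N, ∀ x, aa π f s x ≤ z x)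
     ∧ ∑ x, z x ^ p ≤ C * ∑ x, f x ^ p := fun π =>
    H N (aa π f) (fun s => Equiv.addRight (vv π s)) (hnn π) (hσ π) (fun s x => rfl)
  choose z hz0 hz1 hz2 using key
  have hfac : (0:ℝ) < N.factorial := by exact_mod_cast N.factorial_pos
  refine ⟨fun x => ∑ π, (1 / (N.factorial : ℝ)) * z π x, ?_, ?_, ?_⟩
  · intro x; exact Finset.sum_nonneg fun π _ => mul_nonneg (by positivity) (hz0 π x)
  · intro s hs x
    have h1 := aa_avg f s hs x
    have h2 : ∑ π : Equiv.Perm (Fin N), aa π f s x ≤ ∑ π, z π x := Finset.sum_le_sum fun π _ => hz1 π s hs x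
    dsimp only
    rw [← Finset.mul_sum, one_div, ← div_eq_inv_mul, le_div_iff₀ hfac]
    linarith
  · have hJ : ∀ x, (∑ π, (1 / (N.factorial : ℝ)) * z π x) ^ p ≤ ∑ π, (1 / (N.factorial : ℝ)) * z π x ^ p := by
      intro x
      refine Real.rpow_arith_mean_le_arith_mean_rpow _ _ _ (fun _ _ => by positivity) ?_ (fun π _ => hz0 π x) hp.le
      rw [Finset.sum_const, card_univ, Fintype.card_perm, Fintype.card_fin, nsmul_eq_mul]; field_simp
    refine (Finset.sum_le_sum fun x _ => hJ x).trans ?_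
    rw [Finset.sum_comm]
    simp only [← Finset.mul_sum]
    rw [one_div, ← div_eq_inv_mul, div_le_iff₀ hfac]
    refine (Finset.sum_le_sum fun π _ => hz2 π).trans ?_
    rw [Finset.sum_const, card_univ, Fintype.card_perm, Fintype.card_fin, nsmul_eq_mul, mul_comm]

theorem SS_chi {N : ℕ} (k : ℕ) (u : Fin N → ZMod 2) :
    SS k (chi u) 0 = sph k (fun T => ∏ t ∈ T, sg (u t) 1) := by
  simp only [SS, zero_add, chi_ind]

theorem p_part {N : ℕ} (m w r : ℕ) (hm : 1 ≤ m) (hw : 1 ≤ w) (hr1 : 8 * m ^ 2 * w ^ 2 ≤ r)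
    (hr2 : r ≤ 36 * m ^ 2 * w ^ 2) (c : ℕ → ℝ) (hc : ∀ i, |c i| ≤ 2 ^ m / w)
    (f : (Fin N → ZMod 2) → ℝ) (hf : ∀ x, 0 ≤ f x) (x) :
    ∑ i ∈ range (m * w), c i * SS (r + 2 * i) f x ≤ 2 ^ m * 24 * m * BB (2 * r) f x := by
  have hw0 : (0:ℝ) < w := by exact_mod_cast hw
  have hmw : 1 ≤ m * w := Nat.mul_pos hm hw
  have hmw2 : 8 * (m * w) ^ 2 ≤ r := by rw [mul_pow, ← mul_assoc]; exact hr1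
  have hmw3 : 8 * (m * w) ≤ r := by nlinarith
  have hr0 : 1 ≤ r := by omega
  have hb : ∑ i ∈ range (m * w), SS (r + 2 * i) f x ≤ 4 * √r * BB (2 * r) f x := by
    rw [BB, mul_div_assoc', le_div_iff₀ (by positivity), Finset.sum_mul, pow_mul]
    have h1 : ∑ i ∈ range (m * w), SS (r + 2 * i) f x * ((2:ℝ)^2)^r ≤
        ∑ i ∈ range (m * w), 4 * √r * (((2*r).choose (r + 2 * i) : ℝ) * SS (r + 2 * i) f x) := by
      apply Finset.sum_le_sum
      intro i hi
      rw [mem_range] at hi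
      have := binom_lb r (2 * i) hr0 (by nlinarith)
      have h4 : ((2:ℝ)^2)^r = 4 ^ r := by norm_num
      rw [h4]
      have := mul_le_mul_of_nonneg_left this (SS_nonneg (r + 2 * i) f hf x)
      linarith
    refine h1.trans ?_
    rw [← Finset.mul_sum]
    apply mul_le_mul_of_nonneg_left _ (by positivity)
    have hinj : Set.InjOn (fun i => r + 2 * i) (range (m * w) : Set ℕ) := by
      intro a _ b _ h; simp at h; exact h
    rw [← Finset.sum_image (f := fun k => (((2*r).choose k : ℝ) * SS k f x)) hinj]
    apply Finset.sum_le_sum_of_subset_of_nonneg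
    · intro k hk
      obtain ⟨i, hi, rfl⟩ := mem_image.1 hk
      rw [mem_range] at hi ⊢
      omega
    · intro k _ _
      exact mul_nonneg (by positivity) (SS_nonneg k f hf x)
  have hsq : √(r:ℝ) ≤ 6 * m * w := by
    rw [Real.sqrt_le_left (by positivity)]
    have : (r:ℝ) ≤ 36 * m ^ 2 * w ^ 2 := by exact_mod_cast hr2
    nlinarith
  have hB0 : 0 ≤ BB (2 * r) f x := div_nonneg (Finset.sum_nonneg fun k _ =>
    mul_nonneg (by positivity) (SS_nonneg k f hf x)) (by positivity)
  calc ∑ i ∈ range (m * w), c i * SS (r + 2 * i) f x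
      ≤ ∑ i ∈ range (m * w), (2 ^ m / w) * SS (r + 2 * i) f x :=
        Finset.sum_le_sum fun i _ => mul_le_mul_of_nonneg_right ((le_abs_self _).trans (hc i)) (SS_nonneg _ f hf x)
    _ = (2 ^ m / w) * ∑ i ∈ range (m * w), SS (r + 2 * i) f x := by rw [Finset.mul_sum]
    _ ≤ (2 ^ m / w) * (4 * (6 * m * w) * BB (2 * r) f x) := by
        apply mul_le_mul_of_nonneg_left _ (by positivity)
        refine hb.trans ?_
        apply mul_le_mul_of_nonneg_right _ hB0
        linarith
    _ = _ := by field_simp; ring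

def TT {N : ℕ} (m w r : ℕ) (c : ℕ → ℝ) (f : (Fin N → ZMod 2) → ℝ) (x : Fin N → ZMod 2) : ℝ :=
  SS r f x - ∑ i ∈ range (m * w), c i * SS (r + 2 * i) f x

theorem TT_l1 {N : ℕ} (m w r : ℕ) (hw : 1 ≤ w) (c : ℕ → ℝ) (hc : ∀ i, |c i| ≤ 2 ^ m / w) (f : (Fin N → ZMod 2) → ℝ) :
    ∑ x, |TT m w r c f x| ≤ (1 + m * 2 ^ m) * ∑ x, |f x| := by
  have hw0 : (0:ℝ) < w := by exact_mod_cast hw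
  have h1 : ∀ x, |TT m w r c f x| ≤ |SS r f x| + ∑ i ∈ range (m * w), (2 ^ m / w) * |SS (r + 2 * i) f x| := by
    intro x
    refine (abs_sub _ _).trans ?_
    apply add_le_add le_rfl
    refine (Finset.abs_sum_le_sum_abs _ _).trans (Finset.sum_le_sum fun i _ => ?_)
    rw [abs_mul]
    exact mul_le_mul_of_nonneg_right (hc i) (abs_nonneg _)
  refine (Finset.sum_le_sum fun x _ => h1 x).trans ?_
  rw [Finset.sum_add_distrib, Finset.sum_comm]
  simp only [← Finset.mul_sum]
  have h2 : ∑ i ∈ range (m * w), ∑ x, |SS (r + 2 * i) f x| ≤ (m * w) * ∑ x, |f x| := by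
    refine (Finset.sum_le_sum fun i _ => SS_abs_sum (r + 2 * i) f).trans ?_
    rw [Finset.sum_const, card_range, nsmul_eq_mul]; push_cast; rfl
  have h3 := SS_abs_sum r f
  have h4 := mul_le_mul_of_nonneg_left h2 (show (0:ℝ) ≤ 2 ^ m / w by positivity)
  have h5 : (2:ℝ) ^ m / w * ((m * w) * ∑ x, |f x|) = m * 2 ^ m * ∑ x, |f x| := by field_simp
  linarith

theorem choose_lb (r m : ℕ) : ((r:ℝ) / 2) ^ m ≤ m.factorial * ((r / 2 + m).choose m : ℝ) := by
  have h1 := Nat.ascFactorial_eq_factorial_mul_choose (r / 2) m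
  have h2 := Nat.pow_succ_le_ascFactorial (r / 2 + 1) m
  have h3 : ((r:ℝ) / 2) ≤ ((r / 2 + 1 : ℕ) : ℝ) := by
    have : r ≤ 2 * (r / 2 + 1) := by omega
    have : (r:ℝ) ≤ 2 * ((r / 2 + 1 : ℕ) : ℝ) := by exact_mod_cast this
    linarith
  calc ((r:ℝ) / 2) ^ m ≤ ((r / 2 + 1 : ℕ) : ℝ) ^ m := pow_le_pow_left₀ (by positivity) h3 m
    _ ≤ _ := by rw [h1] at h2; exact_mod_cast h2

theorem TT_l2 {N : ℕ} (m w r : ℕ) (hm : 1 ≤ m) (hw : 1 ≤ w) (hr1 : 8 * m ^ 2 * w ^ 2 ≤ r) (hrN : 2 * r ≤ N)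
    (c q : ℕ → ℝ) (hq : ∀ i, 0 ≤ q i) (hqs : ∑ i ∈ range (m * w), q i ≤ w ^ m)
    (hg : ∀ g : ℕ → ℝ, g 0 = ∑ i ∈ range (m * w), c i * g i +
      ∑ i ∈ range (m * w), q i * ∑ j ∈ range (m + 1), (-1) ^ j * (m.choose j : ℝ) * g (i + j))
    (f : (Fin N → ZMod 2) → ℝ) :
    ∑ x, |TT m w r c f x| ^ 2 ≤ (16 ^ m * (m.factorial : ℝ) ^ 2 / r ^ m) * ∑ x, |f x| ^ 2 := by
  have hmw : 1 ≤ m * w := Nat.mul_pos hm hw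
  have hmw2 : 8 * (m * w) ^ 2 ≤ r := by rw [mul_pow, ← mul_assoc]; exact hr1
  have hmw3 : 8 * (m * w) ≤ r := by nlinarith
  have hmm : m ≤ m * w := Nat.le_mul_of_pos_right m hw
  have hww : w ≤ m * w := Nat.le_mul_of_pos_left w hm
  have hr0 : (0:ℝ) < r := by exact_mod_cast (show 0 < r by omega)
  set K : (Fin N → ZMod 2) → ℝ := fun y => (sph r fun T => if ind T = y then (1:ℝ) else 0) -
    ∑ i ∈ range (m * w), c i * (sph (r + 2 * i) fun T => if ind T = y then (1:ℝ) else 0) with hK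
  have hTK : ∀ (f : (Fin N → ZMod 2) → ℝ) x, TT m w r c f x = ∑ y, K y * f (x + y) := by
    intro f x
    simp only [TT, SS_kernel _ f x, hK, sub_mul, Finset.sum_sub_distrib]
    congr 1
    simp only [Finset.sum_mul, Finset.mul_sum]
    rw [Finset.sum_comm]
    simp only [mul_assoc]
  set Bd : ℝ := w ^ m * (2 ^ m / ((r / 2 + m).choose m : ℝ)) with hBd
  have hmult : ∀ u, |∑ y, K y * chi u y| ≤ Bd := by
    intro u
    have h1 : ∑ y, K y * chi u y = TT m w r c (chi u) 0 := by rw [hTK]; simp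
    have h2 := hg (fun i => SS (r + 2 * i) (chi u) 0)
    have h3 : TT m w r c (chi u) 0 = ∑ i ∈ range (m * w), q i * ∑ j ∈ range (m + 1), (-1) ^ j * (m.choose j : ℝ) * SS (r + 2 * (i + j)) (chi u) 0 := by
      rw [TT]; simp only [mul_zero, add_zero] at h2; linarith
    rw [h1, h3]
    refine (Finset.abs_sum_le_sum_abs _ _).trans ?_
    have h4 : ∀ i ∈ range (m * w), |q i * ∑ j ∈ range (m + 1), (-1) ^ j * (m.choose j : ℝ) * SS (r + 2 * (i + j)) (chi u) 0|
       ≤ q i * (2 ^ m / ((r / 2 + m).choose m : ℝ)) := by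
      intro i hi
      rw [mem_range] at hi
      rw [abs_mul, abs_of_nonneg (hq i)]
      apply mul_le_mul_of_nonneg_left _ (hq i)
      have := kraw_diff (fun t => sg (u t) 1) (fun t => by unfold sg; split_ifs <;> simp) (r + 2 * i) (r / 2) m (by omega) (by omega)
      simp only [SS_chi]
      simpa only [mul_add, add_assoc] using this
    refine (Finset.sum_le_sum h4).trans ?_
    rw [← Finset.sum_mul]
    exact mul_le_mul_of_nonneg_right hqs (by positivity)
  have hL := l2_bound K Bd hmult f
  simp only [← hTK] at hL
  refine hL.trans ?_
  apply mul_le_mul_of_nonneg_right _ (by positivity)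
  have hch : (0:ℝ) < ((r / 2 + m).choose m : ℝ) := by exact_mod_cast Nat.choose_pos (by omega)
  have hcl := choose_lb r m
  have hB2 : Bd ≤ w ^ m * (4 ^ m * m.factorial / r ^ m) := by
    rw [hBd]
    apply mul_le_mul_of_nonneg_left _ (by positivity)
    rw [div_le_div_iff₀ hch (by positivity)]
    rw [div_pow, div_le_iff₀ (by positivity)] at hcl
    have : (2:ℝ)^m * r^m ≤ 2 ^ m * (m.factorial * ((r / 2 + m).choose m : ℝ) * 2 ^ m) := by
      apply mul_le_mul_of_nonneg_left hcl (by positivity)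
    refine this.trans (le_of_eq ?_)
    have h4 : (4:ℝ)^m = 2^m * 2^m := by rw [← mul_pow]; norm_num
    rw [h4]; ring
  have hB0 : 0 ≤ Bd := by rw [hBd]; positivity
  have hw2 : ((w:ℝ) ^ 2) ^ m ≤ r ^ m := by
    apply pow_le_pow_left₀ (by positivity)
    have : w ^ 2 ≤ r := by nlinarith
    exact_mod_cast this
  calc Bd ^ 2 ≤ (w ^ m * (4 ^ m * m.factorial / r ^ m)) ^ 2 := pow_le_pow_left₀ hB0 hB2 2
    _ = ((w:ℝ) ^ 2) ^ m * (16 ^ m * (m.factorial:ℝ) ^ 2 / (r ^ m) ^ 2) := by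
        have h4 : (16:ℝ)^m = 4^m * 4^m := by rw [← mul_pow]; norm_num
        rw [h4]; field_simp; ring
    _ ≤ r ^ m * (16 ^ m * (m.factorial:ℝ) ^ 2 / (r ^ m) ^ 2) := mul_le_mul_of_nonneg_right hw2 (by positivity)
    _ = _ := by field_simp

theorem decomp (p : ℝ) (hp : 1 < p) (hp2 : p < 2) : ∃ r0 : ℕ, ∃ C1 C2 : ℝ, 1 ≤ r0 ∧ 0 ≤ C1 ∧ 0 ≤ C2 ∧
    ∀ N r : ℕ, r0 ≤ r → 2 * r ≤ N → ∀ f : (Fin N → ZMod 2) → ℝ, (∀ x, 0 ≤ f x) →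
    ∃ t : (Fin N → ZMod 2) → ℝ, (∀ x, 0 ≤ t x) ∧ (∀ x, SS r f x ≤ C1 * BB (2 * r) f x + t x) ∧
      ∑ x, t x ^ p ≤ C2 / (r:ℝ) ^ 2 * ∑ x, f x ^ p := by
  have hp' : 0 < p - 1 := by linarith
  have hp2' : 0 < 2 - p := by linarith
  set m := ⌈2 / (p - 1)⌉₊ with hmdef
  have hm : 1 ≤ m := Nat.ceil_pos.2 (by positivity)
  have hmp : 2 ≤ m * (p - 1) := by
    have := Nat.le_ceil (2 / (p - 1))
    rwa [div_le_iff₀ hp'] at this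
  set A : ℝ := 1 + m * 2 ^ m with hA
  set C2 : ℝ := 2 * A + 4 * (p - 1) / (2 - p) * (16 ^ m * (m.factorial : ℝ) ^ 2) with hC2
  refine ⟨8 * m ^ 2, 2 ^ m * 24 * m, C2, by nlinarith, by positivity, by positivity, ?_⟩
  intro N r hr hrN f hf
  have hm2 : 0 < 8 * m ^ 2 := by positivity
  set w := Nat.sqrt (r / (8 * m ^ 2)) with hw
  have hw1 : 1 ≤ w := by
    rw [hw, Nat.le_sqrt]
    exact (Nat.one_le_div_iff hm2).2 hr
  have hwa : 8 * m ^ 2 * w ^ 2 ≤ r := by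
    have h := Nat.sqrt_le (r / (8 * m ^ 2))
    rw [← hw] at h
    have := Nat.mul_le_mul_left (8 * m ^ 2) h
    have h2 := Nat.mul_div_le r (8 * m ^ 2)
    rw [sq w]; omega
  have hwb : r ≤ 36 * m ^ 2 * w ^ 2 := by
    have h := Nat.lt_succ_sqrt (r / (8 * m ^ 2))
    rw [← hw] at h
    have h3 := Nat.lt_mul_of_div_lt h hm2
    have h4 : Nat.succ w * Nat.succ w ≤ 4 * w ^ 2 := by simp only [Nat.succ_eq_add_one]; nlinarith
    have h5 := Nat.mul_le_mul_left (8 * m ^ 2) h4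
    have h6 : m ^ 2 * w ^ 2 = m^2 * w^2 := rfl
    nlinarith
  obtain ⟨c, q, hc, hq, hqs, hg⟩ := smooth_coeffs m w hm hw1
  have hr0 : (1:ℝ) ≤ r := by exact_mod_cast (show 1 ≤ r by omega)
  have hr0' : (0:ℝ) < r := by linarith
  refine ⟨fun x => |TT m w r c f x|, fun x => abs_nonneg _, ?_, ?_⟩
  · intro x
    have h1 := p_part m w r hm hw1 hwa hwb c hc f hf x
    have h2 := le_abs_self (TT m w r c f x)
    have h3 : SS r f x = TT m w r c f x + ∑ i ∈ range (m * w), c i * SS (r + 2 * i) f x := by rw [TT]; ring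
    linarith
  · have ha : (0:ℝ) < (r:ℝ) ^ m := by positivity
    have hadd : ∀ (f g : (Fin N → ZMod 2) → ℝ) x, |TT m w r c (f + g) x| ≤ |TT m w r c f x| + |TT m w r c g x| := by
      intro f g x
      have : TT m w r c (f + g) x = TT m w r c f x + TT m w r c g x := by
        simp only [TT, SS_add, mul_add, Finset.sum_add_distrib]; ring
      rw [this]; exact abs_add_le _ _
    have := interp_aux p A (16 ^ m * (m.factorial : ℝ) ^ 2 / r ^ m) ((r:ℝ) ^ m) hp hp2 (by positivity) (by positivity) ha
      (TT m w r c) hadd (TT_l1 m w r hw1 c hc) (TT_l2 m w r hm hw1 hwa hrN c q hq hqs hg) f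
    refine this.trans ?_
    have habs : ∀ x, |f x| = f x := fun x => abs_of_nonneg (hf x)
    simp only [habs]
    apply mul_le_mul_of_nonneg_right _ (Finset.sum_nonneg fun x _ => Real.rpow_nonneg (hf x) _)
    have e1 : ((r:ℝ) ^ m) ^ (2 - p) = r ^ m * ((r:ℝ) ^ m) ^ (1 - p) := by
      rw [show 2 - p = 1 + (1 - p) by ring, Real.rpow_add ha, Real.rpow_one]
    have e2 : ((r:ℝ) ^ m) ^ (1 - p) ≤ 1 / (r:ℝ) ^ 2 := by
      rw [← Real.rpow_natCast, ← Real.rpow_mul hr0'.le, one_div, ← Real.rpow_natCast, ← Real.rpow_neg hr0'.le]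
      apply Real.rpow_le_rpow_of_exponent_le hr0
      push_cast
      linarith
    rw [e1]
    have e3 : 2 * A * ((r:ℝ) ^ m) ^ (1 - p) + 4 * (p - 1) / (2 - p) * (16 ^ m * (m.factorial : ℝ) ^ 2 / r ^ m) * (r ^ m * ((r:ℝ) ^ m) ^ (1 - p))
      = C2 * ((r:ℝ) ^ m) ^ (1 - p) := by rw [hC2]; field_simp
    rw [e3, div_eq_mul_one_div C2]
    exact mul_le_mul_of_nonneg_left e2 (by positivity)

theorem add_rpow_le (p a b : ℝ) (hp : 1 ≤ p) (ha : 0 ≤ a) (hb : 0 ≤ b) : (a + b) ^ p ≤ 2 ^ p * (a ^ p + b ^ p) := by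
  have h := Real.rpow_arith_mean_le_arith_mean_rpow (univ : Finset (Fin 2)) (fun _ => 1/2) ![a, b] (fun _ _ => by norm_num)
    (by simp) (fun i _ => by fin_cases i <;> simp [ha, hb]) hp
  simp [Fin.sum_univ_two] at h
  have e : a + b = 2 * (2⁻¹ * a + 2⁻¹ * b) := by ring
  rw [e, Real.mul_rpow (by norm_num) (by positivity)]
  apply mul_le_mul_of_nonneg_left _ (by positivity)
  have := Real.rpow_nonneg ha p
  have := Real.rpow_nonneg hb p
  linarith

theorem cube_half (p : ℝ) (hp : 1 < p) (hp2 : p < 2) : ∃ C : ℝ, 0 ≤ C ∧ ∀ (N : ℕ) (f : (Fin N → ZMod 2) → ℝ), (∀ x, 0 ≤ f x) →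
    ∃ g : (Fin N → ZMod 2) → ℝ, (∀ x, 0 ≤ g x) ∧ (∀ r, 2 * r ≤ N → ∀ x, SS r f x ≤ g x) ∧ ∑ x, g x ^ p ≤ C * ∑ x, f x ^ p := by
  obtain ⟨Cb, hCb, Hb⟩ := ball_max p hp
  obtain ⟨r0, C1, C2, hr0, hC1, hC2, H⟩ := decomp p hp hp2
  have hsum : Summable (fun n : ℕ => 1 / (n:ℝ) ^ 2) := Real.summable_one_div_nat_pow.2 (by norm_num)
  set Z := ∑' n : ℕ, 1 / (n:ℝ) ^ 2 with hZ
  have hZ0 : 0 ≤ Z := tsum_nonneg fun n => by positivity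
  refine ⟨2 ^ p * (C1 ^ p * Cb + (r0 + C2 * Z)), by positivity, ?_⟩
  intro N f hf
  obtain ⟨z, hz0, hz1, hz2⟩ := Hb N f hf
  have hF0 : 0 ≤ ∑ x, f x ^ p := Finset.sum_nonneg fun x _ => Real.rpow_nonneg (hf x) _
  have key : ∀ r : ℕ, ∃ u : (Fin N → ZMod 2) → ℝ, (∀ x, 0 ≤ u x) ∧ (2 * r ≤ N → ∀ x, SS r f x ≤ C1 * z x + u x) ∧
      ∑ x, u x ^ p ≤ ((if r < r0 then 1 else 0) + C2 * (1 / (r:ℝ) ^ 2)) * ∑ x, f x ^ p := by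
    intro r
    by_cases hr : r < r0
    · refine ⟨SS r f, SS_nonneg r f hf, fun _ x => ?_, ?_⟩
      · have := mul_nonneg hC1 (hz0 x); linarith
      · rw [if_pos hr]
        refine (SS_lp r p hp.le f hf).trans ?_
        have : 0 ≤ C2 * (1 / (r:ℝ) ^ 2) := by positivity
        nlinarith
    · by_cases hN : 2 * r ≤ N
      · obtain ⟨t, ht0, ht1, ht2⟩ := H N r (by omega) hN f hf
        refine ⟨t, ht0, fun _ x => ?_, ?_⟩
        · have := mul_le_mul_of_nonneg_left (hz1 _ hN x) hC1
          linarith [ht1 x]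
        · rw [if_neg hr, zero_add, mul_one_div]; exact ht2
      · refine ⟨0, fun _ => le_rfl, fun h => absurd h hN, ?_⟩
        simp only [Pi.zero_apply, Real.zero_rpow (by linarith : p ≠ 0), Finset.sum_const_zero]
        apply mul_nonneg _ hF0
        split_ifs <;> positivity
  choose u hu0 hu1 hu2 using key
  have hS0 : ∀ x, 0 ≤ ∑ r ∈ range (N+1), u r x ^ p := fun x => Finset.sum_nonneg fun r _ => Real.rpow_nonneg (hu0 r x) _
  refine ⟨fun x => C1 * z x + (∑ r ∈ range (N+1), u r x ^ p) ^ (1/p), ?_, ?_, ?_⟩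
  · intro x; have := mul_nonneg hC1 (hz0 x); have := Real.rpow_nonneg (hS0 x) (1/p); dsimp only; linarith
  · intro r hr x
    refine (hu1 r hr x).trans ?_
    apply add_le_add le_rfl
    have h1 : u r x ^ p ≤ ∑ r ∈ range (N+1), u r x ^ p :=
      Finset.single_le_sum (f := fun r => u r x ^ p) (fun r _ => Real.rpow_nonneg (hu0 r x) _) (mem_range.2 (by omega))
    have h2 := Real.rpow_le_rpow (Real.rpow_nonneg (hu0 r x) _) h1 (show 0 ≤ 1/p by positivity)
    rwa [← Real.rpow_mul (hu0 r x), mul_one_div_cancel (by linarith), Real.rpow_one] at h2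
  · have h1 : ∀ x, (C1 * z x + (∑ r ∈ range (N+1), u r x ^ p) ^ (1/p)) ^ p ≤
        2 ^ p * (C1 ^ p * z x ^ p + ∑ r ∈ range (N+1), u r x ^ p) := by
      intro x
      refine (add_rpow_le p _ _ hp.le (mul_nonneg hC1 (hz0 x)) (Real.rpow_nonneg (hS0 x) _)).trans ?_
      rw [Real.mul_rpow hC1 (hz0 x), ← Real.rpow_mul (hS0 x), one_div_mul_cancel (by linarith), Real.rpow_one]
    refine (Finset.sum_le_sum fun x _ => h1 x).trans ?_
    rw [← Finset.mul_sum, mul_assoc]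
    apply mul_le_mul_of_nonneg_left _ (by positivity)
    rw [Finset.sum_add_distrib, ← Finset.mul_sum, add_mul, mul_assoc]
    apply add_le_add
    · exact mul_le_mul_of_nonneg_left hz2 (by positivity)
    · rw [Finset.sum_comm]
      refine (Finset.sum_le_sum fun r _ => hu2 r).trans ?_
      rw [← Finset.sum_mul]
      apply mul_le_mul_of_nonneg_right _ hF0
      rw [Finset.sum_add_distrib, ← Finset.mul_sum]
      apply add_le_add
      · rw [Finset.sum_ite, Finset.sum_const_zero, add_zero, Finset.sum_const, nsmul_eq_mul, mul_one]
        have : ((range (N+1)).filter (· < r0)).card ≤ (range r0).card := by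
          apply card_le_card
          intro r hr
          simp at hr ⊢; exact hr.2
        rw [card_range] at this
        exact_mod_cast this
      · exact mul_le_mul_of_nonneg_left (hsum.sum_le_tsum _ fun n _ => by positivity) hC2

theorem cube_lt2 (p : ℝ) (hp : 1 < p) (hp2 : p < 2) : ∃ C : ℝ, 0 ≤ C ∧ ∀ (N : ℕ) (f : (Fin N → ZMod 2) → ℝ), (∀ x, 0 ≤ f x) →
    ∃ g : (Fin N → ZMod 2) → ℝ, (∀ x, 0 ≤ g x) ∧ (∀ r, r ≤ N → ∀ x, SS r f x ≤ g x) ∧ ∑ x, g x ^ p ≤ C * ∑ x, f x ^ p := by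
  obtain ⟨C, hC, H⟩ := cube_half p hp hp2
  refine ⟨2 ^ p * (C + C), by positivity, ?_⟩
  intro N f hf
  obtain ⟨g, g0, g1, g2⟩ := H N f hf
  refine ⟨fun x => g x + g (x + 1), fun x => add_nonneg (g0 _) (g0 _), ?_, ?_⟩
  · intro r hr x
    rcases le_total (2 * r) N with h | h
    · have := g1 r h x; linarith [g0 (x + 1)]
    · rw [SS_compl r hr]
      have := g1 (N - r) (by omega) (x + 1); linarith [g0 x]
  · refine (Finset.sum_le_sum fun x _ => add_rpow_le p _ _ hp.le (g0 x) (g0 (x+1))).trans ?_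
    rw [← Finset.mul_sum, mul_assoc]
    apply mul_le_mul_of_nonneg_left _ (by positivity)
    rw [Finset.sum_add_distrib]
    have : ∑ x, g (x + 1) ^ p = ∑ x, g x ^ p := Equiv.sum_comp (Equiv.addRight (1 : Fin N → ZMod 2)) (fun x => g x ^ p)
    rw [this]; linarith

theorem cube (p : ℝ) (hp : 1 < p) : ∃ C : ℝ, 0 ≤ C ∧ ∀ (N : ℕ) (f : (Fin N → ZMod 2) → ℝ), (∀ x, 0 ≤ f x) →
    ∃ g : (Fin N → ZMod 2) → ℝ, (∀ x, 0 ≤ g x) ∧ (∀ r, r ≤ N → ∀ x, SS r f x ≤ g x) ∧ ∑ x, g x ^ p ≤ C * ∑ x, f x ^ p := by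
  set p0 : ℝ := min p (3/2) with hp0
  have h1 : 1 < p0 := lt_min hp (by norm_num)
  have h2 : p0 < 2 := lt_of_le_of_lt (min_le_right _ _) (by norm_num)
  have hθ : 1 ≤ p / p0 := by rw [le_div_iff₀ (by linarith)]; linarith [min_le_left p (3/2 : ℝ)]
  obtain ⟨C, hC, H⟩ := cube_lt2 p0 h1 h2
  refine ⟨C, hC, ?_⟩
  intro N f hf
  have hf' : ∀ x, 0 ≤ f x ^ (p / p0) := fun x => Real.rpow_nonneg (hf x) _
  obtain ⟨g, g0, g1, g2⟩ := H N (fun x => f x ^ (p / p0)) hf'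
  refine ⟨fun x => g x ^ (p0 / p), fun x => Real.rpow_nonneg (g0 x) _, ?_, ?_⟩
  · intro r hr x
    have h3 := (SS_jensen r (p / p0) hθ f hf x).trans (g1 r hr x)
    have h4 := Real.rpow_le_rpow (Real.rpow_nonneg (SS_nonneg r f hf x) _) h3 (show 0 ≤ p0 / p by positivity)
    rwa [← Real.rpow_mul (SS_nonneg r f hf x), show p / p0 * (p0 / p) = 1 by field_simp, Real.rpow_one] at h4
  · have e1 : ∀ x, (g x ^ (p0 / p)) ^ p = g x ^ p0 := by
      intro x; rw [← Real.rpow_mul (g0 x)]; congr 1; field_simp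
    have e2 : ∀ x, (f x ^ (p / p0)) ^ p0 = f x ^ p := by
      intro x; rw [← Real.rpow_mul (hf x)]; congr 1; field_simp
    simp only [e1]
    simpa only [e2] using g2

theorem transfer (p : ℝ) (hp : 1 < p) : ∃ C : ℝ, 0 ≤ C ∧ ∀ (N : ℕ) (X : Type) [Fintype X]
    (τ : (Fin N → ZMod 2) → X → X), (∀ a b z, τ (a + b) z = τ a (τ b z)) → (∀ z, τ 0 z = z) →
    ∀ f : X → ℝ, (∀ x, 0 ≤ f x) →
    ∃ g : X → ℝ, (∀ x, 0 ≤ g x) ∧ (∀ r, r ≤ N → ∀ z, sph r (fun T => f (τ (ind T) z)) ≤ g z) ∧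
      ∑ x, g x ^ p ≤ C * ∑ x, f x ^ p := by
  obtain ⟨C, hC, H⟩ := cube p hp
  refine ⟨C, hC, ?_⟩
  intro N X _ τ hτ hτ0 f hf
  set g : X → ℝ := fun z => (range (N+1)).sup' ⟨0, by simp⟩ (fun r => sph r (fun T => f (τ (ind T) z))) with hg
  have hle : ∀ r, r ≤ N → ∀ z, sph r (fun T => f (τ (ind T) z)) ≤ g z := fun r hr z =>
    Finset.le_sup' (fun r => sph r (fun T => f (τ (ind T) z))) (mem_range.2 (by omega))
  have hg0 : ∀ z, 0 ≤ g z := fun z => (sph_nonneg 0 _ fun T => hf _).trans (hle 0 (by omega) z)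
  refine ⟨g, hg0, hle, ?_⟩
  have hkey : ∀ z, ∑ S, g (τ S z) ^ p ≤ C * ∑ S, f (τ S z) ^ p := by
    intro z
    obtain ⟨G, G0, G1, G2⟩ := H N (fun S => f (τ S z)) (fun S => hf _)
    refine le_trans (Finset.sum_le_sum fun S _ => ?_) G2
    apply Real.rpow_le_rpow (hg0 _) _ (by linarith)
    apply Finset.sup'_le
    intro r hr
    have := G1 r (by rw [mem_range] at hr; omega) S
    simp only [SS] at this
    refine le_trans (le_of_eq ?_) this
    congr 1
    funext T
    rw [add_comm, hτ]
  have hinv : ∀ S, Function.Involutive (τ S) := by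
    intro S z
    rw [← hτ]
    have : S + S = 0 := by funext i; exact CharTwo.add_self_eq_zero _
    rw [this, hτ0]
  have hperm : ∀ (h : X → ℝ) S, ∑ z, h (τ S z) = ∑ z, h z := fun h S =>
    Equiv.sum_comp (hinv S).toPerm h
  have h1 : ∑ z, ∑ S, g (τ S z) ^ p ≤ ∑ z, C * ∑ S, f (τ S z) ^ p := Finset.sum_le_sum fun z _ => hkey z
  rw [← Finset.mul_sum, Finset.sum_comm, Finset.sum_comm (f := fun z S => f (τ S z) ^ p)] at h1
  simp only [hperm (fun z => g z ^ p), hperm (fun z => f z ^ p), Finset.sum_const, nsmul_eq_mul] at h1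
  have hc : (0:ℝ) < ((univ : Finset (Fin N → ZMod 2)).card : ℝ) := by
    exact_mod_cast Finset.card_pos.2 ⟨0, mem_univ _⟩
  refine le_of_mul_le_mul_left ?_ hc
  linarith

def rst {N : ℕ} {H : Type} [Zero H] (T : Finset (Fin N)) (y : Fin N → H) : Fin N → H := fun j => if j ∈ T then y j else 0

def wt {N : ℕ} {H : Type} [Zero H] [DecidableEq H] (v : Fin N → H) : ℕ := (univ.filter fun j => v j ≠ 0).card

theorem count_id {N : ℕ} {H : Type} [Zero H] [DecidableEq H] [Fintype H] (r : ℕ) (F : (Fin N → H) → ℝ) :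
    ∑ T ∈ powersetCard r (univ : Finset (Fin N)), ∑ y ∈ univ.filter (fun y : Fin N → H => ∀ j, y j ≠ 0), F (rst T y)
      = ((Fintype.card H - 1 : ℕ) : ℝ) ^ (N - r) * ∑ v ∈ univ.filter (fun v : Fin N → H => wt v = r), F v := by
  have hsupp : ∀ (T : Finset (Fin N)) (y : Fin N → H), (∀ j, y j ≠ 0) → univ.filter (fun j => rst T y j ≠ 0) = T := by
    intro T y hy
    ext j
    simp [rst, hy j]
  rw [← Finset.sum_product']
  rw [← Finset.sum_fiberwise_of_maps_to (t := univ.filter (fun v : Fin N → H => wt v = r)) (g := fun a => rst a.1 a.2)]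
  · rw [Finset.mul_sum]
    apply Finset.sum_congr rfl
    intro v hv
    have hv' : wt v = r := by simpa using hv
    have h1 : ∀ a ∈ ((powersetCard r (univ : Finset (Fin N)) ×ˢ univ.filter (fun y : Fin N → H => ∀ j, y j ≠ 0)).filter fun a => rst a.1 a.2 = v),
       F (rst a.1 a.2) = F v := by
      intro a ha; rw [(mem_filter.1 ha).2]
    rw [Finset.sum_congr rfl h1, Finset.sum_const, nsmul_eq_mul]
    congr 1
    have h2 : ((powersetCard r (univ : Finset (Fin N)) ×ˢ univ.filter (fun y : Fin N → H => ∀ j, y j ≠ 0)).filter fun a => rst a.1 a.2 = v).card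
      = (Fintype.piFinset (fun j => if v j = 0 then univ.filter (fun b : H => b ≠ 0) else {v j})).card := by
      refine Finset.card_nbij' (fun a => a.2) (fun y => (univ.filter (fun j => v j ≠ 0), y)) ?_ ?_ ?_ ?_
      · rintro ⟨T, y⟩ ha
        simp only [coe_filter, mem_product, mem_powersetCard, mem_filter, Set.mem_setOf_eq, mem_univ, true_and] at ha
        obtain ⟨⟨_, hy⟩, rfl⟩ := ha
        simp only [mem_coe, Fintype.mem_piFinset]
        intro j
        by_cases hj : j ∈ T <;> simp [rst, hj, hy j]
      · intro y hy
        simp only [mem_coe, Fintype.mem_piFinset] at hy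
        have hyj : ∀ j, y j ≠ 0 := by
          intro j
          have := hy j
          by_cases hj : v j = 0
          · simpa [hj] using this
          · simp [hj] at this; rwa [this]
        simp only [coe_filter, mem_product, mem_powersetCard, mem_filter, Set.mem_setOf_eq, mem_univ, true_and]
        refine ⟨⟨⟨subset_univ _, hv'⟩, hyj⟩, ?_⟩
        funext j
        have := hy j
        by_cases hj : v j = 0
        · simp [rst, hj]
        · simp [hj] at this; simp [rst, hj, this]
      · rintro ⟨T, y⟩ ha
        simp only [coe_filter, mem_product, mem_powersetCard, mem_filter, Set.mem_setOf_eq, mem_univ, true_and] at ha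
        obtain ⟨⟨_, hy⟩, rfl⟩ := ha
        simp only [hsupp T y hy]
      · intro y _; rfl
    rw [h2, Fintype.card_piFinset]
    have h3 : ∀ j, (if v j = 0 then univ.filter (fun b : H => b ≠ 0) else {v j}).card = if v j = 0 then Fintype.card H - 1 else 1 := by
      intro j
      split_ifs
      · rw [Finset.filter_ne', card_erase_of_mem (mem_univ _), card_univ]
      · simp
    simp only [h3]
    rw [Finset.prod_ite, prod_const, prod_const_one, mul_one]
    push_cast
    congr 1
    have h4 := Finset.card_filter_add_card_filter_not (s := (univ : Finset (Fin N))) (fun j => v j = 0)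
    rw [card_univ, Fintype.card_fin] at h4
    unfold wt at hv'
    have h5 : (univ.filter fun j => ¬ v j = 0).card = r := hv'
    omega
  · rintro ⟨T, y⟩ ha
    simp only [mem_product, mem_powersetCard, mem_filter, mem_univ, true_and] at ha ⊢
    rw [wt, hsupp T y ha.2]; exact ha.1.2

theorem block (p : ℝ) (hp : 1 < p) : ∃ C : ℝ, 0 ≤ C ∧ ∀ (N : ℕ) (H A : Type) [AddCommGroup H] [Fintype H] [DecidableEq H]
    [Nontrivial H] [AddCommGroup A] [Fintype A] (φ : (Fin N → H) →+ A) (f : A → ℝ), (∀ x, 0 ≤ f x) →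
    ∃ g : A → ℝ, (∀ x, 0 ≤ g x) ∧ (∀ r x, ∑ v ∈ univ.filter (fun v : Fin N → H => wt v = r), f (x - φ v) ≤
        ((univ.filter (fun v : Fin N → H => wt v = r)).card : ℝ) * g x) ∧
      ∑ x, g x ^ p ≤ C * ∑ x, f x ^ p := by
  obtain ⟨C, hC, HT⟩ := transfer p hp
  refine ⟨C, hC, ?_⟩
  intro N H A _ _ _ _ _ _ φ f hf
  set Y : Finset (Fin N → H) := univ.filter (fun y : Fin N → H => ∀ j, y j ≠ 0) with hY
  have hYpos : (0:ℝ) < (Y.card : ℝ) := by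
    obtain ⟨b, hb⟩ := exists_ne (0 : H)
    exact_mod_cast Finset.card_pos.2 ⟨fun _ => b, by simp [hY, hb]⟩
  let τ : (Fin N → ZMod 2) → A × (Fin N → H) → A × (Fin N → H) := fun S z =>
    (z.1 - φ (fun j => if S j = 1 then z.2 j else 0), fun j => if S j = 1 then - z.2 j else z.2 j)
  have h01 : (0:ZMod 2) ≠ 1 := by decide
  have h11 : (1:ZMod 2) + 1 ≠ 1 := by decide
  have hcase : ∀ a : ZMod 2, a = 0 ∨ a = 1 := by decide
  have hτ : ∀ a b z, τ (a + b) z = τ a (τ b z) := by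
    rintro a b ⟨x, y⟩
    simp only [τ, Prod.mk.injEq]
    refine ⟨?_, ?_⟩
    · rw [sub_sub, ← map_add]
      congr 2
      funext j
      simp only [Pi.add_apply]
      rcases hcase (a j) with h | h <;> rcases hcase (b j) with h' | h' <;> simp [h, h']
    · funext j
      simp only [Pi.add_apply]
      rcases hcase (a j) with h | h <;> rcases hcase (b j) with h' | h' <;> simp [h, h']
  have hτ0 : ∀ z, τ 0 z = z := by
    rintro ⟨x, y⟩
    have : (fun _ : Fin N => (0:H)) = 0 := rfl
    simp [τ, this]
  let F : A × (Fin N → H) → ℝ := fun z => if z.2 ∈ Y then f z.1 else 0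
  have hF : ∀ z, 0 ≤ F z := by
    intro z; simp only [F]; split_ifs
    · exact hf _
    · exact le_rfl
  obtain ⟨G, G0, G1, G2⟩ := HT N (A × (Fin N → H)) τ hτ hτ0 F hF
  have hFτ : ∀ T x y, y ∈ Y → F (τ (ind T) (x, y)) = f (x - φ (rst T y)) := by
    intro T x y hy
    have hy' : ∀ j, y j ≠ 0 := by simpa [hY] using hy
    have h1 : (τ (ind T) (x, y)).2 ∈ Y := by
      simp only [hY, mem_filter, mem_univ, true_and, τ]
      intro j
      split_ifs
      · exact neg_ne_zero.2 (hy' j)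
      · exact hy' j
    simp only [F, if_pos h1]
    simp only [τ]
    congr 3
    funext j
    simp only [ind, rst]
    by_cases hj : j ∈ T <;> simp [hj]
  refine ⟨fun x => ∑ y ∈ Y, (1 / (Y.card : ℝ)) * G (x, y), fun x => Finset.sum_nonneg fun y _ => mul_nonneg (by positivity) (G0 _), ?_, ?_⟩
  · intro r x
    by_cases hr : r ≤ N
    · have hb : (0:ℝ) < (N.choose r : ℝ) := by exact_mod_cast Nat.choose_pos hr
      have hc1 : (0:ℝ) < ((Fintype.card H - 1 : ℕ) : ℝ) ^ (N - r) := by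
        have : 1 < Fintype.card H := Fintype.one_lt_card
        have : (0:ℝ) < ((Fintype.card H - 1 : ℕ) : ℝ) := by exact_mod_cast (by omega : 0 < Fintype.card H - 1)
        positivity
      have i1 := count_id r (fun v : Fin N → H => f (x - φ v))
      have i2 := count_id r (fun _ : Fin N → H => (1:ℝ))
      simp only [Finset.sum_const, card_powersetCard, card_univ, Fintype.card_fin, nsmul_eq_mul, mul_one] at i2
      rw [← hY] at i1 i2
      have hs : ∑ T ∈ powersetCard r (univ : Finset (Fin N)), ∑ y ∈ Y, f (x - φ (rst T y)) ≤ N.choose r * ∑ y ∈ Y, G (x, y) := by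
        rw [Finset.sum_comm, Finset.mul_sum]
        apply Finset.sum_le_sum
        intro y hy
        have := G1 r hr (x, y)
        simp only [sph, hFτ _ x y hy] at this
        rw [div_le_iff₀ hb] at this
        linarith
      rw [i1] at hs
      refine le_of_mul_le_mul_left ?_ hc1
      refine hs.trans (le_of_eq ?_)
      dsimp only
      rw [← Finset.mul_sum, ← mul_assoc, ← i2]
      field_simp
    · have : univ.filter (fun v : Fin N → H => wt v = r) = ∅ := by
        apply Finset.filter_eq_empty_iff.2
        intro v _ h
        have : wt v ≤ N := by
          have := Finset.card_le_univ (univ.filter fun j => v j ≠ 0)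
          simpa [wt] using this
        omega
      rw [this]; simp
  · have hJ : ∀ x, (∑ y ∈ Y, (1 / (Y.card : ℝ)) * G (x, y)) ^ p ≤ ∑ y ∈ Y, (1 / (Y.card : ℝ)) * G (x, y) ^ p := by
      intro x
      refine Real.rpow_arith_mean_le_arith_mean_rpow _ _ _ (fun _ _ => by positivity) ?_ (fun y _ => G0 _) hp.le
      rw [Finset.sum_const, nsmul_eq_mul]; field_simp
    refine (Finset.sum_le_sum fun x _ => hJ x).trans ?_
    simp only [← Finset.mul_sum]
    rw [one_div, ← div_eq_inv_mul, div_le_iff₀ hYpos]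
    have h1 : ∑ x, ∑ y ∈ Y, G (x, y) ^ p ≤ ∑ z, G z ^ p := by
      rw [Fintype.sum_prod_type]
      apply Finset.sum_le_sum
      intro x _
      exact Finset.sum_le_sum_of_subset_of_nonneg (subset_univ _) fun y _ _ => Real.rpow_nonneg (G0 _) _
    refine h1.trans (G2.trans (le_of_eq ?_))
    rw [Fintype.sum_prod_type, mul_assoc, Finset.sum_mul]
    congr 1
    apply Finset.sum_congr rfl
    intro x _
    have : ∀ y, F (x, y) ^ p = if y ∈ Y then f x ^ p else 0 := by
      intro y
      simp only [F]
      split_ifs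
      · rfl
      · exact Real.zero_rpow (by linarith)
    simp only [this]
    rw [Finset.sum_ite_mem, Finset.univ_inter, Finset.sum_const, nsmul_eq_mul, mul_comm]

def SetI {n : ℕ} (Nf : Fin n → ℕ) (I : Finset (Fin n)) (r : Fin n → ℕ) : Finset (DSum n Nf) :=
  univ.filter fun y => (∀ i ∈ I, wt (y i) = r i) ∧ ∀ i, i ∉ I → y i = 0

theorem SetI_insert {n : ℕ} (Nf : Fin n → ℕ) (I : Finset (Fin n)) (a : Fin n) (ha : a ∉ I) (r : Fin n → ℕ)
    (F : DSum n Nf → ℝ) :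
    ∑ y ∈ SetI Nf (insert a I) r, F y =
      ∑ y ∈ SetI Nf I r, ∑ v ∈ univ.filter (fun v : Fin (Nf a) → ZMod (a.val + 2) => wt v = r a), F (y + Pi.single a v) := by
  rw [← Finset.sum_product']
  have hup : ∀ y : DSum n Nf, Function.update y a 0 + Pi.single a (y a) = y := by
    intro y
    funext i
    by_cases h : i = a
    · subst h; simp
    · simp [h]
  refine Finset.sum_nbij' (fun y => (Function.update y a 0, y a)) (fun q => q.1 + Pi.single a q.2) ?_ ?_ ?_ ?_ ?_
  · intro y hy
    simp only [SetI, mem_filter, mem_univ, true_and, mem_product, mem_insert] at hy ⊢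
    refine ⟨⟨?_, ?_⟩, hy.1 a (Or.inl rfl)⟩
    · intro i hi
      have : i ≠ a := fun h => ha (h ▸ hi)
      rw [Function.update_of_ne this]
      exact hy.1 i (Or.inr hi)
    · intro i hi
      by_cases h : i = a
      · subst h; simp
      · rw [Function.update_of_ne h]
        exact hy.2 i (by simp [h, hi])
  · rintro ⟨y, v⟩ hy
    simp only [SetI, mem_filter, mem_univ, true_and, mem_product, mem_insert] at hy ⊢
    obtain ⟨⟨h1, h2⟩, h3⟩ := hy
    refine ⟨?_, ?_⟩
    · intro i hi
      by_cases h : i = a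
      · subst h
        simp [h2 i ha, h3]
      · simp [h, h1 i (hi.resolve_left h)]
    · intro i hi
      push Not at hi
      simp [hi.1, h2 i hi.2]
  · intro y _; exact hup y
  · rintro ⟨y, v⟩ hy
    simp only [SetI, mem_filter, mem_univ, true_and, mem_product] at hy
    obtain ⟨⟨h1, h2⟩, h3⟩ := hy
    simp only [Prod.mk.injEq]
    refine ⟨?_, ?_⟩
    · funext i
      by_cases h : i = a
      · subst h; simp [h2 i ha]
      · simp [h]
    · simp [h2 a ha]
  · intro y _
    rw [hup]

theorem blocks (p : ℝ) (hp : 1 < p) : ∃ C : ℝ, 0 ≤ C ∧ ∀ (n : ℕ) (Nf : Fin n → ℕ) (I : Finset (Fin n)) (f : DSum n Nf → ℝ),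
    (∀ x, 0 ≤ f x) → ∃ g : DSum n Nf → ℝ, (∀ x, 0 ≤ g x) ∧
      (∀ r x, ∑ y ∈ SetI Nf I r, f (x - y) ≤ ((SetI Nf I r).card : ℝ) * g x) ∧
      ∑ x, g x ^ p ≤ C ^ I.card * ∑ x, f x ^ p := by
  obtain ⟨C, hC, H⟩ := block p hp
  refine ⟨C, hC, ?_⟩
  intro n Nf I
  induction I using Finset.induction_on with
  | empty =>
    intro f hf
    refine ⟨f, hf, ?_, by simp⟩
    intro r x
    have : SetI Nf ∅ r = {0} := by
      ext y
      simp [SetI, funext_iff]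
    rw [this]; simp
  | insert a I ha ih =>
    intro f hf
    have : Fact (1 < a.val + 2) := ⟨by omega⟩
    obtain ⟨g1, g10, g11, g12⟩ := H (Nf a) (ZMod (a.val + 2)) (DSum n Nf)
      (AddMonoidHom.single (fun i : Fin n => Fin (Nf i) → ZMod (i.val + 2)) a) f hf
    obtain ⟨g, g0, gg1, g2⟩ := ih g1 g10
    refine ⟨g, g0, ?_, ?_⟩
    · intro r x
      have e1 := SetI_insert Nf I a ha r (fun y => f (x - y))
      have e2 := SetI_insert Nf I a ha r (fun _ => (1:ℝ))
      simp only [Finset.sum_const, nsmul_eq_mul, mul_one] at e2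
      rw [e1, e2]
      have h1 : ∀ y ∈ SetI Nf I r, ∑ v ∈ univ.filter (fun v : Fin (Nf a) → ZMod (a.val + 2) => wt v = r a), f (x - (y + Pi.single a v))
        ≤ ((univ.filter (fun v : Fin (Nf a) → ZMod (a.val + 2) => wt v = r a)).card : ℝ) * g1 (x - y) := by
        intro y _
        have := g11 (r a) (x - y)
        simpa only [sub_sub, AddMonoidHom.single_apply] using this
      refine (Finset.sum_le_sum h1).trans ?_
      rw [← Finset.mul_sum]
      have h2 := mul_le_mul_of_nonneg_left (gg1 r x)
        (show (0:ℝ) ≤ ((univ.filter (fun v : Fin (Nf a) → ZMod (a.val + 2) => wt v = r a)).card : ℝ) by positivity)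
      refine h2.trans (le_of_eq ?_)
      ring
    · rw [card_insert_of_notMem ha, pow_succ, mul_assoc]
      exact g2.trans (mul_le_mul_of_nonneg_left g12 (by positivity))

theorem sphere_le {n : ℕ} {Nf : Fin n → ℕ} (f g : DSum n Nf → ℝ)
    (h : ∀ r x, ∑ y ∈ SetI Nf univ r, f (x - y) ≤ ((SetI Nf univ r).card : ℝ) * g x) (r : ℕ) (x : DSum n Nf) :
    ∑ y ∈ univ.filter (fun y : DSum n Nf => weightA y = r), f (x - y) ≤
      ((univ.filter (fun y : DSum n Nf => weightA y = r)).card : ℝ) * g x := by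
  set s := univ.filter (fun y : DSum n Nf => weightA y = r) with hs
  set pr : DSum n Nf → (Fin n → ℕ) := fun y i => wt (y i) with hpr
  have hm : ∀ y ∈ s, pr y ∈ s.image pr := fun y hy => mem_image_of_mem _ hy
  rw [← Finset.sum_fiberwise_of_maps_to hm, Finset.card_eq_sum_card_fiberwise hm]
  push_cast
  rw [Finset.sum_mul]
  apply Finset.sum_le_sum
  intro ρ hρ
  obtain ⟨y0, hy0, rfl⟩ := mem_image.1 hρ
  have : (s.filter fun y => pr y = pr y0) = SetI Nf univ (pr y0) := by
    ext y
    have hw : ∀ y : DSum n Nf, weightA y = ∑ i, wt (y i) := fun y => rfl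
    simp only [hs, mem_filter, mem_univ, true_and, hw] at hy0
    simp only [hs, SetI, mem_filter, mem_univ, true_and, hw, not_true, false_imp_iff, implies_true, and_true, forall_const]
    constructor
    · rintro ⟨_, h⟩ i; exact congrFun h i
    · intro h
      refine ⟨?_, funext h⟩
      rw [← hy0]
      exact Finset.sum_congr rfl fun i _ => h i
  rw [this]
  exact h (pr y0) x

theorem statement1 (p : ℝ) (hp : 1 < p) (n : ℕ) (hn : 1 ≤ n) :
    ∃ C : ℝ, ∀ Nf : Fin n → ℕ, ∀ f : DSum n Nf → ℂ,
      (∑ x, maxA f x ^ p) ^ (1 / p) ≤ C * (∑ x, ‖f x‖ ^ p) ^ (1 / p) := by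
  obtain ⟨C, hC, H⟩ := blocks p hp
  refine ⟨(C ^ n) ^ (1 / p), ?_⟩
  intro Nf f
  obtain ⟨g, g0, g1, g2⟩ := H n Nf univ (fun x => ‖f x‖) (fun x => norm_nonneg _)
  have hmax : ∀ x, maxA f x ≤ g x := by
    intro x
    have : ((Finset.range ((∑ i, Nf i) + 1)).filter fun r =>
        1 ≤ r ∧ ∃ z : DSum n Nf, weightA z = r).sup (fun r =>
      ‖convA (sigmaA n Nf r) f x‖₊) ≤ Real.toNNReal (g x) := by
      apply Finset.sup_le
      intro r hr
      obtain ⟨z, hz⟩ := (mem_filter.1 hr).2.2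
      refine (Real.le_toNNReal_iff_coe_le (g0 x)).2 ?_
      rw [coe_nnnorm]
      set s := univ.filter (fun y : DSum n Nf => weightA y = r) with hs
      have hpos : (0:ℝ) < (s.card : ℝ) := by
        exact_mod_cast Finset.card_pos.2 ⟨z, by simp [hs, hz]⟩
      have h1 : ‖convA (sigmaA n Nf r) f x‖ ≤ ∑ y ∈ s, (s.card : ℝ)⁻¹ * ‖f (x - y)‖ := by
        rw [convA]
        refine (norm_sum_le _ _).trans (le_of_eq ?_)
        rw [hs, Finset.sum_filter]
        apply Finset.sum_congr rfl
        intro y _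
        rw [sigmaA]
        split_ifs
        · rw [norm_mul, norm_inv, Complex.norm_natCast]
        · simp
      refine h1.trans ?_
      rw [← Finset.mul_sum, ← div_eq_inv_mul, div_le_iff₀ hpos, mul_comm]
      exact sphere_le (fun x => ‖f x‖) g g1 r x
    exact (Real.le_toNNReal_iff_coe_le (g0 x)).1 this
  have hm0 : ∀ x, 0 ≤ maxA f x := fun x => NNReal.coe_nonneg _
  have hF0 : 0 ≤ ∑ x, ‖f x‖ ^ p := Finset.sum_nonneg fun x _ => Real.rpow_nonneg (norm_nonneg _) _
  rw [← Real.mul_rpow (by positivity) hF0]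
  apply Real.rpow_le_rpow (Finset.sum_nonneg fun x _ => Real.rpow_nonneg (hm0 x) _) _ (by positivity)
  rw [card_univ, Fintype.card_fin] at g2
  exact (Finset.sum_le_sum fun x _ => Real.rpow_le_rpow (hm0 x) (hmax x) (by linarith)).trans g2
end
end

section
/- For every integer m ≥ 2 there exists a constant C = C(m), independent of N, such that for every integer N ≥ 1, every f : G → ℂ, and every λ > 0, #{x ∈ G : M_S^L f(x) > λ} ≤ C · λ^{−1} · Σ_{x ∈ G} |f(x)|. -/
open Finset

noncomputable section

/-- Hamming weight on `(ℤ/(m+1)ℤ)^N`. -/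
def hw {m N : ℕ} (y : Fin N → ZMod (m + 1)) : ℕ :=
  (Finset.univ.filter fun i => y i ≠ 0).card

/-- `L¹`-normalized indicator of the sphere of radius `r` (zero if `r < 0` or `r > N`). -/
def sigmaC (m N : ℕ) (r : ℤ) : (Fin N → ZMod (m + 1)) → ℂ := fun x =>
  if (hw x : ℤ) = r then
    ((Finset.univ.filter fun y : Fin N → ZMod (m + 1) => (hw y : ℤ) = r).card : ℂ)⁻¹
  else 0

/-- Convolution on `(ℤ/(m+1)ℤ)^N`. -/
def convC {m N : ℕ} (g f : (Fin N → ZMod (m + 1)) → ℂ) : (Fin N → ZMod (m + 1)) → ℂ :=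
  fun x => ∑ y, g y * f (x - y)

/-- The smooth local spherical maximal function
`M_S^L f (x) = max_{0 ≤ L ≤ c_m N} (1/(L+1)) |Σ_{k=0}^L (σ_k * f)(x)|`.
Note that the integers `L` with `0 ≤ L ≤ c_m·N = m·N/(m+1)` are exactly those with
`L ≤ ⌊m·N/(m+1)⌋ = (m*N)/(m+1)` (natural division). -/
def smoothLocalMax (m N : ℕ) (f : (Fin N → ZMod (m + 1)) → ℂ) (x : Fin N → ZMod (m + 1)) : ℝ :=
  (Finset.range ((m * N) / (m + 1) + 1)).sup' Finset.nonempty_range_add_one fun L =>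
    (1 / ((L : ℝ) + 1)) * ‖∑ k ∈ Finset.range (L + 1), convC (sigmaC m N (k : ℤ)) f x‖


section Erg

variable {X : Type*}

lemma erg_partial (T : (X → ℝ) →ₗ[ℝ] (X → ℝ)) (g : X → ℝ) (n : ℕ) :
    ∑ j ∈ Finset.range (n + 1), (T ^ j) g = g + T (∑ j ∈ Finset.range n, (T ^ j) g) := by
  rw [Finset.sum_range_succ', map_sum, add_comm]
  simp [pow_succ']

variable [Fintype X]

/-- maximal ergodic lemma -/
lemma erg_hopf (T : (X → ℝ) →ₗ[ℝ] (X → ℝ)) (hpos : ∀ f : X → ℝ, 0 ≤ f → 0 ≤ T f)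
    (hsum : ∀ f : X → ℝ, ∑ x, T f x = ∑ x, f x) (g : X → ℝ) (K : ℕ) (E : Finset X)
    (hE : ∀ x, x ∈ E ↔ ∃ n ∈ Finset.range (K + 1), 0 < (∑ j ∈ Finset.range n, (T ^ j) g) x) :
    0 ≤ ∑ x ∈ E, g x := by
  classical
  set S : ℕ → X → ℝ := fun n => ∑ j ∈ Finset.range n, (T ^ j) g with hS
  set M : X → ℝ := fun x => (Finset.range (K + 1)).sup' Finset.nonempty_range_add_one
    (fun n => S n x) with hM
  have hSM : ∀ n ∈ Finset.range (K + 1), S n ≤ M := fun n hn x =>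
    Finset.le_sup' (fun n => S n x) hn
  have hM0 : 0 ≤ M := by
    have := hSM 0 (by simp)
    simpa [hS] using this
  have hTM : 0 ≤ T M := hpos _ hM0
  have h1 : ∀ x ∈ E, M x ≤ g x + T M x := by
    intro x hx
    rw [hE] at hx
    obtain ⟨n0, hn0, hn0'⟩ := hx
    obtain ⟨n, hn, hnM⟩ := Finset.exists_mem_eq_sup' (Finset.nonempty_range_add_one (n := K))
      (fun n => S n x)
    have hMx : M x = S n x := hnM
    have hpos' : 0 < S n x := by
      rw [← hMx]; exact lt_of_lt_of_le hn0' (hSM n0 hn0 x)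
    rcases n with _ | n
    · simp [hS] at hpos'
    · have h2 : S (n + 1) = g + T (S n) := erg_partial T g n
      have h3 : 0 ≤ T (M - S n) := hpos _ (sub_nonneg.mpr (hSM n (by
        simp only [Finset.mem_range] at hn ⊢; omega)))
      have h4 := h3 x
      rw [map_sub] at h4
      simp only [Pi.zero_apply, Pi.sub_apply] at h4
      rw [hMx, h2, Pi.add_apply]
      linarith
  have h2 : ∀ x, x ∉ E → M x = 0 := by
    intro x hx
    apply le_antisymm _ (hM0 x)
    apply Finset.sup'_le
    intro n hn
    by_contra hcon
    apply hx
    rw [hE]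
    exact ⟨n, hn, not_le.mp hcon⟩
  have h3 : ∑ x ∈ E, M x = ∑ x, M x :=
    Finset.sum_subset (Finset.subset_univ _) (fun x _ hx => h2 x hx)
  have h4 : ∑ x ∈ E, T M x ≤ ∑ x, T M x :=
    Finset.sum_le_sum_of_subset_of_nonneg (Finset.subset_univ _) (fun x _ _ => hTM x)
  have h5 : ∑ x ∈ E, M x ≤ ∑ x ∈ E, (g x + T M x) := Finset.sum_le_sum h1
  rw [Finset.sum_add_distrib] at h5
  have := hsum M
  linarith

lemma erg_weak (T : (X → ℝ) →ₗ[ℝ] (X → ℝ)) (hpos : ∀ f : X → ℝ, 0 ≤ f → 0 ≤ T f)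
    (hsum : ∀ f : X → ℝ, ∑ x, T f x = ∑ x, f x) (hone : T (fun _ => 1) = fun _ => 1)
    (f : X → ℝ) (hf : 0 ≤ f) (lam : ℝ) (K : ℕ) (E : Finset X)
    (hE : ∀ x, x ∈ E ↔ ∃ n ∈ Finset.range (K + 1),
      (n : ℝ) * lam < (∑ j ∈ Finset.range n, (T ^ j) f) x) :
    (E.card : ℝ) * lam ≤ ∑ x, f x := by
  classical
  have hpow : ∀ j : ℕ, (T ^ j) (fun _ => (1 : ℝ)) = fun _ => 1 := by
    intro j
    induction j with
    | zero => simp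
    | succ j ih => rw [pow_succ', Module.End.mul_apply, ih, hone]
  have key : ∀ n x, (∑ j ∈ Finset.range n, (T ^ j) (f - lam • (fun _ => (1 : ℝ)))) x
      = (∑ j ∈ Finset.range n, (T ^ j) f) x - n * lam := by
    intro n x
    simp only [map_sub, map_smul, hpow, Finset.sum_sub_distrib]
    simp [mul_comm]
  have h := erg_hopf T hpos hsum (f - lam • (fun _ => (1 : ℝ))) K E (by
    intro x; simp only [key, sub_pos]; exact hE x)
  simp only [Pi.sub_apply, Pi.smul_apply, smul_eq_mul, mul_one, Finset.sum_sub_distrib,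
    Finset.sum_const, nsmul_eq_mul] at h
  refine (sub_nonneg.mp h).trans ?_
  exact Finset.sum_le_sum_of_subset_of_nonneg (Finset.subset_univ _) (fun x _ _ => hf x)

end Erg

section Walk

variable {m N : ℕ}

def walkT (m N : ℕ) : ((Fin N → ZMod (m + 1)) → ℝ) →ₗ[ℝ] ((Fin N → ZMod (m + 1)) → ℝ) where
  toFun f := fun x => ((N : ℝ) * (m + 1))⁻¹ * ∑ i, ∑ c, f (x + Pi.single i c)
  map_add' f g := by
    funext x
    simp [Finset.sum_add_distrib, mul_add]
  map_smul' a f := by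
    funext x
    simp only [Pi.smul_apply, smul_eq_mul, ← Finset.mul_sum, RingHom.id_apply]
    ring

lemma walkT_apply (f : (Fin N → ZMod (m + 1)) → ℝ) (x : Fin N → ZMod (m + 1)) :
    walkT m N f x = ((N : ℝ) * (m + 1))⁻¹ * ∑ i, ∑ c, f (x + Pi.single i c) := rfl

lemma walkT_pos (f : (Fin N → ZMod (m + 1)) → ℝ) (hf : 0 ≤ f) : 0 ≤ walkT m N f := by
  intro x
  rw [walkT_apply]
  exact mul_nonneg (by positivity)
    (Finset.sum_nonneg fun i _ => Finset.sum_nonneg fun c _ => hf _)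

lemma walkT_one (hN : 1 ≤ N) : walkT m N (fun _ => 1) = fun _ => 1 := by
  funext x
  rw [walkT_apply]
  have : (N : ℝ) ≠ 0 := by positivity
  have : (m : ℝ) + 1 ≠ 0 := by positivity
  simp [ZMod.card]
  field_simp

lemma walkT_adj (f g : (Fin N → ZMod (m + 1)) → ℝ) :
    ∑ x, f x * walkT m N g x = ∑ x, walkT m N f x * g x := by
  simp only [walkT_apply]
  have h : ∀ i : Fin N, ∀ c : ZMod (m + 1), ∑ x, f x * g (x + Pi.single i c)
      = ∑ x, f (x + Pi.single i (-c)) * g x := by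
    intro i c
    refine Fintype.sum_equiv (Equiv.addRight (Pi.single i c)) _ _ ?_
    intro x
    simp [Pi.single_neg]
  have h1 : ∀ x, f x * (((N : ℝ) * (m + 1))⁻¹ * ∑ i, ∑ c, g (x + Pi.single i c))
      = ((N : ℝ) * (m + 1))⁻¹ * ∑ i, ∑ c, f x * g (x + Pi.single i c) := by
    intro x; simp only [← Finset.mul_sum]; ring
  have h2 : ∀ x, (((N : ℝ) * (m + 1))⁻¹ * ∑ i, ∑ c, f (x + Pi.single i c)) * g x
      = ((N : ℝ) * (m + 1))⁻¹ * ∑ i, ∑ c, f (x + Pi.single i c) * g x := by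
    intro x; simp only [← Finset.sum_mul]; ring
  rw [Finset.sum_congr rfl fun x _ => h1 x, Finset.sum_congr rfl fun x _ => h2 x,
    ← Finset.mul_sum, ← Finset.mul_sum]
  congr 1
  rw [Finset.sum_comm, Finset.sum_comm (s := Finset.univ (α := Fin N → ZMod (m + 1)))]
  refine Finset.sum_congr rfl fun i _ => ?_
  rw [Finset.sum_comm, Finset.sum_comm (s := Finset.univ (α := Fin N → ZMod (m + 1)))]
  simp only [h]
  exact Fintype.sum_equiv (Equiv.neg _) _ _ (fun c => by simp)

lemma walkT_sum (hN : 1 ≤ N) (f : (Fin N → ZMod (m + 1)) → ℝ) :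
    ∑ x, walkT m N f x = ∑ x, f x := by
  have := walkT_adj (m := m) (N := N) (fun _ => 1) f
  rw [walkT_one hN] at this
  simpa using this

lemma walkT_update (f : (Fin N → ZMod (m + 1)) → ℝ) (x : Fin N → ZMod (m + 1)) :
    walkT m N f x = ((N : ℝ) * (m + 1))⁻¹ * ∑ i, ∑ c, f (Function.update x i c) := by
  rw [walkT_apply]
  congr 1
  refine Finset.sum_congr rfl fun i _ => ?_
  refine Fintype.sum_equiv (Equiv.addLeft (x i)) _ _ ?_
  intro c
  congr 1
  funext k
  by_cases hk : k = i
  · subst hk; simp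
  · simp [hk]

lemma hw_eq_sum (x : Fin N → ZMod (m + 1)) :
    hw x = ∑ i, if x i ≠ 0 then 1 else 0 := by
  simp [hw, Finset.card_filter]

lemma hw_update (x : Fin N → ZMod (m + 1)) (i : Fin N) (c : ZMod (m + 1)) :
    hw (Function.update x i c) + (if x i ≠ 0 then 1 else 0) = hw x + (if c ≠ 0 then 1 else 0) := by
  rw [hw_eq_sum, hw_eq_sum, ← Finset.add_sum_erase _ _ (Finset.mem_univ i),
    ← Finset.add_sum_erase (a := i) Finset.univ (fun j => if x j ≠ 0 then 1 else 0)
      (Finset.mem_univ i)]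
  have : ∑ j ∈ Finset.univ.erase i, (if Function.update x i c j ≠ 0 then 1 else 0)
      = ∑ j ∈ Finset.univ.erase i, (if x j ≠ 0 then 1 else 0) := by
    refine Finset.sum_congr rfl fun j hj => ?_
    rw [Function.update_of_ne (Finset.ne_of_mem_erase hj)]
  rw [this, Function.update_self]
  ring

lemma hw_le (x : Fin N → ZMod (m + 1)) : hw x ≤ N := by
  unfold hw
  exact (Finset.card_le_univ _).trans (by simp)

lemma sum_ne_zero_ind : ∑ c : ZMod (m + 1), (if c ≠ 0 then (1 : ℝ) else 0) = m := by
  have : ∀ c : ZMod (m + 1), (if c ≠ 0 then (1 : ℝ) else 0) = 1 - if c = 0 then 1 else 0 := by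
    intro c; by_cases h : c = 0 <;> simp [h]
  simp only [this, Finset.sum_sub_distrib]
  simp [ZMod.card]

lemma walkT_hw (hN : 1 ≤ N) (x : Fin N → ZMod (m + 1)) :
    walkT m N (fun y => (hw y : ℝ)) x = hw x + m / (m + 1) - hw x / N := by
  rw [walkT_update]
  have h : ∀ i c, (hw (Function.update x i c) : ℝ)
      = hw x + (if c ≠ 0 then 1 else 0) - (if x i ≠ 0 then 1 else 0) := by
    intro i c
    have := hw_update x i c
    rw [eq_sub_iff_add_eq]
    exact_mod_cast this
  have hs : ∑ i, (if x i ≠ 0 then (1 : ℝ) else 0) = hw x := by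
    rw [hw_eq_sum]; push_cast; rfl
  simp only [h, Finset.sum_sub_distrib, Finset.sum_add_distrib, sum_ne_zero_ind]
  simp only [Finset.sum_const, nsmul_eq_mul, ← Finset.mul_sum, hs]
  have : (N : ℝ) ≠ 0 := by positivity
  have : (m : ℝ) + 1 ≠ 0 := by positivity
  simp [ZMod.card]
  field_simp

def walkMu (m N : ℕ) (j : ℕ) : (Fin N → ZMod (m + 1)) → ℝ :=
  (walkT m N ^ j) (fun x => if x = 0 then 1 else 0)

lemma walkMu_zero : walkMu m N 0 = fun x => if x = 0 then 1 else 0 := by simp [walkMu]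

lemma walkMu_succ (j : ℕ) : walkMu m N (j + 1) = walkT m N (walkMu m N j) := by
  simp [walkMu, pow_succ']

lemma walkMu_nonneg (j : ℕ) : 0 ≤ walkMu m N j := by
  induction j with
  | zero => rw [walkMu_zero]; intro x; simp only [Pi.zero_apply]; split_ifs <;> norm_num
  | succ j ih => rw [walkMu_succ]; exact walkT_pos _ ih

lemma walkMu_sum (hN : 1 ≤ N) (j : ℕ) : ∑ x, walkMu m N j x = 1 := by
  induction j with
  | zero => rw [walkMu_zero]; simp
  | succ j ih => rw [walkMu_succ, walkT_sum hN, ih]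

lemma walk_conv (F : (Fin N → ZMod (m + 1)) → ℝ) (j : ℕ) (x : Fin N → ZMod (m + 1)) :
    (walkT m N ^ j) F x = ∑ y, walkMu m N j y * F (x - y) := by
  induction j generalizing x with
  | zero => rw [walkMu_zero]; simp
  | succ j ih =>
    rw [pow_succ', Module.End.mul_apply, walkMu_succ]
    simp only [walkT_apply, ih]
    have h1 : ∀ y : Fin N → ZMod (m + 1), (((N : ℝ) * (m + 1))⁻¹ * ∑ i, ∑ c, walkMu m N j (y + Pi.single i c)) * F (x - y)
        = ((N : ℝ) * (m + 1))⁻¹ * ∑ i, ∑ c, walkMu m N j (y + Pi.single i c) * F (x - y) := by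
      intro y; simp only [← Finset.sum_mul]; ring
    rw [Finset.sum_congr rfl fun y _ => h1 y, ← Finset.mul_sum]
    congr 1
    symm
    rw [Finset.sum_comm]
    refine Finset.sum_congr rfl fun i _ => ?_
    rw [Finset.sum_comm]
    refine Finset.sum_congr rfl fun c _ => ?_
    refine Fintype.sum_equiv (Equiv.addRight (Pi.single i c)) _ _ ?_
    intro y
    simp only [Equiv.coe_addRight]
    congr 2
    abel

lemma walkMu_radial (j : ℕ) : ∃ F : ℕ → ℝ, ∀ x, walkMu m N j x = F (hw x) := by
  induction j with
  | zero =>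
    refine ⟨fun k => if k = 0 then 1 else 0, fun x => ?_⟩
    have : hw x = 0 ↔ x = 0 := by
      simp [hw, Finset.filter_eq_empty_iff, funext_iff]
    simp [walkMu_zero, this]
  | succ j ih =>
    obtain ⟨F, hF⟩ := ih
    refine ⟨fun w => ((N : ℝ) * (m + 1))⁻¹ * ∑ i : Fin N,
      (w * (∑ c : ZMod (m + 1), if c ≠ 0 then F w else F (w - 1)) / N +
       (1 - w / N) * (∑ c : ZMod (m + 1), if c ≠ 0 then F (w + 1) else F w)), fun x => ?_⟩
    rw [walkMu_succ, walkT_update]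
    simp only [hF]
    congr 1
    rcases Nat.eq_zero_or_pos N with h0 | hN
    · subst h0; simp
    have hN' : (N : ℝ) ≠ 0 := by positivity
    set A := ∑ c : ZMod (m + 1), if c ≠ 0 then F (hw x) else F (hw x - 1) with hA
    set B := ∑ c : ZMod (m + 1), if c ≠ 0 then F (hw x + 1) else F (hw x) with hB
    have h : ∀ i, ∑ c, F (hw (Function.update x i c))
        = (if x i ≠ 0 then (1 : ℝ) else 0) * (A - B) + B := by
      intro i
      by_cases hi : x i = 0
      · simp only [hi, ne_eq, not_true_eq_false, if_false, zero_mul, zero_add, hB]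
        refine Finset.sum_congr rfl fun c _ => ?_
        have := hw_update x i c
        by_cases hc : c = 0
        · simp [hi, hc] at this ⊢; rw [this]
        · simp [hi, hc] at this ⊢; rw [this]
      · simp only [hi, ne_eq, not_false_eq_true, if_true, one_mul, sub_add_cancel, hA]
        refine Finset.sum_congr rfl fun c _ => ?_
        have := hw_update x i c
        by_cases hc : c = 0
        · simp [hi, hc] at this ⊢; congr 1; omega
        · simp [hi, hc] at this ⊢; rw [this]
    have hs : ∑ i, (if x i ≠ 0 then (1 : ℝ) else 0) = hw x := by
      rw [hw_eq_sum]; push_cast; rfl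
    simp only [h, Finset.sum_add_distrib, ← Finset.sum_mul, hs]
    simp
    field_simp
    ring

lemma walkMu_supp (j : ℕ) (x : Fin N → ZMod (m + 1)) (h : j < hw x) : walkMu m N j x = 0 := by
  induction j generalizing x with
  | zero =>
    rw [walkMu_zero]
    have : x ≠ 0 := by rintro rfl; simp [hw] at h
    simp [this]
  | succ j ih =>
    rw [walkMu_succ, walkT_update]
    rw [Finset.sum_eq_zero, mul_zero]
    intro i _
    apply Finset.sum_eq_zero
    intro c _
    apply ih
    have := hw_update x i c
    split_ifs at this <;> omega

lemma walkMu_flow (hN : 1 ≤ N) (k n : ℕ) :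
    ∑ x, (if k < hw x then 1 else 0) * walkMu m N n x ≤
      ∑ j ∈ Finset.range n, ∑ x, (if hw x = k then 1 else 0) * walkMu m N j x := by
  induction n with
  | zero =>
    simp only [Finset.range_zero, Finset.sum_empty]
    apply le_of_eq
    apply Finset.sum_eq_zero
    intro x _
    by_cases h : k < hw x
    · rw [walkMu_supp 0 x (by omega), mul_zero]
    · simp [h]
  | succ n ih =>
    rw [Finset.sum_range_succ, walkMu_succ, walkT_adj]
    refine le_trans ?_ (add_le_add_left ih _)
    rw [← Finset.sum_add_distrib]
    refine Finset.sum_le_sum fun x _ => ?_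
    rw [← add_mul]
    refine mul_le_mul_of_nonneg_right ?_ (walkMu_nonneg n x)
    have h1 : ((if k < hw x then 1 else 0) + (if hw x = k then 1 else 0) : ℝ)
        = if k ≤ hw x then 1 else 0 := by
      rcases lt_trichotomy k (hw x) with h | h | h
      · simp [h, h.le, h.ne']
      · simp [h]
      · simp [h.not_ge, h.not_gt, h.ne]
    rw [h1]
    have h2 := walkT_pos (m := m) (N := N)
    by_cases hk : k ≤ hw x
    · rw [if_pos hk]
      have h3 := h2 ((fun _ => 1) - fun y => if k < hw y then 1 else 0) (by
        intro y; simp only [Pi.zero_apply, Pi.sub_apply]; split_ifs <;> norm_num) x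
      rw [map_sub, walkT_one hN] at h3
      simpa using h3
    · rw [if_neg hk, walkT_update]
      apply le_of_eq
      rw [Finset.sum_eq_zero, mul_zero]
      intro i _
      apply Finset.sum_eq_zero
      intro c _
      rw [if_neg]
      have := hw_update x i c
      split_ifs at this <;> omega

lemma walkMu_mean_step (hN : 1 ≤ N) (j : ℕ) :
    ∑ x, (hw x : ℝ) * walkMu m N (j + 1) x
      = (∑ x, (hw x : ℝ) * walkMu m N j x) * (1 - 1 / N) + m / (m + 1) := by
  rw [walkMu_succ, walkT_adj]
  simp only [walkT_hw hN]
  have : ∀ x, ((hw x : ℝ) + m / (m + 1) - hw x / N) * walkMu m N j x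
      = (hw x : ℝ) * walkMu m N j x * (1 - 1 / N) + m / (m + 1) * walkMu m N j x := by
    intro x; ring
  simp only [this, Finset.sum_add_distrib, ← Finset.sum_mul, ← Finset.mul_sum, walkMu_sum hN]
  ring

lemma walkMu_mean_le (hN : 1 ≤ N) (j : ℕ) : ∑ x, (hw x : ℝ) * walkMu m N j x ≤ j := by
  calc ∑ x, (hw x : ℝ) * walkMu m N j x ≤ ∑ x, (j : ℝ) * walkMu m N j x := by
        refine Finset.sum_le_sum fun x _ => ?_
        by_cases h : j < hw x
        · rw [walkMu_supp j x h]; simp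
        · exact mul_le_mul_of_nonneg_right (by exact_mod_cast not_lt.mp h) (walkMu_nonneg j x)
    _ = j := by rw [← Finset.mul_sum, walkMu_sum hN, mul_one]

lemma walkMu_mean_ge (hm : 2 ≤ m) (hN : 1 ≤ N) (j : ℕ) (hj : 4 * j ≤ N) :
    (j : ℝ) / 4 ≤ ∑ x, (hw x : ℝ) * walkMu m N j x := by
  induction j with
  | zero =>
    simp only [Nat.cast_zero, zero_div]
    exact Finset.sum_nonneg fun x _ => mul_nonneg (by positivity) (walkMu_nonneg 0 x)
  | succ j ih =>
    have h1 := ih (by omega)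
    rw [walkMu_mean_step hN]
    have h2 := walkMu_mean_le (m := m) hN j
    set e := ∑ x, (hw x : ℝ) * walkMu m N j x
    have hN' : (0 : ℝ) < N := by positivity
    have h3 : e / N ≤ 1 / 4 := by
      rw [div_le_div_iff₀ hN' (by norm_num)]
      have : (4 : ℝ) * (j + 1) ≤ N := by exact_mod_cast hj
      linarith
    have h4 : (1 : ℝ) / 2 ≤ m / (m + 1) := by
      rw [div_le_div_iff₀ (by norm_num) (by positivity)]
      have : (2 : ℝ) ≤ m := by exact_mod_cast hm
      linarith
    have h5 : e * (1 - 1 / N) = e - e / N := by ring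
    rw [h5]
    push_cast
    linarith

lemma walkMu_tail (hm : 2 ≤ m) (hN : 1 ≤ N) (L : ℕ) (hL : 32 * (L + 1) ≤ N) :
    (1 : ℝ) / 8 ≤ ∑ x, (if L < hw x then 1 else 0) * walkMu m N (8 * (L + 1)) x := by
  have h1 := walkMu_mean_ge hm hN (8 * (L + 1)) (by omega)
  set n := 8 * (L + 1) with hn
  set P := ∑ x, (if L < hw x then 1 else 0) * walkMu m N n x with hP
  have h2 : ∑ x, (hw x : ℝ) * walkMu m N n x ≤ L + n * P := by
    calc ∑ x, (hw x : ℝ) * walkMu m N n x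
        ≤ ∑ x, (L * walkMu m N n x + n * ((if L < hw x then 1 else 0) * walkMu m N n x)) := by
          refine Finset.sum_le_sum fun x _ => ?_
          have hp := walkMu_nonneg (m := m) (N := N) n x
          simp only [Pi.zero_apply] at hp
          by_cases h : n < hw x
          · rw [walkMu_supp n x h]; simp
          · have h' : (hw x : ℝ) ≤ n := by exact_mod_cast not_lt.mp h
            split_ifs with h3
            · have : (0 : ℝ) ≤ L := by positivity
              nlinarith
            · have h4 : (hw x : ℝ) ≤ L := by exact_mod_cast not_lt.mp h3
              nlinarith
      _ = L + n * P := by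
          rw [Finset.sum_add_distrib, ← Finset.mul_sum, ← Finset.mul_sum, walkMu_sum hN, mul_one]
  have hnr : (n : ℝ) = 8 * (L + 1) := by rw [hn]; push_cast; ring
  rw [hnr] at h1 h2
  have hL0 : (0 : ℝ) ≤ L := by positivity
  by_contra hcon
  push Not at hcon
  have : 8 * ((L : ℝ) + 1) * P ≤ 8 * ((L : ℝ) + 1) * (1 / 8) := by gcongr
  linarith

def sphS (m N : ℕ) (y : Fin N → ZMod (m + 1)) : ℝ :=
  ((Finset.univ.filter fun z : Fin N → ZMod (m + 1) => hw z = hw y).card : ℝ)⁻¹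

lemma sphS_nonneg (y : Fin N → ZMod (m + 1)) : 0 ≤ sphS m N y := by
  unfold sphS; positivity

lemma walkMu_sph (hm : 2 ≤ m) (hN : 1 ≤ N) (L : ℕ) (hL : 32 * (L + 1) ≤ N)
    (y : Fin N → ZMod (m + 1)) (hy : hw y ≤ L) :
    sphS m N y ≤ 8 * ∑ j ∈ Finset.range (8 * (L + 1)), walkMu m N j y := by
  have h1 := walkMu_tail hm hN L hL
  have h2 := walkMu_flow (m := m) hN (hw y) (8 * (L + 1))
  have h3 : ∑ x, (if L < hw x then 1 else 0) * walkMu m N (8 * (L + 1)) x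
      ≤ ∑ x, (if hw y < hw x then 1 else 0) * walkMu m N (8 * (L + 1)) x := by
    refine Finset.sum_le_sum fun x _ => mul_le_mul_of_nonneg_right ?_ (walkMu_nonneg _ x)
    by_cases h : L < hw x
    · rw [if_pos h, if_pos (by omega)]
    · rw [if_neg h]; split_ifs <;> norm_num
  have h4 : ∀ j, ∑ x, (if hw x = hw y then 1 else 0) * walkMu m N j x
      = ((Finset.univ.filter fun z : Fin N → ZMod (m + 1) => hw z = hw y).card : ℝ)
        * walkMu m N j y := by
    intro j
    obtain ⟨F, hF⟩ := walkMu_radial (m := m) (N := N) j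
    rw [Finset.card_filter]
    push_cast
    rw [Finset.sum_mul]
    refine Finset.sum_congr rfl fun x _ => ?_
    by_cases h : hw x = hw y
    · simp [h, hF]
    · simp [h]
  simp only [h4, ← Finset.mul_sum] at h2
  have hc : (0 : ℝ) < ((Finset.univ.filter fun z : Fin N → ZMod (m + 1) => hw z = hw y).card : ℝ) := by
    have : 0 < (Finset.univ.filter fun z : Fin N → ZMod (m + 1) => hw z = hw y).card :=
      Finset.card_pos.mpr ⟨y, by simp⟩
    exact_mod_cast this
  unfold sphS
  rw [inv_le_iff_one_le_mul₀ hc]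
  linarith

lemma sphS_sum : ∑ y, sphS m N y ≤ N + 1 := by
  have h := Finset.sum_fiberwise_of_maps_to (s := (Finset.univ : Finset (Fin N → ZMod (m + 1))))
    (t := Finset.range (N + 1)) (g := hw) (f := sphS m N)
    (fun x _ => Finset.mem_range.mpr (Nat.lt_succ_of_le (hw_le x)))
  rw [← h]
  calc _ ≤ ∑ _k ∈ Finset.range (N + 1), (1 : ℝ) := by
        refine Finset.sum_le_sum fun k _ => ?_
        have : ∀ y ∈ Finset.univ.filter (fun y : Fin N → ZMod (m + 1) => hw y = k),
            sphS m N y = ((Finset.univ.filter fun z : Fin N → ZMod (m + 1) => hw z = k).card : ℝ)⁻¹ := by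
          intro y hy
          simp only [Finset.mem_filter, Finset.mem_univ, true_and] at hy
          simp [sphS, hy]
        rw [Finset.sum_congr rfl this, Finset.sum_const, nsmul_eq_mul]
        exact mul_inv_le_one
    _ = N + 1 := by simp

lemma avg_bound (f : (Fin N → ZMod (m + 1)) → ℂ) (x : Fin N → ZMod (m + 1)) (L : ℕ) :
    ‖∑ k ∈ Finset.range (L + 1), convC (sigmaC m N (k : ℤ)) f x‖
      ≤ ∑ y, (if hw y ≤ L then sphS m N y else 0) * ‖f (x - y)‖ := by
  simp only [convC]
  rw [Finset.sum_comm]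
  refine (norm_sum_le _ _).trans (Finset.sum_le_sum fun y _ => ?_)
  rw [← Finset.sum_mul, norm_mul]
  refine mul_le_mul_of_nonneg_right ?_ (norm_nonneg _)
  apply le_of_eq
  have : ∀ k ∈ Finset.range (L + 1), sigmaC m N (k : ℤ) y
      = if k = hw y then (sphS m N y : ℂ) else 0 := by
    intro k _
    unfold sigmaC sphS
    by_cases h : k = hw y
    · subst h; simp
    · rw [if_neg h, if_neg (by exact_mod_cast (Ne.symm h))]
  rw [Finset.sum_congr rfl this, Finset.sum_ite_eq']
  by_cases h : hw y ≤ L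
  · rw [if_pos (by simp; omega), if_pos h, Complex.norm_real, Real.norm_of_nonneg (sphS_nonneg y)]
  · rw [if_neg (by simp; omega), if_neg h, norm_zero]

lemma small_bound (hm : 2 ≤ m) (hN : 1 ≤ N) (f : (Fin N → ZMod (m + 1)) → ℂ)
    (x : Fin N → ZMod (m + 1)) (L : ℕ) (hL : 32 * (L + 1) ≤ N) :
    ‖∑ k ∈ Finset.range (L + 1), convC (sigmaC m N (k : ℤ)) f x‖
      ≤ 8 * (∑ j ∈ Finset.range (8 * (L + 1)), (walkT m N ^ j) (fun y => ‖f y‖)) x := by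
  refine (avg_bound f x L).trans ?_
  rw [Finset.sum_apply]
  simp only [walk_conv]
  rw [Finset.sum_comm, Finset.mul_sum]
  refine Finset.sum_le_sum fun y _ => ?_
  rw [← Finset.sum_mul, ← mul_assoc]
  refine mul_le_mul_of_nonneg_right ?_ (norm_nonneg _)
  split_ifs with h
  · exact walkMu_sph hm hN L hL y h
  · exact mul_nonneg (by norm_num) (Finset.sum_nonneg fun j _ => walkMu_nonneg j y)

end Walk

theorem statement2 (m : ℕ) (hm : 2 ≤ m) :
    ∃ C : ℝ, ∀ N : ℕ, 1 ≤ N → ∀ f : (Fin N → ZMod (m + 1)) → ℂ, ∀ lam : ℝ, 0 < lam →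
      ((Finset.univ.filter fun x => lam < smoothLocalMax m N f x).card : ℝ) ≤
        C * lam⁻¹ * ∑ x, ‖f x‖ := by
  refine ⟨97, fun N hN f lam hlam => ?_⟩
  classical
  set F : (Fin N → ZMod (m + 1)) → ℝ := fun y => ‖f y‖ with hF
  set A : (Fin N → ZMod (m + 1)) → ℝ := fun x => ∑ y, sphS m N y * ‖f (x - y)‖ with hA
  set E1 := Finset.univ.filter (fun x => ∃ n ∈ Finset.range (8 * (N + 1) + 1),
      (n : ℝ) * (lam / 64) < (∑ j ∈ Finset.range n, (walkT m N ^ j) F) x) with hE1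
  set E2 := Finset.univ.filter (fun x => lam * (N + 1) < 33 * A x) with hE2
  have hsub : (Finset.univ.filter fun x => lam < smoothLocalMax m N f x) ⊆ E1 ∪ E2 := by
    intro x hx
    rw [Finset.mem_filter] at hx
    have hx := hx.2
    unfold smoothLocalMax at hx
    rw [Finset.lt_sup'_iff] at hx
    obtain ⟨L, hL, hlt⟩ := hx
    have hL1 : (0 : ℝ) < (L : ℝ) + 1 := by positivity
    rw [one_div, inv_mul_eq_div, lt_div_iff₀ hL1] at hlt
    rw [Finset.mem_union]
    by_cases hs : 32 * (L + 1) ≤ N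
    · left
      simp only [hE1, Finset.mem_filter, Finset.mem_univ, true_and]
      refine ⟨8 * (L + 1), by rw [Finset.mem_range]; omega, ?_⟩
      have := small_bound hm hN f x L hs
      push_cast
      linarith
    · right
      rw [hE2, Finset.mem_filter]
      refine ⟨Finset.mem_univ _, ?_⟩
      have h1 := avg_bound f x L
      have h2 : ∑ y, (if hw y ≤ L then sphS m N y else 0) * ‖f (x - y)‖ ≤ A x := by
        refine Finset.sum_le_sum fun y _ => mul_le_mul_of_nonneg_right ?_ (norm_nonneg _)
        split_ifs
        · exact le_rfl
        · exact sphS_nonneg y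
      have h3 : (N : ℝ) + 1 ≤ 33 * (L + 1) := by
        have : N + 1 ≤ 33 * (L + 1) := by omega
        exact_mod_cast this
      have h4 : lam * (N + 1) ≤ lam * (33 * (L + 1)) := by gcongr
      linarith
  have hc1 : (E1.card : ℝ) * (lam / 64) ≤ ∑ x, F x :=
    erg_weak (walkT m N) walkT_pos (walkT_sum hN) (walkT_one hN) F (fun x => norm_nonneg _) _
      (8 * (N + 1)) E1 (fun x => by simp only [hE1, Finset.mem_filter, Finset.mem_univ, true_and])
  have hAsum : ∑ x, A x ≤ (N + 1) * ∑ x, F x := by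
    rw [hA, Finset.sum_comm]
    have : ∀ y, ∑ x, sphS m N y * ‖f (x - y)‖ = sphS m N y * ∑ x, F x := by
      intro y
      rw [← Finset.mul_sum]
      congr 1
      exact Fintype.sum_equiv (Equiv.subRight y) _ _ (fun x => by simp [hF])
    simp only [this, ← Finset.sum_mul]
    exact mul_le_mul_of_nonneg_right sphS_sum (Finset.sum_nonneg fun x _ => norm_nonneg _)
  have hA0 : ∀ x, 0 ≤ A x := fun x =>
    Finset.sum_nonneg fun y _ => mul_nonneg (sphS_nonneg y) (norm_nonneg _)
  have hN1 : (0 : ℝ) < (N : ℝ) + 1 := by positivity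
  have hc2 : (E2.card : ℝ) * lam ≤ 33 * ∑ x, F x := by
    have h1 : (E2.card : ℝ) * (lam * (N + 1)) ≤ ∑ x ∈ E2, 33 * A x := by
      rw [← nsmul_eq_mul]
      refine Finset.card_nsmul_le_sum _ _ _ fun x hx => ?_
      rw [hE2, Finset.mem_filter] at hx
      exact hx.2.le
    have h2 : ∑ x ∈ E2, 33 * A x ≤ ∑ x, 33 * A x :=
      Finset.sum_le_sum_of_subset_of_nonneg (Finset.subset_univ _)
        (fun x _ _ => mul_nonneg (by norm_num) (hA0 x))
    rw [← Finset.mul_sum (s := Finset.univ)] at h2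
    refine le_of_mul_le_mul_right ?_ hN1
    linarith
  have hcard : ((Finset.univ.filter fun x => lam < smoothLocalMax m N f x).card : ℝ)
      ≤ E1.card + E2.card := by
    exact_mod_cast (Finset.card_le_card hsub).trans (Finset.card_union_le _ _)
  have hfin : ((E1.card : ℝ) + E2.card) * lam ≤ 97 * ∑ x, F x := by linarith
  refine hcard.trans ?_
  rw [mul_right_comm, ← div_eq_mul_inv, le_div_iff₀ hlam]
  exact hfin
end
end

section
/- Define N_t = Ñ_{c_m(1−e^{−t})} for t > 0, the semigroup maximal function N_* f(x) = sup_{T > 0} |(1/T) ∫_0^T (N_t f)(x) dt|, and the reparametrized maximal function Ñ_* f(x) = sup_{0 < P ≤ c_m} |(1/P) ∫_0^P (Ñ_p f)(x) dp|. Then for every f : G → ℂ and every x ∈ G, Ñ_* f(x) ≤ N_* f(x). -/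
open Finset

noncomputable section

/-- The noise density `μ̃_p^N(y) = (p/m)^{|y|} (1-p)^{N-|y|}`. -/
def noiseDensity (m N : ℕ) (p : ℝ) (y : Fin N → ZMod (m + 1)) : ℝ :=
  (p / m) ^ hw y * (1 - p) ^ (N - hw y)

/-- The noise operator `Ñ_p f = f * μ̃_p^N`. -/
def noiseOp (m N : ℕ) (p : ℝ) (f : (Fin N → ZMod (m + 1)) → ℂ) :
    (Fin N → ZMod (m + 1)) → ℂ :=
  convC (fun y => (noiseDensity m N p y : ℂ)) f

/-- The semigroup maximal function `N_* f(x) = sup_{T>0} |(1/T)∫_0^T (N_t f)(x) dt|`,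
where `N_t = Ñ_{c_m(1-e^{-t})}`. -/
def semigroupMax (m N : ℕ) (f : (Fin N → ZMod (m + 1)) → ℂ) (x : Fin N → ZMod (m + 1)) : ℝ :=
  ⨆ T : Set.Ioi (0 : ℝ),
    ‖(1 / (T : ℝ)) • ∫ t in (0 : ℝ)..(T : ℝ),
        noiseOp m N ((m / (m + 1) : ℝ) * (1 - Real.exp (-t))) f x‖

/-- The reparametrized maximal function `Ñ_* f(x) = sup_{0<P≤c_m} |(1/P)∫_0^P (Ñ_p f)(x) dp|`. -/
def reparamMax (m N : ℕ) (f : (Fin N → ZMod (m + 1)) → ℂ) (x : Fin N → ZMod (m + 1)) : ℝ :=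
  ⨆ P : Set.Ioc (0 : ℝ) ((m : ℝ) / (m + 1)),
    ‖(1 / (P : ℝ)) • ∫ p in (0 : ℝ)..(P : ℝ), noiseOp m N p f x‖

theorem aux_bdd (F : ℝ → ℂ) (hF : Continuous F) (c : ℝ) (hc : 0 < c) :
    BddAbove (Set.range fun T : Set.Ioi (0 : ℝ) =>
      ‖(1 / (T : ℝ)) • ∫ t in (0 : ℝ)..(T : ℝ), F (c * (1 - Real.exp (-t)))‖) := by
  obtain ⟨C, hC⟩ := (isCompact_Icc (a := (0:ℝ)) (b := c)).exists_bound_of_continuousOn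
    hF.continuousOn
  refine ⟨C, ?_⟩
  rintro _ ⟨⟨T, hT⟩, rfl⟩
  have hT' : 0 < T := hT
  have h := intervalIntegral.norm_integral_le_of_norm_le_const (a := 0) (b := T) (C := C)
    (f := fun t => F (c * (1 - Real.exp (-t)))) (by
      intro t ht
      rw [Set.uIoc_of_le hT'.le] at ht
      apply hC
      have h1 : Real.exp (-t) ≤ 1 := Real.exp_le_one_iff.2 (by linarith [ht.1])
      have h2 := Real.exp_pos (-t)
      constructor
      · exact mul_nonneg hc.le (by linarith)
      · nlinarith)
  rw [sub_zero, abs_of_pos hT'] at h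
  simp only [norm_smul, Real.norm_eq_abs, abs_of_pos (one_div_pos.2 hT')]
  rw [one_div, inv_mul_le_iff₀ hT']
  linarith

theorem aux_main (F : ℝ → ℂ) (hF : Continuous F) (c S : ℝ) (hc : 0 < c)
    (hS : ∀ T : ℝ, 0 ≤ T → ‖∫ t in (0 : ℝ)..T, F (c * (1 - Real.exp (-t)))‖ ≤ S * T)
    (T : ℝ) (hT : 0 ≤ T) :
    ‖∫ p in (0 : ℝ)..(c * (1 - Real.exp (-T))), F p‖ ≤ S * (c * (1 - Real.exp (-T))) := by
  set G : ℝ → ℂ := fun t => F (c * (1 - Real.exp (-t))) with hG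
  have hGc : Continuous G := by fun_prop
  set H : ℝ → ℂ := fun t => ∫ s in (0 : ℝ)..t, G s with hH
  have hHd : ∀ t, HasDerivAt H (G t) t := fun t =>
    intervalIntegral.integral_hasDerivAt_right (hGc.intervalIntegrable _ _)
      hGc.stronglyMeasurable.stronglyMeasurableAtFilter hGc.continuousAt
  have hKd : ∀ t, HasDerivAt (fun P => ∫ p in (0 : ℝ)..P, F p) (F t) t := fun t =>
    intervalIntegral.integral_hasDerivAt_right (hF.intervalIntegrable _ _)
      hF.stronglyMeasurable.stronglyMeasurableAtFilter hF.continuousAt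
  have hed : ∀ t : ℝ, HasDerivAt (fun t => Real.exp (-t)) (-Real.exp (-t)) t := fun t => by
    simpa using (hasDerivAt_neg t).exp
  have hpd : ∀ t : ℝ, HasDerivAt (fun t => c * (1 - Real.exp (-t))) (c * Real.exp (-t)) t :=
    fun t => by simpa using ((hed t).const_sub 1).const_mul c
  have hced : ∀ t : ℝ, HasDerivAt (fun t => c * Real.exp (-t)) (-(c * Real.exp (-t))) t :=
    fun t => by simpa using (hed t).const_mul c
  set A : ℝ → ℂ := fun t => (∫ p in (0 : ℝ)..(c * (1 - Real.exp (-t))), F p)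
    - (c * Real.exp (-t)) • H t with hA
  have hAd : ∀ t, HasDerivAt A ((c * Real.exp (-t)) • H t) t := fun t => by
    have h1 := (hKd (c * (1 - Real.exp (-t)))).scomp t (hpd t)
    have h2 := h1.sub ((hced t).smul (hHd t))
    refine HasDerivAt.congr_deriv (f := A) h2 ?_
    simp only [hG, neg_smul]
    abel
  set B : ℝ → ℝ := fun t => S * (c * (1 - Real.exp (-t)) - (c * Real.exp (-t)) * t) with hB
  have hBd : ∀ t, HasDerivAt B (S * ((c * Real.exp (-t)) * t)) t := fun t => by
    have h2 := ((hpd t).sub ((hced t).mul (hasDerivAt_id t))).const_mul S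
    refine HasDerivAt.congr_deriv (f := B) h2 ?_
    simp only [id]
    ring
  have key : ‖A T‖ ≤ B T := by
    refine image_norm_le_of_norm_deriv_right_le_deriv_boundary (a := 0) (b := T) (f := A)
      (f' := fun t => (c * Real.exp (-t)) • H t) (B := B)
      (B' := fun t => S * ((c * Real.exp (-t)) * t))
      (fun t _ => (hAd t).continuousAt.continuousWithinAt) (fun t _ => (hAd t).hasDerivWithinAt)
      (by simp [hA, hB, hH]) hBd ?_ (Set.right_mem_Icc.2 hT)
    intro t ht
    have hp : 0 < c * Real.exp (-t) := mul_pos hc (Real.exp_pos _)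
    rw [norm_smul, Real.norm_eq_abs, abs_of_pos hp]
    have := mul_le_mul_of_nonneg_left (hS t ht.1) hp.le
    calc _ ≤ _ := this
      _ = _ := by ring
  have hp : 0 < c * Real.exp (-T) := mul_pos hc (Real.exp_pos _)
  have e : (∫ p in (0 : ℝ)..(c * (1 - Real.exp (-T))), F p)
    = A T + (c * Real.exp (-T)) • H T := by simp [hA]
  rw [e]
  refine (norm_add_le _ _).trans ?_
  rw [norm_smul, Real.norm_eq_abs, abs_of_pos hp]
  have := mul_le_mul_of_nonneg_left (hS T hT) hp.le
  calc _ ≤ B T + (c * Real.exp (-T)) * (S * T) := add_le_add key this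
    _ = _ := by simp only [hB]; ring

theorem statement4 (m N : ℕ) (hm : 2 ≤ m) (hN : 1 ≤ N)
    (f : (Fin N → ZMod (m + 1)) → ℂ) (x : Fin N → ZMod (m + 1)) :
    reparamMax m N f x ≤ semigroupMax m N f x := by
  have hm0 : (0 : ℝ) < m := by exact_mod_cast (by omega : 0 < m)
  have hc : (0 : ℝ) < (m : ℝ) / (m + 1) := by positivity
  have hF : Continuous fun p : ℝ => noiseOp m N p f x := by
    unfold noiseOp convC noiseDensity
    fun_prop
  have hbdd := aux_bdd _ hF _ hc
  have hS : ∀ T : ℝ, 0 ≤ T → ‖∫ t in (0 : ℝ)..T,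
      noiseOp m N ((m / (m + 1) : ℝ) * (1 - Real.exp (-t))) f x‖ ≤ semigroupMax m N f x * T := by
    intro T hT
    rcases hT.eq_or_lt with rfl | hT
    · simp
    have h := le_ciSup hbdd ⟨T, hT⟩
    change _ ≤ semigroupMax m N f x at h
    simp only [norm_smul, Real.norm_eq_abs, abs_of_pos (one_div_pos.2 hT)] at h
    rw [one_div, inv_mul_le_iff₀ hT] at h
    linarith
  have hmain := aux_main _ hF _ _ hc hS
  set c : ℝ := (m : ℝ) / (m + 1) with hcdef
  have hlt : ∀ P ∈ Set.Ico 0 c, ‖∫ p in (0 : ℝ)..P, noiseOp m N p f x‖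
      ≤ semigroupMax m N f x * P := by
    intro P hP
    have h1 : 0 < 1 - P / c := by
      rw [sub_pos, div_lt_one hc]; exact hP.2
    have h2 : 0 ≤ -Real.log (1 - P / c) := by
      have : 0 ≤ P / c := div_nonneg hP.1 hc.le
      have := Real.log_nonpos h1.le (by linarith)
      linarith
    have h := hmain _ h2
    rw [neg_neg, Real.exp_log h1] at h
    have e : c * (1 - (1 - P / c)) = P := by field_simp; ring
    rwa [e] at h
  have hle : ∀ P ∈ Set.Icc 0 c, ‖∫ p in (0 : ℝ)..P, noiseOp m N p f x‖
      ≤ semigroupMax m N f x * P := by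
    have hcl : IsClosed {P : ℝ | ‖∫ p in (0 : ℝ)..P, noiseOp m N p f x‖
      ≤ semigroupMax m N f x * P} := by
      refine isClosed_le ?_ (by fun_prop)
      exact (intervalIntegral.continuous_primitive (fun a b => hF.intervalIntegrable a b) 0).norm
    have := closure_minimal (s := Set.Ico 0 c) hlt hcl
    rwa [closure_Ico hc.ne] at this
  have : Nonempty (Set.Ioc (0 : ℝ) c) := ⟨⟨c, hc, le_rfl⟩⟩
  refine ciSup_le ?_
  rintro ⟨P, hP⟩
  have hP0 : 0 < P := hP.1
  simp only [norm_smul, Real.norm_eq_abs, abs_of_pos (one_div_pos.2 hP0)]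
  rw [one_div, inv_mul_le_iff₀ hP0]
  have := hle P ⟨hP.1.le, hP.2⟩
  linarith
end
end

section
/- There exists a constant C = C(m) > 0, independent of N, such that for all integers 0 ≤ l ≤ L ≤ c_m·N the following holds: setting P(L) = 1/N if L = 0 and P(L) = L/N if L ≥ 1, one has 1/(L+1) ≤ (C/P(L)) · ∫_0^{P(L)} B(N,p,l) dp. -/
noncomputable section

/-- The binomial probability mass `B(N,p,l) = C(N,l) p^l (1-p)^{N-l}`. -/
def binomMass (N : ℕ) (p : ℝ) (l : ℕ) : ℝ :=
  (N.choose l : ℝ) * p ^ l * (1 - p) ^ (N - l)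

/-- The cutoff `P(L)`: `1/N` if `L = 0` and `L/N` if `L ≥ 1`. -/
def PofL (N L : ℕ) : ℝ := if L = 0 then 1 / N else (L : ℝ) / N

def EE : ℕ → ℝ → (ℕ → ℝ) → ℝ
  | 0, _, g => g 0
  | n + 1, x, g => (1 - x) * EE n x g + x * EE n x (fun j => g (j + 1))

lemma EE_lin (n : ℕ) (x a b : ℝ) : ∀ (f g : ℕ → ℝ),
    EE n x (fun j => a * f j + b * g j) = a * EE n x f + b * EE n x g := by
  induction n with
  | zero => intro f g; simp [EE]
  | succ n ih =>
    intro f g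
    simp only [EE]
    rw [ih f g, ih (fun j => f (j + 1)) (fun j => g (j + 1))]
    ring

lemma EE_sub (n : ℕ) (x : ℝ) (f g : ℕ → ℝ) :
    EE n x (fun j => f j - g j) = EE n x f - EE n x g := by
  have h := EE_lin n x 1 (-1) f g
  have e : (fun j => f j - g j) = (fun j => 1 * f j + (-1) * g j) := by
    funext j; ring
  rw [e, h]; ring

lemma EE_mono (n : ℕ) (x : ℝ) (h0 : 0 ≤ x) (h1 : x ≤ 1) : ∀ (f g : ℕ → ℝ),
    (∀ j, f j ≤ g j) → EE n x f ≤ EE n x g := by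
  induction n with
  | zero => intro f g h; simpa [EE] using h 0
  | succ n ih =>
    intro f g h
    simp only [EE]
    have a := ih f g h
    have b := ih (fun j => f (j + 1)) (fun j => g (j + 1)) (fun j => h (j + 1))
    have : 0 ≤ 1 - x := by linarith
    gcongr

lemma EE_shift (n : ℕ) (x c : ℝ) (k : ℕ) :
    EE n x (fun j => (((j + 1 : ℕ) : ℝ) - c) ^ k) = EE n x (fun j => ((j : ℝ) - (c - 1)) ^ k) := by
  congr 1; funext j; push_cast; ring

lemma EE_m1 (n : ℕ) (x : ℝ) : ∀ c : ℝ, EE n x (fun j => ((j : ℝ) - c) ^ 1) = n * x - c := by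
  induction n with
  | zero => intro c; simp [EE]
  | succ n ih =>
    intro c
    simp only [EE]
    rw [EE_shift, ih, ih]; push_cast; ring

lemma EE_m2 (n : ℕ) (x : ℝ) : ∀ c : ℝ, EE n x (fun j => ((j : ℝ) - c) ^ 2)
    = (n * x - c) ^ 2 + n * (x * (1 - x)) := by
  induction n with
  | zero => intro c; simp [EE]
  | succ n ih =>
    intro c
    simp only [EE]
    rw [EE_shift, ih, ih]; push_cast; ring

lemma EE_m4 (n : ℕ) (x : ℝ) : ∀ c : ℝ, EE n x (fun j => ((j : ℝ) - c) ^ 4)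
    = (n * x - c) ^ 4 + 6 * (n * x - c) ^ 2 * (n * (x * (1 - x)))
      + 4 * (n * x - c) * (n * (x * (1 - x)) * (1 - 2 * x))
      + 3 * (n * (x * (1 - x))) ^ 2 + n * (x * (1 - x)) * (1 - 6 * (x * (1 - x))) := by
  induction n with
  | zero => intro c; simp [EE]
  | succ n ih =>
    intro c
    simp only [EE]
    rw [EE_shift, ih, ih]; push_cast; ring

lemma EE_deriv (n : ℕ) (x : ℝ) : ∀ g : ℕ → ℝ,
    HasDerivAt (fun y => EE (n + 1) y g) ((n + 1) * EE n x (fun j => g (j + 1) - g j)) x := by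
  induction n with
  | zero =>
    intro g
    simp only [EE]
    have h := (((hasDerivAt_id x).const_sub 1).mul_const (g 0)).add
      ((hasDerivAt_id x).mul_const (g (0 + 1)))
    refine h.congr_deriv ?_
    push_cast; ring
  | succ n ih =>
    intro g
    have h := (((hasDerivAt_id x).const_sub 1).mul (ih g)).add
      ((hasDerivAt_id x).mul (ih (fun j => g (j + 1))))
    refine h.congr_deriv ?_
    have e := EE_sub (n + 1) x (fun j => g (j + 1)) g
    have e2 : EE (n + 1) x (fun j => g (j + 1) - g j) =
      (1 - x) * EE n x (fun j => g (j + 1) - g j) +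
        x * EE n x (fun j => g (j + 1 + 1) - g (j + 1)) := rfl
    simp only [id]
    push_cast
    linear_combination (-1 : ℝ) * e - (n + 1 : ℝ) * e2

lemma EE_mass (n : ℕ) (x : ℝ) : ∀ l : ℕ,
    EE n x (fun j => if j = l then 1 else 0) = binomMass n x l := by
  induction n with
  | zero =>
    intro l
    cases l <;> simp [EE, binomMass]
  | succ n ih =>
    intro l
    simp only [EE]
    rw [ih]
    cases l with
    | zero =>
      have : EE n x (fun j => if j + 1 = 0 then 1 else 0) = 0 := by
        have := EE_lin n x 0 0 (fun _ => 0) (fun _ => 0)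
        simpa using this
      rw [this]; simp [binomMass]; ring
    | succ l =>
      have : (fun j : ℕ => if j + 1 = l + 1 then (1 : ℝ) else 0)
        = (fun j => if j = l then 1 else 0) := by
        funext j; simp
      rw [this, ih]
      unfold binomMass
      rw [Nat.choose_succ_succ, Nat.add_sub_add_right]
      rcases lt_or_ge l n with h | h
      · obtain ⟨d, rfl⟩ := Nat.exists_eq_add_of_lt h
        have h1 : l + d + 1 - (l + 1) = d := by omega
        have h2 : l + d + 1 - l = d + 1 := by omega
        rw [h1, h2]; push_cast; ring
      · rw [Nat.choose_eq_zero_of_lt (show n < l + 1 by omega)]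
        push_cast; ring

lemma EE_zero (n : ℕ) : ∀ g : ℕ → ℝ, EE n 0 g = g 0 := by
  induction n with
  | zero => intro g; rfl
  | succ n ih => intro g; simp [EE, ih]

lemma cont_mass (N l : ℕ) : Continuous (fun p => binomMass N p l) := by
  unfold binomMass; fun_prop

lemma int_mass (N l : ℕ) (x : ℝ) : ∫ p in (0 : ℝ)..x, binomMass N p l =
    EE (N + 1) x (fun j => if l + 1 ≤ j then 1 else 0) / (N + 1) := by
  have hN : (N : ℝ) + 1 ≠ 0 := by positivity
  have h : ∀ p ∈ Set.uIcc (0 : ℝ) x, HasDerivAt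
      (fun y => EE (N + 1) y (fun j => if l + 1 ≤ j then 1 else 0) / (N + 1))
      (binomMass N p l) p := by
    intro p _
    refine ((EE_deriv N p _).div_const _).congr_deriv ?_
    rw [mul_div_cancel_left₀ _ hN, ← EE_mass]
    congr 1; funext j
    split_ifs <;> first | omega | simp
  rw [intervalIntegral.integral_eq_sub_of_hasDerivAt h ((cont_mass N l).intervalIntegrable _ _)]
  rw [EE_zero]; simp

lemma poly_pos (R z : ℝ) (hR : 2 ≤ R) (hz : 0 ≤ z) : R * z + z ^ 2 - z ^ 4 / R ≤ 2 * R ^ 2 := by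
  rcases le_total z R with h | h
  · have : 0 ≤ z ^ 4 / R := by positivity
    nlinarith
  · have : z ^ 3 ≤ z ^ 4 / R := by
      rw [le_div_iff₀ (by linarith)]
      have : 0 ≤ z ^ 3 := by positivity
      nlinarith
    have h2 : 2 * z ^ 2 ≤ z ^ 3 := by nlinarith [sq_nonneg z]
    nlinarith [sq_nonneg R]

lemma poly_neg (R z : ℝ) (hR : 2 ≤ R) (hz : z ≤ 0) : R * z + z ^ 2 - z ^ 4 / R ≤ 0 := by
  rcases le_total (-z) R with h | h
  · have : 0 ≤ z ^ 4 / R := by positivity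
    nlinarith
  · have : z ^ 2 ≤ z ^ 4 / R := by
      rw [le_div_iff₀ (by linarith)]
      have h1 : R ≤ z ^ 2 := by nlinarith
      have : 0 ≤ z ^ 2 := by positivity
      nlinarith
    nlinarith

/-- anti-concentration -/
lemma tail_bound (n l : ℕ) (x K : ℝ) (h0 : 0 ≤ x) (h1 : x ≤ 1) (hK : 1 ≤ K)
    (hV : 0 < n * (x * (1 - x)))
    (hKV : 1 ≤ (K - 3) * (n * (x * (1 - x)))) (hl : (l : ℝ) ≤ n * x) (hl' : n * x ≤ l + 1) :
    1 / (4 * (2 * K) ^ 2) ≤ EE n x (fun j => if l + 1 ≤ j then 1 else 0) := by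
  set V := (n : ℝ) * (x * (1 - x)) with hVdef
  set s := √V with hs
  have hs2 : s ^ 2 = V := Real.sq_sqrt hV.le
  have hspos : 0 < s := Real.sqrt_pos.mpr hV
  set R := 2 * K with hR
  have hRp : 0 < R := by linarith
  set c := (n : ℝ) * x with hc
  have key : ∀ j : ℕ, 1 * (R / s / (2 * R ^ 2) * ((j : ℝ) - c) ^ 1) +
      1 * (1 / V / (2 * R ^ 2) * ((j : ℝ) - c) ^ 2 + (-(1 / V ^ 2 / R / (2 * R ^ 2))) * ((j : ℝ) - c) ^ 4)
      ≤ if l + 1 ≤ j then 1 else 0 := by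
    intro j
    have e : 1 * (R / s / (2 * R ^ 2) * ((j : ℝ) - c) ^ 1) +
      1 * (1 / V / (2 * R ^ 2) * ((j : ℝ) - c) ^ 2 + (-(1 / V ^ 2 / R / (2 * R ^ 2))) * ((j : ℝ) - c) ^ 4)
      = (R * (((j : ℝ) - c) / s) + (((j : ℝ) - c) / s) ^ 2 - (((j : ℝ) - c) / s) ^ 4 / R) / (2 * R ^ 2) := by
      rw [← hs2]; field_simp; ring
    rw [e, div_le_iff₀ (by positivity)]
    split_ifs with h
    · have h' : (l : ℝ) + 1 ≤ j := by exact_mod_cast h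
      rw [one_mul]
      exact poly_pos _ _ (by linarith) (div_nonneg (by linarith) hspos.le)
    · have h' : (j : ℝ) ≤ l := by exact_mod_cast (by omega : j ≤ l)
      rw [zero_mul]
      exact poly_neg _ _ (by linarith) (div_nonpos_of_nonpos_of_nonneg (by linarith) hspos.le)
  have hm := EE_mono n x h0 h1 _ _ key
  refine le_trans ?_ hm
  rw [EE_lin n x 1 1 (fun j => R / s / (2 * R ^ 2) * ((j : ℝ) - c) ^ 1), EE_lin]
  have e1 : EE n x (fun j => R / s / (2 * R ^ 2) * ((j : ℝ) - c) ^ 1) = 0 := by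
    have := EE_lin n x (R / s / (2 * R ^ 2)) 0 (fun j => ((j : ℝ) - c) ^ 1) (fun _ => 0)
    rw [EE_m1] at this
    simpa [← hc] using this
  rw [e1, EE_m2, EE_m4]
  rw [← hc, ← hVdef]
  have hx : 0 ≤ x * (1 - x) := mul_nonneg h0 (by linarith)
  have hM : 3 * V ^ 2 + V * (1 - 6 * (x * (1 - x))) ≤ K * V ^ 2 := by nlinarith
  have hM2 : 1 / V ^ 2 / R / (2 * R ^ 2) * (3 * V ^ 2 + V * (1 - 6 * (x * (1 - x)))) ≤
      1 / V ^ 2 / R / (2 * R ^ 2) * (K * V ^ 2) := by gcongr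
  have e3 : 1 / V ^ 2 / R / (2 * R ^ 2) * (K * V ^ 2) = 1 / (4 * R ^ 2) := by
    have : K = R / 2 := by rw [hR]; ring
    rw [this]; field_simp; ring
  have e4 : 1 / V / (2 * R ^ 2) * V = 2 * (1 / (4 * R ^ 2)) := by
    field_simp; ring
  rw [e3] at hM2
  have := e4
  simp only [sub_self]
  ring_nf at *
  linarith

lemma main_bound (m N l : ℕ) (hN : 1 ≤ N) (hl : 1 ≤ l)
    (hlN : (l : ℝ) ≤ (m : ℝ) / (m + 1) * N) :
    1 / (8 * (2 * (m + 4 : ℝ)) ^ 2 * N) ≤ ∫ p in (0 : ℝ)..(l / N), binomMass N p l := by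
  have hN' : (1 : ℝ) ≤ N := by exact_mod_cast hN
  have hl1 : (1 : ℝ) ≤ l := by exact_mod_cast hl
  have hx : (l : ℝ) / N ≤ (m : ℝ) / (m + 1) := by
    rw [div_le_iff₀ (by linarith)]; exact hlN
  have hmm : (m : ℝ) / (m + 1) = 1 - 1 / (m + 1) := by field_simp; ring
  have hmp : (0 : ℝ) < 1 / (m + 1) := by positivity
  set x := (l : ℝ) / N with hxd
  have hx0 : 0 ≤ x := by positivity
  have hNx : N * x = l := by rw [hxd]; field_simp
  have hx1 : 1 / ((m : ℝ) + 1) ≤ 1 - x := by linarith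
  have hV : 1 / ((m : ℝ) + 1) ≤ ((N + 1 : ℕ) : ℝ) * (x * (1 - x)) := by
    push_cast
    have : ((N : ℝ) + 1) * (x * (1 - x)) = (l + x) * (1 - x) := by rw [← hNx]; ring
    rw [this]; nlinarith
  have hb := tail_bound (N + 1) l x (m + 4) hx0 (by linarith)
    (by have : (0 : ℝ) ≤ m := by positivity
        linarith) (by linarith)
    (by
      have h := mul_le_mul_of_nonneg_left hV (by positivity : (0 : ℝ) ≤ m + 1)
      rw [mul_one_div_cancel (by positivity)] at h
      linarith)
    (by push_cast; linarith) (by push_cast; linarith)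
  rw [int_mass]
  rw [le_div_iff₀ (by positivity)]
  refine le_trans ?_ hb
  rw [div_mul_eq_mul_div, div_le_div_iff₀ (by positivity) (by positivity)]
  have : (0 : ℝ) ≤ (2 * (m + 4 : ℝ)) ^ 2 := by positivity
  nlinarith

lemma zero_bound (N : ℕ) (hN : 1 ≤ N) :
    1 / (2 * N : ℝ) ≤ ∫ p in (0 : ℝ)..(1 / N), binomMass N p 0 := by
  have hN' : (1 : ℝ) ≤ N := by exact_mod_cast hN
  have h : ∫ p in (0 : ℝ)..(1 / N), (1 - N * p) = 1 / (2 * N : ℝ) := by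
    rw [intervalIntegral.integral_sub (by simp)
      (Continuous.intervalIntegrable (by fun_prop) _ _)]
    rw [intervalIntegral.integral_const_mul]
    simp
    field_simp; ring
  rw [← h]
  apply intervalIntegral.integral_mono_on (by positivity)
    (Continuous.intervalIntegrable (by fun_prop) _ _)
    ((cont_mass N 0).intervalIntegrable _ _)
  intro p hp
  have hp1 : p ≤ 1 := hp.2.trans (by rw [div_le_one (by linarith)]; exact hN')
  have := one_add_mul_le_pow (a := -p) (by linarith) N
  simp only [binomMass, Nat.choose_zero_right, Nat.cast_one, pow_zero, one_mul, mul_one, Nat.sub_zero]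
  have e : 1 - p = 1 + -p := by ring
  rw [e]; linarith

lemma ext_bound (N l : ℕ) (a b : ℝ) (ha : 0 ≤ a) (hab : a ≤ b) (hb : b ≤ 1) :
    ∫ p in (0 : ℝ)..a, binomMass N p l ≤ ∫ p in (0 : ℝ)..b, binomMass N p l := by
  rw [← intervalIntegral.integral_add_adjacent_intervals
    ((cont_mass N l).intervalIntegrable 0 a) ((cont_mass N l).intervalIntegrable a b)]
  have : 0 ≤ ∫ p in a..b, binomMass N p l := by
    apply intervalIntegral.integral_nonneg hab
    intro p hp
    have h1 : 0 ≤ p := ha.trans hp.1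
    have h2 : 0 ≤ 1 - p := by linarith [hp.2]
    unfold binomMass; positivity
  linarith

theorem statement6 (m : ℕ) (hm : 2 ≤ m) :
    ∃ C : ℝ, 0 < C ∧ ∀ N : ℕ, 1 ≤ N → ∀ l L : ℕ, l ≤ L → (L : ℝ) ≤ (m : ℝ) / (m + 1) * N →
      1 / ((L : ℝ) + 1) ≤ (C / PofL N L) * ∫ p in (0 : ℝ)..(PofL N L), binomMass N p l := by
  refine ⟨8 * (2 * (m + 4 : ℝ)) ^ 2, by positivity, ?_⟩
  intro N hN l L hlL hL
  have hN' : (1 : ℝ) ≤ N := by exact_mod_cast hN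
  have hlL' : (l : ℝ) ≤ L := by exact_mod_cast hlL
  have hLN : (L : ℝ) ≤ N := by
    have : (m : ℝ) / (m + 1) ≤ 1 := by rw [div_le_one (by positivity)]; linarith
    nlinarith
  have hP1 : PofL N L ≤ 1 := by
    unfold PofL; split_ifs <;> rw [div_le_one (by linarith)] <;> assumption
  have hPN : 1 / (N : ℝ) ≤ PofL N L := by
    unfold PofL; split_ifs with h
    · exact le_rfl
    · have : (1 : ℝ) ≤ L := by exact_mod_cast Nat.one_le_iff_ne_zero.mpr h
      gcongr
  have hPpos : 0 < PofL N L := lt_of_lt_of_le (by positivity) hPN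
  set C := 8 * (2 * (m + 4 : ℝ)) ^ 2 with hC
  have hC2 : 2 ≤ C := by
    have : (0 : ℝ) ≤ m := by positivity
    nlinarith
  have hI : 1 / (C * N) ≤ ∫ p in (0 : ℝ)..(PofL N L), binomMass N p l := by
    rcases Nat.eq_zero_or_pos l with rfl | hl
    · refine le_trans ?_ ((zero_bound N hN).trans (ext_bound N 0 _ _ (by positivity) hPN hP1))
      gcongr
    · refine (main_bound m N l hN hl (hlL'.trans hL)).trans
        (ext_bound N l _ _ (by positivity) ?_ hP1)
      unfold PofL
      rw [if_neg (by omega)]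
      gcongr
  have hPL : PofL N L * N ≤ L + 1 := by
    unfold PofL; split_ifs with h
    · rw [div_mul_cancel₀ _ (by positivity)]; simp [h]
    · rw [div_mul_cancel₀ _ (by positivity)]; linarith
  calc 1 / ((L : ℝ) + 1) ≤ 1 / (PofL N L * N) := by gcongr
    _ = C / PofL N L * (1 / (C * N)) := by field_simp
    _ ≤ _ := by gcongr
end
end
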